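/- For every odd k ≥ 3 and n ≥ 8k, the online Ramsey number satisfies r̃(C_k, C_n) ≤ 3n + log₂ n + 50k. -/

import Mathlib

open SimpleGraph

/-- A board state: the set of red edges and the set of blue edges. -/
abbrev Board : Type := Set (Sym2 ℕ) × Set (Sym2 ℕ)

/-- The set of already colored edges of a board. -/
def Board.colored (B : Board) : Set (Sym2 ℕ) := B.1 ∪ B.2

/-- A Builder strategy selects an edge given the current board. -/
abbrev BuilderStrat : Type := Board → Sym2 ℕ

/-- A Painter strategy colors the selected edge (true = red, false = blue). -/
abbrev PainterStrat : Type := Board → Sym2 ℕ → Bool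

/-- The board after `t` rounds of play from `init`. -/
def playGame (b : BuilderStrat) (p : PainterStrat) (init : Board) : ℕ → Board
  | 0 => init
  | t + 1 =>
      let B := playGame b p init t
      let e := b B
      if p B e then (insert e B.1, B.2) else (B.1, insert e B.2)

/-- Builder's strategy is valid from `init`: along any play it always selects a
previously unselected non-loop edge. -/
def ValidFrom (b : BuilderStrat) (init : Board) : Prop :=
  ∀ p : PainterStrat, ∀ t : ℕ,
    ¬ (b (playGame b p init t)).IsDiag ∧
      b (playGame b p init t) ∉ (playGame b p init t).colored

/-- Builder can force the winning condition `W` within `t` rounds, starting from `init`. -/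
def BuilderWinsIn (init : Board) (W : Board → Prop) (t : ℕ) : Prop :=
  ∃ b : BuilderStrat, ValidFrom b init ∧
    ∀ p : PainterStrat, ∃ s, s ≤ t ∧ W (playGame b p init s)

/-- `G` contains a copy of `H`. -/
def HasCopy {α β : Type} (H : SimpleGraph α) (G : SimpleGraph β) : Prop :=
  ∃ f : α ↪ β, ∀ x y, H.Adj x y → G.Adj (f x) (f y)

/-- The red part of the board contains a copy of `H`. -/
def RedCopy {α : Type} (H : SimpleGraph α) (B : Board) : Prop :=
  HasCopy H (fromEdgeSet B.1)

/-- The blue part of the board contains a copy of `H`. -/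
def BlueCopy {α : Type} (H : SimpleGraph α) (B : Board) : Prop :=
  HasCopy H (fromEdgeSet B.2)

/-- The empty board. -/
def emptyBoard : Board := (∅, ∅)

/-- Winning condition: a red `C_k` or a blue `C_n`. -/
def WinCC (k n : ℕ) (B : Board) : Prop :=
  RedCopy (cycleGraph k) B ∨ BlueCopy (cycleGraph n) B

/-- Winning condition: a red `C_k` or a blue path on `n` vertices. -/
def WinCP (k n : ℕ) (B : Board) : Prop :=
  RedCopy (cycleGraph k) B ∨ BlueCopy (pathGraph n) B

/-- A board consisting of a single blue cycle on the vertices `0, …, m-1`. -/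
def blueCycleBoard (m : ℕ) : Board :=
  (∅, {e | ∃ i : ℕ, i < m ∧ e = s(i, (i + 1) % m)})

/-- A board consisting of a single blue path on the vertices `0, …, m-1`. -/
def bluePathBoard (m : ℕ) : Board :=
  (∅, {e | ∃ i : ℕ, i + 1 < m ∧ e = s(i, i + 1)})

/-!
If a vertex is red to one end of a red path on `k - 1` vertices, its edge to the other end must be
coloured blue. Hence two vertices whose edges to suitable vertices of a long red path, the *hub*,
have the same colour get a common blue neighbour within a bounded number of rounds. Among three
blue paths, two have heads of the same colour towards the hub, so Builder merges all but two of
them. As `k` is odd, the last two can stay apart for a parity reason; this is overcome by a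
*connector*, a blue path whose two ends are joined by a red edge. A closed blue walk that is a
little too long is turned into `C_n` by a binary search for a colour change, at the price of
`log₂ n` rounds.

The term `3n` is the cost of producing enough blue. Builder grows a red path, which becomes the hub,
together with a blue path, storing up to two connectors on the way. With two connectors, two rounds
per vertex suffice: the blue paths form a *stack*, their heads lying on a red path. Otherwise
Builder maintains a *ladder*, two blue paths `F` and `S` with ends joined by red edges, where a
fresh vertex costs one round if it is appended to `F`, two if it is appended to `S`, and otherwise
produces a connector.
-/

/-! ### The game -/

/-- The pair `u v` is a red edge. -/
def Red (B : Board) (u v : ℕ) : Prop := s(u, v) ∈ B.1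

/-- The pair `u v` is a blue edge. -/
def Blue (B : Board) (u v : ℕ) : Prop := s(u, v) ∈ B.2

/-- The board after Painter colours `e` red. -/
def Board.addRed (B : Board) (e : Sym2 ℕ) : Board := (insert e B.1, B.2)

/-- The board after Painter colours `e` blue. -/
def Board.addBlue (B : Board) (e : Sym2 ℕ) : Board := (B.1, insert e B.2)

section Boards

variable {B B' : Board} {u v : ℕ}

theorem Red.symm (h : Red B u v) : Red B v u := by
  unfold Red at *; rwa [Sym2.eq_swap]

theorem Blue.symm (h : Blue B u v) : Blue B v u := by
  unfold Blue at *; rwa [Sym2.eq_swap]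

theorem Red.mono (h : Red B u v) (hB : B ≤ B') : Red B' u v := hB.1 h

theorem Blue.mono (h : Blue B u v) (hB : B ≤ B') : Blue B' u v := hB.2 h

theorem Board.le_addRed (B : Board) (e : Sym2 ℕ) : B ≤ B.addRed e :=
  ⟨Set.subset_insert _ _, le_rfl⟩

theorem Board.le_addBlue (B : Board) (e : Sym2 ℕ) : B ≤ B.addBlue e :=
  ⟨le_rfl, Set.subset_insert _ _⟩

theorem Board.addRed_of_mem {e : Sym2 ℕ} (h : e ∈ B.1) : B.addRed e = B := by
  simp [Board.addRed, Set.insert_eq_of_mem h]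

theorem Board.addBlue_of_mem {e : Sym2 ℕ} (h : e ∈ B.2) : B.addBlue e = B := by
  simp [Board.addBlue, Set.insert_eq_of_mem h]

theorem Board.colored_addRed (B : Board) (e : Sym2 ℕ) :
    (B.addRed e).colored = insert e B.colored := by
  simp [Board.addRed, Board.colored, Set.insert_union]

theorem Board.colored_addBlue (B : Board) (e : Sym2 ℕ) :
    (B.addBlue e).colored = insert e B.colored := by
  simp [Board.addBlue, Board.colored, Set.union_insert]

theorem Board.exists_not_mem_colored (h : B.colored.Finite) :
    ∃ e : Sym2 ℕ, ¬ e.IsDiag ∧ e ∉ B.colored := by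
  by_contra! hc
  have hinf : (Set.range fun i : ℕ => s(0, i + 1)).Infinite :=
    Set.infinite_range_of_injective fun i j hij => by simpa using hij
  refine hinf (h.subset ?_)
  rintro _ ⟨i, rfl⟩
  exact hc _ (by simp)

theorem playGame_succ (b : BuilderStrat) (p : PainterStrat) (init : Board) (t : ℕ) :
    playGame b p init (t + 1) =
      if p (playGame b p init t) (b (playGame b p init t))
      then (playGame b p init t).addRed (b (playGame b p init t))
      else (playGame b p init t).addBlue (b (playGame b p init t)) := rfl

theorem playGame_colored_finite (b : BuilderStrat) (p : PainterStrat) {init : Board}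
    (h : init.colored.Finite) (t : ℕ) : (playGame b p init t).colored.Finite := by
  induction t with
  | zero => exact h
  | succ t ih =>
    rw [playGame_succ]
    split_ifs
    · rw [Board.colored_addRed]; exact ih.insert _
    · rw [Board.colored_addBlue]; exact ih.insert _

end Boards

/-- From `B`, Builder can force `W` within `t` rounds. Unlike in `BuilderWinsIn`, she may pass, and
she may select an edge that is already coloured; `builderWinsIn_of_forces` shows that this does not
help her. -/
def Forces (W : Board → Prop) : ℕ → Board → Prop
  | 0, B => W B
  | t + 1, B => Forces W t B ∨
      ∃ e : Sym2 ℕ, ¬ e.IsDiag ∧ Forces W t (B.addRed e) ∧ Forces W t (B.addBlue e)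

/-- A move for Builder at `B` that is legal and, whatever the colour, leaves her one round closer
to forcing `W`. -/
def GoodMove (W : Board → Prop) (B : Board) (e : Sym2 ℕ) : Prop :=
  ¬ e.IsDiag ∧ e ∉ B.colored ∧
    ∀ t, Forces W (t + 1) B → Forces W t (B.addRed e) ∧ Forces W t (B.addBlue e)

open Classical in
/-- The strategy that plays good moves as long as there are any. -/
noncomputable def goodStrat (W : Board → Prop) : BuilderStrat := fun B =>
  if h : ∃ e, GoodMove W B e then h.choose
  else if h : ∃ e : Sym2 ℕ, ¬ e.IsDiag ∧ e ∉ B.colored then h.choose else s(0, 0)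

section Forces

variable {W : Board → Prop} {t t' : ℕ} {B : Board}

theorem Forces.succ (h : Forces W t B) : Forces W (t + 1) B := Or.inl h

theorem Forces.mono (h : Forces W t B) (ht : t ≤ t') : Forces W t' B := by
  induction ht with
  | refl => exact h
  | step _ ih => exact ih.succ

theorem Forces.of_win (h : W B) : Forces W t B := Forces.mono (t := 0) h (Nat.zero_le _)

theorem Forces.ask (u v : ℕ) (huv : u ≠ v)
    (hred : ∀ B', B ≤ B' → Red B' u v → Forces W t B')
    (hblue : ∀ B', B ≤ B' → Blue B' u v → Forces W t B') : Forces W (t + 1) B :=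
  Or.inr ⟨s(u, v), by simpa using huv, hred _ (B.le_addRed _) (Set.mem_insert _ _),
    hblue _ (B.le_addBlue _) (Set.mem_insert _ _)⟩

theorem Forces.ask_blue (u v : ℕ) (huv : u ≠ v) (hred : ∀ B', B ≤ B' → Red B' u v → W B')
    (hblue : ∀ B', B ≤ B' → Blue B' u v → Forces W t B') : Forces W (t + 1) B :=
  Forces.ask u v huv (fun B' hB hr => .of_win (hred B' hB hr)) hblue

theorem Forces.ask_red (u v : ℕ) (huv : u ≠ v) (hblue : ∀ B', B ≤ B' → Blue B' u v → W B')
    (hred : ∀ B', B ≤ B' → Red B' u v → Forces W t B') : Forces W (t + 1) B :=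
  Forces.ask u v huv hred fun B' hB hb => .of_win (hblue B' hB hb)

theorem Forces.ask_many (m : ℕ) (u v : ℕ → ℕ) (huv : ∀ i < m, u i ≠ v i)
    (hblue : ∀ i < m, ∀ B', B ≤ B' → Blue B' (u i) (v i) → Forces W t B')
    (hred : ∀ B', B ≤ B' → (∀ i < m, Red B' (u i) (v i)) → Forces W t B') :
    Forces W (m + t) B := by
  induction m generalizing t with
  | zero => simpa using hred B le_rfl (by simp)
  | succ m ih =>
    rw [Nat.add_right_comm, Nat.add_assoc]
    refine ih (t := t + 1) (fun i hi => huv i (by omega))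
      (fun i hi B' hB hb => (hblue i (by omega) B' hB hb).succ) fun B₁ hB₁ hr₁ => ?_
    refine Forces.ask (u m) (v m) (huv m (by omega)) (fun B₂ hB₂ hr₂ => ?_) fun B₂ hB₂ hb₂ => ?_
    · refine hred B₂ (hB₁.trans hB₂) fun i hi => ?_
      rcases Nat.lt_succ_iff_lt_or_eq.1 hi with hi | rfl
      · exact (hr₁ i hi).mono hB₂
      · exact hr₂
    · exact hblue m (by omega) B₂ (hB₁.trans hB₂) hb₂

theorem exists_goodMove (h : Forces W t B) (hW : ¬ W B) : ∃ e, GoodMove W B e := by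
  classical
  have hex : ∃ t, Forces W t B := ⟨t, h⟩
  obtain ⟨m, hm, hmin⟩ : ∃ m, Forces W m B ∧ ∀ t, Forces W t B → m ≤ t :=
    ⟨Nat.find hex, Nat.find_spec hex, fun t ht => Nat.find_min' hex ht⟩
  obtain _ | m := m
  · exact absurd hm hW
  rcases hm with hm | ⟨e, he, hred, hblue⟩
  · have := hmin m hm; omega
  refine ⟨e, he, ?_, fun t ht => ?_⟩
  · rintro (hc | hc)
    · rw [Board.addRed_of_mem hc] at hred
      have := hmin m hred; omega
    · rw [Board.addBlue_of_mem hc] at hblue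
      have := hmin m hblue; omega
  · have := hmin _ ht
    exact ⟨hred.mono (by omega), hblue.mono (by omega)⟩

theorem goodMove_goodStrat (h : ∃ e, GoodMove W B e) : GoodMove W B (goodStrat W B) := by
  simp only [goodStrat, h, dif_pos]
  exact h.choose_spec

theorem goodStrat_legal (hB : B.colored.Finite) :
    ¬ (goodStrat W B).IsDiag ∧ goodStrat W B ∉ B.colored := by
  by_cases hg : ∃ e, GoodMove W B e
  · exact ⟨(goodMove_goodStrat hg).1, (goodMove_goodStrat hg).2.1⟩
  · have hex := Board.exists_not_mem_colored hB
    simp only [goodStrat, hg, hex, dif_pos, dif_neg, not_false_eq_true]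
    exact hex.choose_spec

theorem Forces.playGame_goodStrat (h : Forces W t B) (p : PainterStrat)
    (hno : ∀ s ≤ t, ¬ W (playGame (goodStrat W) p B s)) {j : ℕ} (hj : j ≤ t) :
    Forces W (t - j) (playGame (goodStrat W) p B j) := by
  induction j with
  | zero => simpa [playGame] using h
  | succ j ih =>
    have hforce := ih (by omega)
    have hgood := goodMove_goodStrat (exists_goodMove hforce (hno j (by omega)))
    rw [show t - j = t - (j + 1) + 1 by omega] at hforce
    rw [playGame_succ]
    split_ifs
    · exact (hgood.2.2 _ hforce).1
    · exact (hgood.2.2 _ hforce).2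

theorem builderWinsIn_of_forces (hB : B.colored.Finite) (h : Forces W t B) :
    BuilderWinsIn B W t := by
  refine ⟨goodStrat W, fun p s => goodStrat_legal (playGame_colored_finite _ p hB s),
    fun p => ?_⟩
  by_contra! hno
  have hend := h.playGame_goodStrat p hno le_rfl
  rw [Nat.sub_self] at hend
  exact hno t le_rfl hend

end Forces

/-- The first `m` terms of the sequence `v` form a path in the relation `r`. Sequences rather than
lists are used wherever vertices are addressed by their position. -/
structure IsPathSeq (r : ℕ → ℕ → Prop) (m : ℕ) (v : ℕ → ℕ) : Prop where
  inj : ∀ i < m, ∀ j < m, v i = v j → i = j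
  adj : ∀ i, i + 1 < m → r (v i) (v (i + 1))

/-- The set of the first `m` terms of the sequence `v`. -/
def verts (m : ℕ) (v : ℕ → ℕ) : Set ℕ := {x | ∃ i < m, x = v i}

theorem mem_verts {m i : ℕ} {v : ℕ → ℕ} (h : i < m) : v i ∈ verts m v := ⟨i, h, rfl⟩

theorem verts_finite (m : ℕ) (v : ℕ → ℕ) : (verts m v).Finite :=
  ((Set.finite_lt_nat m).image v).subset fun _ ⟨i, hi, hx⟩ => ⟨i, hi, hx.symm⟩

theorem ne_of_notMem_verts {m i x : ℕ} {v : ℕ → ℕ} (hx : x ∉ verts m v) (hi : i < m) : x ≠ v i :=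
  fun h => hx ⟨i, hi, h⟩

theorem verts_shift_subset {m m' o : ℕ} (v : ℕ → ℕ) (ho : o + m' ≤ m) :
    verts m' (fun i => v (o + i)) ⊆ verts m v := by
  rintro x ⟨i, hi, rfl⟩
  exact mem_verts (by omega)

theorem verts_mono {m m' : ℕ} (v : ℕ → ℕ) (hm : m' ≤ m) : verts m' v ⊆ verts m v :=
  fun _ ⟨i, hi, hx⟩ => ⟨i, by omega, hx⟩

namespace IsPathSeq

variable {r : ℕ → ℕ → Prop} {B B' : Board} {m m' : ℕ} {v : ℕ → ℕ}

theorem blue_mono (h : IsPathSeq (Blue B) m v) (hB : B ≤ B') : IsPathSeq (Blue B') m v :=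
  ⟨h.inj, fun i hi => (h.adj i hi).mono hB⟩

theorem red_mono (h : IsPathSeq (Red B) m v) (hB : B ≤ B') : IsPathSeq (Red B') m v :=
  ⟨h.inj, fun i hi => (h.adj i hi).mono hB⟩

theorem blue (h : IsPathSeq (Blue B) m v) (a b : ℕ) (ha : a < m) (hb : b < m)
    (hab : b = a + 1 ∨ a = b + 1) : Blue B (v a) (v b) := by
  rcases hab with rfl | rfl
  · exact h.adj _ hb
  · exact (h.adj _ ha).symm

theorem red (h : IsPathSeq (Red B) m v) (a b : ℕ) (ha : a < m) (hb : b < m)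
    (hab : b = a + 1 ∨ a = b + 1) : Red B (v a) (v b) := by
  rcases hab with rfl | rfl
  · exact h.adj _ hb
  · exact (h.adj _ ha).symm

theorem ne (h : IsPathSeq r m v) (a b : ℕ) (ha : a < m) (hb : b < m) (hab : a ≠ b) :
    v a ≠ v b := fun h' => hab (h.inj a ha b hb h')

theorem shift (h : IsPathSeq r m v) (o : ℕ) (ho : o + m' ≤ m) :
    IsPathSeq r m' fun i => v (o + i) where
  inj i hi j hj hij := by
    have := h.inj _ (by omega) _ (by omega) hij; omega
  adj i hi := h.adj (o + i) (by omega)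

theorem take (h : IsPathSeq r m v) (ho : m' ≤ m) : IsPathSeq r m' v where
  inj i hi j hj hij := h.inj _ (by omega) _ (by omega) hij
  adj i hi := h.adj i (by omega)

theorem reindex (h : IsPathSeq r m v) {g : ℕ → ℕ} (hg : ∀ i < m', g i < m)
    (ginj : ∀ i < m', ∀ j < m', g i = g j → i = j)
    (adj : ∀ i, i + 1 < m' → r (v (g i)) (v (g (i + 1)))) :
    IsPathSeq r m' fun i => v (g i) :=
  ⟨fun i hi j hj hij => ginj i hi j hj (h.inj _ (hg i hi) _ (hg j hj) hij), adj⟩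

theorem rev (h : IsPathSeq (Red B) m v) : IsPathSeq (Red B) m fun i => v (m - 1 - i) where
  inj i hi j hj hij := by
    have := h.inj _ (by omega) _ (by omega) hij; omega
  adj i hi := h.red _ _ (by omega) (by omega) (by omega)

theorem exists_segment (h : IsPathSeq (Red B) m v) {i j d : ℕ} (hi : i < m) (hj : j < m)
    (hij : j = i + d ∨ i = j + d) :
    ∃ p, IsPathSeq (Red B) (d + 1) p ∧ p 0 = v i ∧ p d = v j ∧ verts (d + 1) p ⊆ verts m v := by
  rcases hij with rfl | rfl
  · exact ⟨_, h.shift i (by omega), rfl, rfl, verts_shift_subset v (by omega)⟩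
  · refine ⟨_, (h.shift (m' := d + 1) j (by omega)).rev, ?_, ?_, ?_⟩
    · rfl
    · simp
    · rintro x ⟨i, hi', rfl⟩
      exact mem_verts (by omega)

end IsPathSeq

section Cycles

variable {k n : ℕ} {B : Board}

theorem hasCopy_cycleGraph {m : ℕ} (hm : 3 ≤ m) {S : Set (Sym2 ℕ)} {f : ℕ → ℕ}
    (hf : IsPathSeq (fun u v => s(u, v) ∈ S) m f) (close : s(f (m - 1), f 0) ∈ S) :
    HasCopy (cycleGraph m) (fromEdgeSet S) := by
  refine ⟨⟨fun i => f i, fun i j h => Fin.ext (hf.inj _ i.2 _ j.2 h)⟩, ?_⟩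
  have mem_of_sub_eq_one : ∀ x y : Fin m, (x - y).val = 1 → s(f x, f y) ∈ S := by
    intro x y h
    have hx := x.2
    have hy := y.2
    rw [Fin.sub_def] at h
    simp only at h
    have : m - y.val + x.val = 1 ∨ m - y.val + x.val = m + 1 := by
      by_cases hlt : m - y.val + x.val < m
      · rw [Nat.mod_eq_of_lt hlt] at h; exact Or.inl h
      · rw [Nat.mod_eq_sub_mod (by omega), Nat.mod_eq_of_lt (by omega)] at h
        omega
    rcases this with h | h
    · rw [show x.val = 0 by omega, show y.val = m - 1 by omega, Sym2.eq_swap]; exact close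
    · rw [show x.val = y.val + 1 by omega, Sym2.eq_swap]; exact hf.adj _ (by omega)
  intro x y hxy
  rw [fromEdgeSet_adj]
  refine ⟨?_, fun h => hxy.ne (Fin.ext (hf.inj _ x.2 _ y.2 h))⟩
  rcases cycleGraph_adj'.1 hxy with h | h
  · exact mem_of_sub_eq_one x y h
  · exact Sym2.eq_swap ▸ mem_of_sub_eq_one y x h

theorem winCC_of_red (hk : 3 ≤ k) {f : ℕ → ℕ} (hf : IsPathSeq (Red B) k f)
    (close : Red B (f (k - 1)) (f 0)) : WinCC k n B := Or.inl (hasCopy_cycleGraph hk hf close)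

theorem winCC_of_blue (hn : 3 ≤ n) {f : ℕ → ℕ} (hf : IsPathSeq (Blue B) n f)
    (close : Blue B (f (n - 1)) (f 0)) : WinCC k n B := Or.inr (hasCopy_cycleGraph hn hf close)

theorem winCC_of_blue_chord (hn : 3 ≤ n) {m : ℕ} {v : ℕ → ℕ} (hv : IsPathSeq (Blue B) m v)
    (i : ℕ) (hi : i + n - 1 < m) (h : Blue B (v (i + n - 1)) (v i)) : WinCC k n B := by
  refine winCC_of_blue hn (hv.shift (m' := n) i (by omega)) ?_
  rwa [show i + (n - 1) = i + n - 1 by omega]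

theorem Forces.close_red (hk : 3 ≤ k) {t : ℕ} {f : ℕ → ℕ} (hf : IsPathSeq (Red B) k f)
    (h : ∀ B', B ≤ B' → Blue B' (f (k - 1)) (f 0) → Forces (WinCC k n) t B') :
    Forces (WinCC k n) (t + 1) B :=
  Forces.ask_blue _ _ (hf.ne _ _ (by omega) (by omega) (by omega))
    (fun _ hB hr => winCC_of_red hk (hf.red_mono hB) hr) h

end Cycles

/-! ### Shortening a blue cycle -/

section Shorten

variable {k n : ℕ} {B B' : Board} {v : ℕ → ℕ}

theorem winCC_of_blue_cycle_skip (hn : 3 ≤ n) (hv : IsPathSeq (Blue B) (n + 1) v)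
    (hc : Blue B (v n) (v 0)) (i : ℕ) (hi : i + 2 ≤ n) (h : Blue B (v i) (v (i + 2))) :
    WinCC k n B := by
  refine winCC_of_blue hn (hv.reindex (g := fun j => if j ≤ i then j else j + 1)
    ?_ ?_ fun j hj => ?_) ?_
  · intro j hj; split_ifs <;> omega
  · intro j _ j' _ h; split_ifs at h <;> omega
  · rcases lt_trichotomy j i with hji | rfl | hji
    · rw [if_pos (by omega), if_pos (by omega)]; exact hv.adj _ (by omega)
    · rw [if_pos (by omega), if_neg (by omega)]; exact h
    · rw [if_neg (by omega), if_neg (by omega)]; exact hv.adj _ (by omega)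
  · rw [if_neg (by omega), if_pos (by omega), show n - 1 + 1 = n by omega]; exact hc

/- The cycle `v₀ … v_a v_b v_{b-1} … v_c v_d … v_n`, which misses exactly one vertex. -/
theorem winCC_of_blue_cycle_reverse (hn : 3 ≤ n) (hv : IsPathSeq (Blue B) (n + 1) v)
    (hc : Blue B (v n) (v 0)) {a b c d : ℕ} (hac : a < c) (hcb : c ≤ b) (hbd : b < d) (hdn : d ≤ n)
    (hsum : c + d = a + b + 3) (hab : Blue B (v a) (v b)) (hcd : Blue B (v c) (v d)) :
    WinCC k n B := by
  refine winCC_of_blue hn (hv.reindex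
    (g := fun i => if i ≤ a then i else if i + 2 ≤ d then a + b + 1 - i else i + 1)
    ?_ ?_ fun i hi => ?_) ?_
  · intro i hi; split_ifs <;> omega
  · intro i _ j _ h; split_ifs at h <;> omega
  · rcases lt_trichotomy i a with hia | rfl | hia
    · rw [if_pos (by omega), if_pos (by omega)]; exact hv.adj _ (by omega)
    · rw [if_pos le_rfl, if_neg (by omega), if_pos (by omega),
        show i + b + 1 - (i + 1) = b by omega]
      exact hab
    rw [if_neg (show ¬ i ≤ a by omega), if_neg (show ¬ i + 1 ≤ a by omega)]
    rcases lt_trichotomy (i + 2) d with hid | hid | hid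
    · rw [if_pos (by omega), if_pos (by omega)]
      exact hv.blue _ _ (by omega) (by omega) (by omega)
    · rw [if_pos (by omega), if_neg (by omega), show a + b + 1 - i = c by omega,
        show i + 1 + 1 = d by omega]
      exact hcd
    · rw [if_neg (by omega), if_neg (by omega)]; exact hv.adj _ (by omega)
  · rw [if_neg (by omega), if_neg (by omega), if_pos (by omega), show n - 1 + 1 = n by omega]
    exact hc

/-- A blue cycle `v₀ … v_n` in which the chords `v_{2i} v_{2i+2}` with `i < k` and
`v_{k+2i} v_{k+2i+2}` with `i < k - 1` are red. For odd `k` these chords form two disjoint red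
paths, on the even indices in `[0, 2k]` and on the odd indices in `[k, 3k-2]`. -/
structure RedChordedCycle (k n : ℕ) (B : Board) (v : ℕ → ℕ) : Prop where
  path : IsPathSeq (Blue B) (n + 1) v
  close : Blue B (v n) (v 0)
  even : ∀ i < k, Red B (v (2 * i)) (v (2 * i + 2))
  odd : ∀ i < k - 1, Red B (v (k + 2 * i)) (v (k + 2 * i + 2))

theorem RedChordedCycle.mono (h : RedChordedCycle k n B v) (hB : B ≤ B') :
    RedChordedCycle k n B' v where
  path := h.path.blue_mono hB
  close := h.close.mono hB
  even i hi := (h.even i hi).mono hB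
  odd i hi := (h.odd i hi).mono hB

/- The red cycle `v₀ v₂ … v_{k-1} v_{3k-4} v_{3k-6} … v_{2k-1}`. -/
theorem RedChordedCycle.winCC (hk : 3 ≤ k) (hko : Odd k) (hn : 3 * k ≤ n)
    (h : RedChordedCycle k n B v) (hleft : Red B (v 0) (v (2 * k - 1)))
    (hright : Red B (v (k - 1)) (v (3 * k - 4))) : WinCC k n B := by
  obtain ⟨q, hq⟩ := hko
  refine winCC_of_red hk (f := fun i => if i ≤ q then v (2 * i) else
    v (3 * k - 4 - 2 * (i - q - 1))) ⟨fun i hi j hj hij => ?_, fun i hi => ?_⟩ ?_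
  · split_ifs at hij <;> have := h.path.inj _ (by omega) _ (by omega) hij <;> omega
  · rcases lt_trichotomy i q with hiq | rfl | hiq
    · rw [if_pos (by omega), if_pos (by omega)]; exact h.even i (by omega)
    · rw [if_pos (by omega), if_neg (by omega), show 3 * k - 4 - 2 * (i + 1 - i - 1) = 3 * k - 4
        by omega, show 2 * i = k - 1 by omega]
      exact hright
    · rw [if_neg (by omega), if_neg (by omega)]
      have := h.odd ((3 * k - 4 - 2 * (i + 1 - q - 1) - k) / 2) (by omega)
      rw [show k + 2 * ((3 * k - 4 - 2 * (i + 1 - q - 1) - k) / 2) =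
        3 * k - 4 - 2 * (i + 1 - q - 1) by omega,
        show 3 * k - 4 - 2 * (i + 1 - q - 1) + 2 = 3 * k - 4 - 2 * (i - q - 1) by omega] at this
      exact this.symm
  · rw [if_neg (by omega), if_pos (by omega),
      show 3 * k - 4 - 2 * (k - 1 - q - 1) = 2 * k - 1 by omega]
    exact hleft.symm

/- Each red path of chords on `k` vertices is closed by a blue edge, and that edge together with
one of the two missing edges of the red cycle would give a blue `C_n`. -/
theorem RedChordedCycle.forces (hk : 3 ≤ k) (hko : Odd k) (hn : 3 * k ≤ n)
    (h : RedChordedCycle k n B v) : Forces (WinCC k n) 4 B := by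
  have h3 : 3 ≤ n := by omega
  refine Forces.close_red hk (f := fun i => v (2 * i + 2))
    ⟨fun i hi j hj hij => ?_, fun i hi => h.even (i + 1) (by omega)⟩ fun B₁ hB₁ heven => ?_
  · have := h.path.inj _ (by omega) _ (by omega) hij; omega
  replace h := h.mono hB₁
  refine Forces.ask_red (v 0) (v (2 * k - 1)) (h.path.ne _ _ (by omega) (by omega) (by omega))
    (fun B' hB' hb => ?_) fun B₂ hB₂ hleft => ?_
  · exact winCC_of_blue_cycle_reverse h3 (h.path.blue_mono hB') (h.close.mono hB') (by omega)
      (by omega) (by omega) (by omega) (by omega) hb (heven.symm.mono hB')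
  replace h := h.mono hB₂
  refine Forces.close_red hk (f := fun i => v (k + 2 * i))
    ⟨fun i hi j hj hij => ?_, fun i hi => h.odd i (by omega)⟩ fun B₃ hB₃ hodd => ?_
  · have := h.path.inj _ (by omega) _ (by omega) hij; omega
  replace h := h.mono hB₃
  refine Forces.ask_red (t := 0) (v (k - 1)) (v (3 * k - 4))
    (h.path.ne _ _ (by omega) (by omega) (by omega)) (fun B' hB' hb => ?_)
    fun B₄ hB₄ hright => ?_
  · exact winCC_of_blue_cycle_reverse h3 (h.path.blue_mono hB') (h.close.mono hB') (by omega)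
      (by omega) (by omega) (by omega) (by omega) hb (hodd.symm.mono hB')
  · exact (h.mono hB₄).winCC hk hko hn ((hleft.mono hB₃).mono hB₄) hright

theorem forces_of_blue_cycle_succ (hk : 3 ≤ k) (hko : Odd k) (hn : 3 * k ≤ n)
    (hv : IsPathSeq (Blue B) (n + 1) v) (hc : Blue B (v n) (v 0)) :
    Forces (WinCC k n) (2 * k + 3) B := by
  have h3 : 3 ≤ n := by omega
  refine Forces.mono (t := k + (k - 1 + 4)) ?_ (by omega)
  refine Forces.ask_many k (fun i => v (2 * i)) (fun i => v (2 * i + 2))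
    (fun i hi => hv.ne _ _ (by omega) (by omega) (by omega))
    (fun i hi B' hB hb => .of_win (winCC_of_blue_cycle_skip h3 (hv.blue_mono hB) (hc.mono hB)
      (2 * i) (by omega) hb)) fun B₁ hB₁ heven => ?_
  replace hv := hv.blue_mono hB₁
  replace hc := hc.mono hB₁
  exact Forces.ask_many (k - 1) (fun i => v (k + 2 * i)) (fun i => v (k + 2 * i + 2))
    (fun i hi => hv.ne _ _ (by omega) (by omega) (by omega))
    (fun i hi B' hB hb => .of_win (winCC_of_blue_cycle_skip h3 (hv.blue_mono hB) (hc.mono hB)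
      (k + 2 * i) (by omega) hb))
    fun B₂ hB₂ hodd => RedChordedCycle.forces hk hko hn
      ⟨hv.blue_mono hB₂, hc.mono hB₂, fun i hi => (heven i hi).mono hB₂, hodd⟩

/-- The sequence `v_{n-1}, v₀, v_n, v₁, v_{n+1}, …`. Its consecutive terms are at distance `n - 1`
or `n` along `v`, so if `v` is a blue path then a blue edge between them closes a blue `C_n` or
`C_{n+1}`. -/
def zigzag (n : ℕ) (v : ℕ → ℕ) (i : ℕ) : ℕ :=
  if i % 2 = 0 then v (n - 1 + i / 2) else v (i / 2)

theorem zigzag_injOn {r : ℕ → ℕ → Prop} {j : ℕ} (hj : j + 1 < n) (hv : IsPathSeq r (n + j) v) :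
    ∀ a < 2 * j + 1, ∀ b < 2 * j + 1, zigzag n v a = zigzag n v b → a = b := by
  intro a ha b hb h
  unfold zigzag at h
  split_ifs at h <;> have := hv.inj _ (by omega) _ (by omega) h <;> omega

theorem forces_of_blue_zigzag (hk : 3 ≤ k) (hko : Odd k) (hn : 3 * k ≤ n) {j : ℕ}
    (hv : IsPathSeq (Blue B) (n + j) v) {i : ℕ} (hi : i < 2 * j)
    (h : Blue B (zigzag n v i) (zigzag n v (i + 1))) : Forces (WinCC k n) (2 * k + 3) B := by
  unfold zigzag at h
  rcases Nat.even_or_odd' i with ⟨a, rfl | rfl⟩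
  · rw [if_pos (by omega), if_neg (by omega), show (2 * a + 1) / 2 = a by omega,
      show n - 1 + 2 * a / 2 = a + n - 1 by omega] at h
    exact .of_win (winCC_of_blue_chord (by omega) hv a (by omega) h)
  · rw [if_neg (by omega), if_pos (by omega), show (2 * a + 1) / 2 = a by omega,
      show n - 1 + (2 * a + 1 + 1) / 2 = a + n by omega] at h
    exact forces_of_blue_cycle_succ hk hko hn (hv.shift a (by omega)) h.symm

theorem forces_of_red_zigzag (hk : 3 ≤ k) (hko : Odd k) (hn : 3 * k ≤ n) {t j : ℕ}
    (hj : j + 1 < n) (ht : 2 * k + 3 ≤ t) (hv : IsPathSeq (Blue B) (n + j) v)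
    (h : ∀ B', B ≤ B' → IsPathSeq (Red B') (2 * j + 1) (zigzag n v) → Forces (WinCC k n) t B') :
    Forces (WinCC k n) (2 * j + t) B := by
  have hinj := zigzag_injOn hj hv
  refine Forces.ask_many (2 * j) (zigzag n v) (fun i => zigzag n v (i + 1))
    (fun i hi hij => ?_) (fun i hi B' hB hb => ?_)
    fun B' hB hr => h B' hB ⟨hinj, fun i hi => hr i (by omega)⟩
  · have := hinj i (by omega) (i + 1) (by omega) hij; omega
  · exact (forces_of_blue_zigzag hk hko hn (hv.blue_mono hB) hi hb).mono ht

end Shorten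

/-! ### Closing a blue path by binary search -/

section Apex

variable {k n t : ℕ} {B : Board} {p v : ℕ → ℕ}

/-- The sequence `z, v 0, v 1, …`. -/
def consSeq (z : ℕ) (v : ℕ → ℕ) : ℕ → ℕ
  | 0 => z
  | j + 1 => v j

theorem consSeq_last {m : ℕ} (hm : 0 < m) (z : ℕ) (v : ℕ → ℕ) : consSeq z v m = v (m - 1) := by
  obtain ⟨m, rfl⟩ := Nat.exists_eq_add_of_lt hm
  simp [consSeq]

theorem notMem_verts_consSeq {m x z : ℕ} (hxz : x ≠ z) (hx : x ∉ verts m v) :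
    x ∉ verts (m + 1) (consSeq z v)
  | ⟨0, _, h⟩ => hxz h
  | ⟨i + 1, hi, h⟩ => hx ⟨i, by omega, h⟩

theorem IsPathSeq.cons {r : ℕ → ℕ → Prop} {m : ℕ} (h : IsPathSeq r m v) {z : ℕ}
    (hz : z ∉ verts m v) (hr : 0 < m → r z (v 0)) : IsPathSeq r (m + 1) (consSeq z v) where
  inj
    | 0, _, 0, _, _ => rfl
    | 0, _, j + 1, hj, hij => absurd ⟨j, by omega, hij⟩ hz
    | i + 1, hi, 0, _, hij => absurd ⟨i, by omega, hij.symm⟩ hz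
    | i + 1, hi, j + 1, hj, hij => by rw [h.inj i (by omega) j (by omega) hij]
  adj
    | 0, hi => hr (by omega)
    | i + 1, hi => h.adj i (by omega)

theorem Forces.blue_to_far_end (hk : 3 ≤ k) (hp : IsPathSeq (Red B) (k - 1) p) {x : ℕ}
    (hx : x ∉ verts (k - 1) p) (hr : Red B x (p 0))
    (h : ∀ B', B ≤ B' → Blue B' (p (k - 2)) x → Forces (WinCC k n) t B') :
    Forces (WinCC k n) (t + 1) B := by
  have hpath := hp.cons hx fun _ => hr
  rw [show k - 1 + 1 = k by omega] at hpath
  refine Forces.close_red hk hpath ?_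
  rw [consSeq_last (by omega)]
  exact h

theorem winCC_of_blue_apex (hn : 3 ≤ n) (hv : IsPathSeq (Blue B) (n - 1) v) {z : ℕ}
    (hz : z ∉ verts (n - 1) v) (hfirst : Blue B z (v 0)) (hlast : Blue B z (v (n - 2))) :
    WinCC k n B := by
  have hpath := hv.cons hz fun _ => hfirst
  rw [show n - 1 + 1 = n by omega] at hpath
  refine winCC_of_blue hn hpath ?_
  rw [consSeq_last (by omega)]
  exact hlast.symm

theorem forces_of_blue_apex (hk : 3 ≤ k) (hko : Odd k) (hn : 3 * k ≤ n)
    (hv : IsPathSeq (Blue B) n v) {z : ℕ} (hz : z ∉ verts n v) (hfirst : Blue B z (v 0))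
    (hlast : Blue B z (v (n - 1))) : Forces (WinCC k n) (2 * k + 3) B := by
  refine forces_of_blue_cycle_succ hk hko hn (hv.cons hz fun _ => hfirst) ?_
  rw [consSeq_last (by omega)]
  exact hlast.symm

/-- The edge `x y` has colour `c`, where `true` stands for red as in `PainterStrat`. -/
def HasColor (B : Board) (c : Bool) (x y : ℕ) : Prop := if c then Red B x y else Blue B x y

theorem HasColor.mono {B' : Board} {c : Bool} {x y : ℕ} (h : HasColor B c x y) (hB : B ≤ B') :
    HasColor B' c x y := by
  cases c
  · exact Blue.mono h hB
  · exact Red.mono h hB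

theorem Forces.ask_color {W : Board → Prop} (u v : ℕ) (huv : u ≠ v)
    (h : ∀ c B', B ≤ B' → HasColor B' c u v → Forces W t B') : Forces W (t + 1) B :=
  Forces.ask u v huv (h true) (h false)

theorem Forces.common_blue_neighbor (hk : 3 ≤ k) (hp : IsPathSeq (Red B) (k - 1) p) {x y : ℕ}
    (hx : x ∉ verts (k - 1) p) (hy : y ∉ verts (k - 1) p) {c : Bool}
    (hcx : HasColor B c x (p 0)) (hcy : HasColor B c y (p 0))
    (h : ∀ B', B ≤ B' → ∀ j, j = 0 ∨ j = k - 2 → Blue B' (p j) x → Blue B' (p j) y →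
      Forces (WinCC k n) t B') :
    Forces (WinCC k n) (t + 2) B := by
  cases c with
  | false => exact (h B le_rfl 0 (Or.inl rfl) (Blue.symm hcx) (Blue.symm hcy)).succ.succ
  | true =>
    refine Forces.blue_to_far_end hk hp hx hcx fun B₁ hB₁ hbx => ?_
    refine Forces.blue_to_far_end hk (hp.red_mono hB₁) hy (HasColor.mono hcy hB₁)
      fun B₂ hB₂ hby => ?_
    exact h B₂ (hB₁.trans hB₂) (k - 2) (Or.inr rfl) (hbx.mono hB₂) hby

theorem Forces.binary_search {W : Board → Prop} (a : ℕ) {c : Bool} (m : ℕ) {lo hi : ℕ}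
    (hlh : lo < hi) (hm : hi - lo ≤ 2 ^ m) (hva : ∀ i < hi, v i ≠ a)
    (hlo : HasColor B c (v lo) a) (hhi : HasColor B (!c) (v hi) a)
    (h : ∀ B', B ≤ B' → ∀ i < hi, HasColor B' c (v i) a → HasColor B' (!c) (v (i + 1)) a →
      Forces W t B') : Forces W (m + t) B := by
  induction m generalizing B lo hi with
  | zero =>
    obtain rfl : hi = lo + 1 := by simp at hm; omega
    rw [Nat.zero_add]
    exact h B le_rfl lo (by omega) hlo hhi
  | succ m ih =>
    rw [Nat.add_right_comm]
    by_cases hadj : hi = lo + 1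
    · subst hadj
      exact (h B le_rfl lo (by omega) hlo hhi).mono (by omega)
    rw [pow_succ] at hm
    have hmid : (lo + hi) / 2 < hi := by omega
    refine Forces.ask_color (v ((lo + hi) / 2)) a (hva _ hmid) fun c' B' hB hc => ?_
    by_cases hcc : c' = c
    · subst hcc
      exact ih hmid (by omega) hva hc (hhi.mono hB) fun B'' hB'' => h B'' (hB.trans hB'')
    · obtain rfl := Bool.eq_not_iff.2 hcc
      exact ih (by omega) (by omega) (fun i hi' => hva i (by omega)) (hlo.mono hB) hc
        fun B'' hB'' i hi' => h B'' (hB.trans hB'') i (by omega)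

theorem forces_of_same_color_ends_pred (hk : 3 ≤ k) (hn : 3 ≤ n)
    (hv : IsPathSeq (Blue B) (n - 1) v) (hp : IsPathSeq (Red B) (k - 1) p)
    (hd : ∀ j < n - 1, v j ∉ verts (k - 1) p) {c : Bool} (hfirst : HasColor B c (v 0) (p 0))
    (hlast : HasColor B c (v (n - 2)) (p 0)) : Forces (WinCC k n) 2 B :=
  Forces.common_blue_neighbor hk hp (hd _ (by omega)) (hd _ (by omega)) hfirst hlast
    fun B' hB' j hj hb₁ hb₂ =>
      Forces.of_win (t := 0) (winCC_of_blue_apex hn (hv.blue_mono hB')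
        (fun ⟨i, hi, h⟩ => hd i hi ⟨j, by omega, h.symm⟩) hb₁ hb₂)

theorem forces_of_same_color_ends (hk : 3 ≤ k) (hko : Odd k) (hn : 3 * k ≤ n)
    (hv : IsPathSeq (Blue B) n v) (hp : IsPathSeq (Red B) (k - 1) p)
    (hd : ∀ j < n, v j ∉ verts (k - 1) p) {c : Bool} (hfirst : HasColor B c (v 0) (p 0))
    (hlast : HasColor B c (v (n - 1)) (p 0)) : Forces (WinCC k n) (2 * k + 5) B :=
  Forces.common_blue_neighbor hk hp (hd _ (by omega)) (hd _ (by omega)) hfirst hlast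
    fun B' hB' j hj hb₁ hb₂ =>
      forces_of_blue_apex hk hko hn (hv.blue_mono hB')
        (fun ⟨i, hi, h⟩ => hd i hi ⟨j, by omega, h.symm⟩) hb₁ hb₂

/-- The number of rounds in which a long blue walk is closed up, see `forces_of_blue_walk`. -/
def closingCost (k n : ℕ) : ℕ := Nat.log 2 n + 2 * k + 9

/- If the ends of a window of `n - 1` vertices have different colours towards `p₀`, there is a
colour change `v_i, v_{i+1}` inside it, and `v_{i+n-1}` has the same colour as one of these two. -/
theorem forces_of_blue_walk (hk : 3 ≤ k) (hko : Odd k) (hn : 3 * k ≤ n)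
    (hv : ∀ i < n - 2, IsPathSeq (Blue B) n fun j => v (i + j)) (hp : IsPathSeq (Red B) (k - 1) p)
    (hd : ∀ j < 2 * n - 3, v j ∉ verts (k - 1) p) : Forces (WinCC k n) (closingCost k n) B := by
  have hva : ∀ j < 2 * n - 3, v j ≠ p 0 := fun j hj =>
    ne_of_notMem_verts (hd j hj) (by omega)
  refine Forces.mono (t := Nat.log 2 n + 1 + (2 * k + 5 + 1) + 1 + 1) ?_
    (by unfold closingCost; omega)
  refine Forces.ask_color (v 0) (p 0) (hva 0 (by omega)) fun c B₁ hB₁ hfirst => ?_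
  refine Forces.ask_color (v (n - 2)) (p 0) (hva _ (by omega)) fun c' B₂ hB₂ hmid => ?_
  replace hv := fun i hi => (hv i hi).blue_mono (hB₁.trans hB₂)
  replace hp := hp.red_mono (hB₁.trans hB₂)
  replace hfirst := hfirst.mono hB₂
  by_cases hcc : c' = c
  · subst hcc
    refine Forces.mono (t := 2) ?_ (by omega)
    refine forces_of_same_color_ends_pred hk (by omega) ((hv 0 (by omega)).take (by omega)) hp
      (fun j hj => hd _ (by omega)) hfirst ?_
    rwa [Nat.zero_add]
  obtain rfl := Bool.eq_not_iff.2 hcc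
  refine Forces.binary_search (p 0) (Nat.log 2 n + 1) (by omega) ?_
    (fun i hi => hva i (by omega)) hfirst hmid fun B₃ hB₃ i hi hi₀ hi₁ => ?_
  · have := Nat.lt_pow_succ_log_self (b := 2) (by omega) n
    simp only [Nat.succ_eq_add_one] at this
    omega
  refine Forces.ask_color (v (i + (n - 1))) (p 0) (hva _ (by omega)) fun c' B₄ hB₄ hlast => ?_
  have hw := (hv i hi).blue_mono (hB₃.trans hB₄)
  replace hp := hp.red_mono (hB₃.trans hB₄)
  by_cases hcc : c' = c
  · subst hcc
    exact forces_of_same_color_ends hk hko hn hw hp (fun j hj => hd _ (by omega))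
      (hi₀.mono hB₄) hlast
  · obtain rfl := Bool.eq_not_iff.2 hcc
    refine Forces.mono (t := 2) ?_ (by omega)
    refine forces_of_same_color_ends_pred hk (by omega) (hw.shift (m' := n - 1) 1 (by omega)) hp
      (fun j hj => hd _ (by omega)) (hi₁.mono hB₄) ?_
    rwa [show i + (1 + (n - 2)) = i + (n - 1) by omega]

end Apex

/-! ### Linking through a hub -/

section Hub

variable {k n t m r : ℕ} {B B' : Board} {s : ℕ → ℕ} {g q u v x : ℕ}

theorem winCC_of_red_apex (hk : 3 ≤ k) (hs : IsPathSeq (Red B) m s) (hx : x ∉ verts m s) {i : ℕ}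
    (hi : i + (k - 2) < m) (hfirst : Red B x (s i)) (hlast : Red B x (s (i + (k - 2)))) :
    WinCC k n B := by
  have hpath := (hs.shift (m' := k - 1) i (by omega)).cons
    (fun h => hx (verts_shift_subset s (by omega) h)) fun _ => hfirst
  rw [show k - 1 + 1 = k by omega] at hpath
  refine winCC_of_red hk hpath ?_
  rw [consSeq_last (by omega)]
  exact hlast.symm

theorem Forces.blue_of_red (hk : 3 ≤ k) (hs : IsPathSeq (Red B) m s) (hx : x ∉ verts m s)
    {i j : ℕ} (hi : i < m) (hj : j < m) (hij : j = i + (k - 2) ∨ i = j + (k - 2))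
    (hr : Red B x (s i)) (h : ∀ B', B ≤ B' → Blue B' x (s j) → Forces (WinCC k n) t B') :
    Forces (WinCC k n) (t + 1) B := by
  obtain ⟨p, hp, hpi, hpj, hps⟩ := hs.exists_segment hi hj hij
  rw [show k - 2 + 1 = k - 1 by omega] at hp hps
  refine Forces.blue_to_far_end hk hp (fun hxp => hx (hps hxp)) (hpi ▸ hr) fun B' hB hb => ?_
  exact h B' hB (hpj ▸ hb.symm)

theorem Forces.blue_of_red_red (hk : 3 ≤ k) (hs : IsPathSeq (Red B) m s) (huv : u ≠ v)
    (hu : u ∉ verts m s) (hv : v ∉ verts m s) (hr : Red B u v) {i j : ℕ} (hi : i < m) (hj : j < m)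
    (hij : j = i + (k - 3) ∨ i = j + (k - 3)) (hui : Red B u (s i))
    (h : ∀ B', B ≤ B' → Blue B' v (s j) → Forces (WinCC k n) t B') :
    Forces (WinCC k n) (t + 1) B := by
  obtain ⟨p, hp, hpi, hpj, hps⟩ := hs.exists_segment hi hj hij
  have hpath := hp.cons (fun hup => hu (hps hup)) fun _ => hpi ▸ hui
  rw [show k - 3 + 1 + 1 = k - 1 by omega] at hpath
  have hvp := notMem_verts_consSeq huv.symm fun hvp => hv (hps hvp)
  rw [show k - 3 + 1 + 1 = k - 1 by omega] at hvp
  refine Forces.blue_to_far_end hk hpath hvp hr.symm fun B' hB hb => h B' hB ?_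
  rw [show k - 2 = k - 3 + 1 by omega, consSeq_last (by omega), Nat.add_sub_cancel, hpj] at hb
  exact hb.symm

/-- The list `c` is the interior of a blue path from `g` to `q`, and its vertices lie in `S`. -/
structure IsLink (B : Board) (S : Set ℕ) (g q : ℕ) (c : List ℕ) : Prop where
  ne_nil : c ≠ []
  nodup : c.Nodup
  chain : (g :: c ++ [q]).IsChain (Blue B)
  mem : ∀ x ∈ c, x ∈ S

namespace IsLink

variable {S S' : Set ℕ} {c : List ℕ}

theorem mono (h : IsLink B S g q c) (hB : B ≤ B') : IsLink B' S g q c :=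
  ⟨h.ne_nil, h.nodup, h.chain.imp fun _ _ h => Blue.mono h hB, h.mem⟩

theorem mono_set (h : IsLink B S g q c) (hS : S ⊆ S') : IsLink B S' g q c :=
  ⟨h.ne_nil, h.nodup, h.chain, fun x hx => hS (h.mem x hx)⟩

theorem one {a : ℕ} (ha : a ∈ S) (hga : Blue B g a) (hqa : Blue B q a) : IsLink B S g q [a] :=
  ⟨by simp, by simp, by simp [hga, hqa.symm], by simpa⟩

theorem two {a b : ℕ} (hne : a ≠ b) (ha : a ∈ S) (hb : b ∈ S) (hga : Blue B g a)
    (hab : Blue B a b) (hqb : Blue B q b) : IsLink B S g q [a, b] :=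
  ⟨by simp, by simp [hne], by simp [hga, hab, hqb.symm], by simp [ha, hb]⟩

theorem symm (h : IsLink B S g q c) : IsLink B S q g c.reverse := by
  refine ⟨by simpa using h.ne_nil, by simpa using h.nodup, ?_, by simpa using h.mem⟩
  have := List.isChain_reverse.2 (h.chain.imp fun _ _ h => Blue.symm h)
  simpa [flip] using this

end IsLink

/-- At `s r` and at `s (r + (k - 2))`, the ends of a red path on `k - 1` vertices, `g` and `q` see
opposite colours: blue and red for `g`, red and blue for `q`. -/
structure Opposed (k : ℕ) (B : Board) (s : ℕ → ℕ) (r g q : ℕ) : Prop where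
  blue_left : Blue B g (s r)
  red_right : Red B g (s (r + (k - 2)))
  red_left : Red B q (s r)
  blue_right : Blue B q (s (r + (k - 2)))

theorem Opposed.mono (h : Opposed k B s r g q) (hB : B ≤ B') : Opposed k B' s r g q :=
  ⟨h.blue_left.mono hB, h.red_right.mono hB, h.red_left.mono hB, h.blue_right.mono hB⟩

theorem Forces.link_or_opposed (hk : 3 ≤ k) (hs : IsPathSeq (Red B) m s) (hg : g ∉ verts m s)
    (hq : q ∉ verts m s) (hr : r + (k - 2) < m)
    (hlink : ∀ B', B ≤ B' → ∀ c, IsLink B' (verts m s) g q c → Forces (WinCC k n) t B')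
    (hopp : ∀ B', B ≤ B' → Opposed k B' s r g q ∨ Opposed k B' s r q g →
      Forces (WinCC k n) t B') : Forces (WinCC k n) (t + 4) B := by
  have hr₀ : r < m := by omega
  refine .ask_color g (s r) (ne_of_notMem_verts hg hr₀) fun c₁ B₁ hB₁ hg₁ => ?_
  refine .ask_color q (s r) (ne_of_notMem_verts hq hr₀) fun c₂ B₂ hB₂ hq₁ => ?_
  refine .ask_color g (s (r + (k - 2))) (ne_of_notMem_verts hg hr) fun c₃ B₃ hB₃ hg₂ => ?_
  refine .ask_color q (s (r + (k - 2))) (ne_of_notMem_verts hq hr) fun c₄ B₄ hB₄ hq₂ => ?_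
  have hB := hB₁.trans (hB₂.trans (hB₃.trans hB₄))
  replace hg₁ := hg₁.mono (hB₂.trans (hB₃.trans hB₄))
  replace hq₁ := hq₁.mono (hB₃.trans hB₄)
  replace hg₂ := hg₂.mono hB₄
  replace hs := hs.red_mono hB
  cases c₁ <;> cases c₂ <;> cases c₃ <;> cases c₄ <;>
  first
  | exact .of_win (winCC_of_red_apex hk hs hg hr hg₁ hg₂)
  | exact .of_win (winCC_of_red_apex hk hs hq hr hq₁ hq₂)
  | exact hlink _ hB _ (.one (mem_verts hr₀) hg₁ hq₁)
  | exact hlink _ hB _ (.one (mem_verts hr) hg₂ hq₂)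
  | exact hopp _ hB (Or.inl ⟨hg₁, hg₂, hq₁, hq₂⟩)
  | exact hopp _ hB (Or.inr ⟨hq₁, hq₂, hg₁, hg₂⟩)

theorem Forces.link_of_opposed (hk : 3 ≤ k) (hs : IsPathSeq (Red B) m s) (hr : r + (k - 1) < m)
    (h₀ : Opposed k B s r g q) (h₁ : Opposed k B s (r + 1) g q)
    (hlink : ∀ B', B ≤ B' → ∀ c, IsLink B' (verts m s) g q c → Forces (WinCC k n) t B') :
    Forces (WinCC k n) (t + 1) B := by
  refine Forces.close_red hk (hs.shift (m' := k) r (by omega)) fun B' hB hb => ?_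
  refine hlink B' hB _ (.two (hs.ne _ _ (by omega) hr (by omega)) (mem_verts (by omega))
    (mem_verts hr) (h₀.blue_left.mono hB) hb.symm ?_)
  have := h₁.blue_right.mono hB
  rwa [show r + 1 + (k - 2) = r + (k - 1) by omega] at this

/-- Along a red path on `k + 1` vertices, the colours seen by `g` and by `q` alternate; this is the
only way in which Painter can prevent the path from linking `g` to `q`. -/
structure Alternating (k : ℕ) (B : Board) (s : ℕ → ℕ) (g q : ℕ) : Prop where
  zero : Opposed k B s 0 g q
  one : Opposed k B s 1 q g
  two : Opposed k B s 2 g q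

theorem Alternating.mono (h : Alternating k B s g q) (hB : B ≤ B') : Alternating k B' s g q :=
  ⟨h.zero.mono hB, h.one.mono hB, h.two.mono hB⟩

theorem Forces.link_or_alternating_of_opposed (hk : 3 ≤ k) (hs : IsPathSeq (Red B) (k + 1) s)
    (h₀ : Opposed k B s 0 g q ∨ Opposed k B s 0 q g)
    (h₁ : Opposed k B s 1 g q ∨ Opposed k B s 1 q g)
    (h₂ : Opposed k B s 2 g q ∨ Opposed k B s 2 q g)
    (hlink : ∀ B', B ≤ B' → ∀ c, IsLink B' (verts (k + 1) s) g q c → Forces (WinCC k n) t B')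
    (halt : Alternating k B s g q ∨ Alternating k B s q g → Forces (WinCC k n) t B) :
    Forces (WinCC k n) (t + 1) B := by
  have hlink' : ∀ B', B ≤ B' → ∀ c, IsLink B' (verts (k + 1) s) q g c →
      Forces (WinCC k n) t B' := fun B' hB c hc => hlink B' hB _ hc.symm
  rcases h₀ with h₀ | h₀ <;> rcases h₁ with h₁ | h₁
  · exact .link_of_opposed hk hs (by omega) h₀ h₁ hlink
  · rcases h₂ with h₂ | h₂
    · exact (halt (Or.inl ⟨h₀, h₁, h₂⟩)).succ
    · exact .link_of_opposed hk hs (by omega) h₁ h₂ hlink'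
  · rcases h₂ with h₂ | h₂
    · exact .link_of_opposed hk hs (by omega) h₁ h₂ hlink
    · exact (halt (Or.inr ⟨h₀, h₁, h₂⟩)).succ
  · exact .link_of_opposed hk hs (by omega) h₀ h₁ hlink'

theorem Forces.link_or_alternating (hk : 3 ≤ k) (hs : IsPathSeq (Red B) (k + 1) s)
    (hg : g ∉ verts (k + 1) s) (hq : q ∉ verts (k + 1) s)
    (hlink : ∀ B', B ≤ B' → ∀ c, IsLink B' (verts (k + 1) s) g q c → Forces (WinCC k n) t B')
    (halt : ∀ B', B ≤ B' → Alternating k B' s g q ∨ Alternating k B' s q g →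
      Forces (WinCC k n) t B') : Forces (WinCC k n) (t + 13) B := by
  refine .link_or_opposed (t := t + 9) hk hs hg hq (r := 0) (by omega)
    (fun B₁ hB₁ c hc => (hlink B₁ hB₁ c hc).mono (by omega)) fun B₁ hB₁ h₀ => ?_
  replace hs := hs.red_mono hB₁
  refine .link_or_opposed (t := t + 5) hk hs hg hq (r := 1) (by omega)
    (fun B₂ hB₂ c hc => (hlink B₂ (hB₁.trans hB₂) c hc).mono (by omega)) fun B₂ hB₂ h₁ => ?_
  replace hs := hs.red_mono hB₂
  refine .link_or_opposed (t := t + 1) hk hs hg hq (r := 2) (by omega)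
    (fun B₃ hB₃ c hc => (hlink B₃ (hB₁.trans (hB₂.trans hB₃)) c hc).succ) fun B₃ hB₃ h₂ => ?_
  have hB := hB₁.trans (hB₂.trans hB₃)
  exact .link_or_alternating_of_opposed hk (hs.red_mono hB₃)
    (h₀.imp (·.mono (hB₂.trans hB₃)) (·.mono (hB₂.trans hB₃))) (h₁.imp (·.mono hB₃) (·.mono hB₃))
    h₂ (fun B' hB' => hlink B' (hB.trans hB')) (halt B₃ hB)

end Hub

/-- The list `l` is a blue path. Lists rather than sequences are used wherever paths are cut and
concatenated. -/
structure IsBluePath (B : Board) (l : List ℕ) : Prop where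
  nodup : l.Nodup
  chain : l.IsChain (Blue B)

/-- A connector: a blue path `K` whose ends `u` and `v` span a red edge. It helps to link vertices
that see alternating colours along a red path. -/
structure IsConnector (B : Board) (u v : ℕ) (K : List ℕ) : Prop extends IsBluePath B K where
  head : K.head? = some u
  last : K.getLast? = some v
  red : Red B u v
  ne : u ≠ v

/-- The vertex `x` is blue to one of two prescribed vertices in even position on a red path on
`k + 1` vertices, `k` being odd. -/
def BlueToEven (k : ℕ) (B : Board) (s : ℕ → ℕ) (x : ℕ) : Prop :=
  Blue B x (s 2) ∨ Blue B x (s (k - 1))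

/-- The vertex `x` is blue to one of two prescribed vertices in odd position on a red path on
`k + 1` vertices, `k` being odd. -/
def BlueToOdd (k : ℕ) (B : Board) (s : ℕ → ℕ) (x : ℕ) : Prop :=
  Blue B x (s 1) ∨ Blue B x (s (k - 2))

section Connector

variable {k n t : ℕ} {B B' : Board} {s : ℕ → ℕ} {g q u v x : ℕ} {l K : List ℕ}

theorem IsBluePath.mono (h : IsBluePath B l) (hB : B ≤ B') : IsBluePath B' l :=
  ⟨h.nodup, h.chain.imp fun _ _ h => Blue.mono h hB⟩

theorem IsBluePath.reverse (h : IsBluePath B l) : IsBluePath B l.reverse :=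
  ⟨by simpa using h.nodup,
    by simpa [flip] using List.isChain_reverse.2 (h.chain.imp fun _ _ h => Blue.symm h)⟩

namespace IsConnector

theorem mono (h : IsConnector B u v K) (hB : B ≤ B') : IsConnector B' u v K :=
  ⟨h.toIsBluePath.mono hB, h.head, h.last, h.red.mono hB, h.ne⟩

theorem reverse (h : IsConnector B u v K) : IsConnector B v u K.reverse :=
  ⟨h.toIsBluePath.reverse, by simpa using h.last, by simpa using h.head, h.red.symm, h.ne.symm⟩

theorem head_mem (h : IsConnector B u v K) : u ∈ K :=
  List.mem_of_mem_head? (by rw [h.head]; rfl)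

theorem last_mem (h : IsConnector B u v K) : v ∈ K := List.mem_of_getLast? h.last

theorem isLink {S : Set ℕ} {a b : ℕ} (h : IsConnector B u v K) (ha : a ∈ S) (hb : b ∈ S)
    (hS : ∀ x ∈ K, x ∉ S) (hab : a ≠ b) (hga : Blue B g a) (hqb : Blue B q b) (hua : Blue B u a)
    (hvb : Blue B v b) : IsLink B (S ∪ {x | x ∈ K}) g q (a :: K ++ [b]) where
  ne_nil := by simp
  nodup := by
    have haK : a ∉ K := fun h' => hS a h' ha
    have hbK : b ∉ K := fun h' => hS b h' hb
    grind [h.nodup]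
  chain := by
    rw [show g :: (a :: K ++ [b]) ++ [q] = [g, a] ++ (K ++ [b, q]) by simp,
      List.isChain_append, List.isChain_append]
    refine ⟨by simpa, ⟨h.chain, by simpa using hqb.symm, ?_⟩, ?_⟩
    · simpa [h.last] using hvb
    · simpa [h.head] using hua.symm
  mem x hx := by
    simp only [List.cons_append, List.mem_cons, List.mem_append, List.not_mem_nil, or_false] at hx
    rcases hx with rfl | hx | rfl
    · exact Or.inl ha
    · exact Or.inr hx
    · exact Or.inl hb

end IsConnector

theorem BlueToEven.mono (h : BlueToEven k B s x) (hB : B ≤ B') : BlueToEven k B' s x :=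
  h.imp (·.mono hB) (·.mono hB)

theorem Alternating.blue_left (hk : 3 ≤ k) (h : Alternating k B s g q) :
    Blue B g (s 2) ∧ Blue B g (s (k - 1)) := by
  have := h.one.blue_right
  rw [show 1 + (k - 2) = k - 1 by omega] at this
  exact ⟨h.two.blue_left, this⟩

theorem Alternating.blue_right (h : Alternating k B s g q) :
    Blue B q (s 1) ∧ Blue B q (s (k - 2)) := by
  have := h.zero.blue_right
  rw [Nat.zero_add] at this
  exact ⟨h.one.blue_left, this⟩

theorem Alternating.exists_isLink (hk : 3 ≤ k) (hko : Odd k) (hs : IsPathSeq (Red B) (k + 1) s)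
    (h : Alternating k B s g q) (hK : IsConnector B u v K) (hS : ∀ x ∈ K, x ∉ verts (k + 1) s)
    (hu : BlueToEven k B s u) (hv : BlueToOdd k B s v) :
    ∃ c, IsLink B (verts (k + 1) s ∪ {x | x ∈ K}) g q c := by
  obtain ⟨r, rfl⟩ := hko
  obtain ⟨a, ha, hga, hua⟩ : ∃ a, (a = 2 ∨ a = 2 * r + 1 - 1) ∧ Blue B g (s a) ∧ Blue B u (s a) :=
    hu.elim (fun h' => ⟨_, Or.inl rfl, (h.blue_left hk).1, h'⟩)
      fun h' => ⟨_, Or.inr rfl, (h.blue_left hk).2, h'⟩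
  obtain ⟨b, hb, hqb, hvb⟩ : ∃ b, (b = 1 ∨ b = 2 * r + 1 - 2) ∧ Blue B q (s b) ∧ Blue B v (s b) :=
    hv.elim (fun h' => ⟨_, Or.inl rfl, h.blue_right.1, h'⟩)
      fun h' => ⟨_, Or.inr rfl, h.blue_right.2, h'⟩
  exact ⟨_, hK.isLink (mem_verts (by omega)) (mem_verts (by omega)) hS
    (hs.ne a b (by omega) (by omega) (by omega)) hga hqb hua hvb⟩

theorem Forces.blueToOdd_or_swap (hk : 3 ≤ k) (hs : IsPathSeq (Red B) (k + 1) s) (huv : u ≠ v)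
    (hr : Red B u v) (hu : u ∉ verts (k + 1) s) (hv : v ∉ verts (k + 1) s)
    (huB : BlueToEven k B s u)
    (h : ∀ B', B ≤ B' → (BlueToEven k B' s u ∧ BlueToOdd k B' s v) ∨
      (BlueToEven k B' s v ∧ BlueToOdd k B' s u) → Forces (WinCC k n) t B') :
    Forces (WinCC k n) (t + 4) B := by
  refine .ask v (s 1) (ne_of_notMem_verts hv (by omega)) (fun B₁ hB₁ hv₁ => ?_)
    fun B₁ hB₁ hv₁ => (h B₁ hB₁ (Or.inl ⟨huB.mono hB₁, Or.inl hv₁⟩)).mono (by omega)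
  refine .ask v (s (k - 2)) (ne_of_notMem_verts hv (by omega)) (fun B₂ hB₂ hv₂ => ?_)
    fun B₂ hB₂ hv₂ => (h B₂ (hB₁.trans hB₂)
      (Or.inl ⟨huB.mono (hB₁.trans hB₂), Or.inr hv₂⟩)).mono (by omega)
  replace hs := hs.red_mono (hB₁.trans hB₂)
  refine .blue_of_red_red (i := k - 2) (j := 1) hk hs huv.symm hv hu
    (hr.symm.mono (hB₁.trans hB₂)) (by omega) (by omega) (by omega) hv₂ fun B₃ hB₃ hu₁ => ?_
  refine .blue_of_red (i := 1) (j := k - 1) hk (hs.red_mono hB₃) hv (by omega) (by omega) (by omega)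
    (hv₁.mono (hB₂.trans hB₃)) fun B₄ hB₄ hv₃ => ?_
  exact h B₄ (hB₁.trans (hB₂.trans (hB₃.trans hB₄))) (Or.inr ⟨Or.inr hv₃, Or.inl (hu₁.mono hB₄)⟩)

theorem Forces.blueToEven_blueToOdd (hk : 3 ≤ k) (hs : IsPathSeq (Red B) (k + 1) s) (huv : u ≠ v)
    (hr : Red B u v) (hu : u ∉ verts (k + 1) s) (hv : v ∉ verts (k + 1) s)
    (h : ∀ B', B ≤ B' → (BlueToEven k B' s u ∧ BlueToOdd k B' s v) ∨
      (BlueToEven k B' s v ∧ BlueToOdd k B' s u) → Forces (WinCC k n) t B') :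
    Forces (WinCC k n) (t + 6) B := by
  refine .ask u (s 2) (ne_of_notMem_verts hu (by omega)) (fun B₁ hB₁ _ => ?_) fun B₁ hB₁ hu₁ =>
    (Forces.blueToOdd_or_swap hk (hs.red_mono hB₁) huv (hr.mono hB₁) hu hv (Or.inl hu₁)
      fun B' hB' => h B' (hB₁.trans hB')).succ
  refine .ask u (s (k - 1)) (ne_of_notMem_verts hu (by omega)) (fun B₂ hB₂ hu₂ => ?_)
    fun B₂ hB₂ hu₂ => .blueToOdd_or_swap hk (hs.red_mono (hB₁.trans hB₂)) huv
      (hr.mono (hB₁.trans hB₂)) hu hv (Or.inr hu₂) fun B' hB' => h B' (hB₁.trans (hB₂.trans hB'))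
  replace hs := hs.red_mono (hB₁.trans hB₂)
  refine Forces.mono (t := t + 2) ?_ (by omega)
  refine .blue_of_red_red (i := k - 1) (j := 2) hk hs huv hu hv (hr.mono (hB₁.trans hB₂))
    (by omega) (by omega) (by omega) hu₂ fun B₃ hB₃ hv₁ => ?_
  refine .blue_of_red (i := k - 1) (j := 1) hk (hs.red_mono hB₃) hu (by omega) (by omega) (by omega)
    (hu₂.mono hB₃) fun B₄ hB₄ hu₃ => ?_
  exact h B₄ (hB₁.trans (hB₂.trans (hB₃.trans hB₄))) (Or.inr ⟨Or.inl (hv₁.mono hB₄), Or.inl hu₃⟩)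

theorem Forces.link_of_alternating (hk : 3 ≤ k) (hko : Odd k) (hs : IsPathSeq (Red B) (k + 1) s)
    (halt : Alternating k B s g q) (hK : IsConnector B u v K) (hS : ∀ x ∈ K, x ∉ verts (k + 1) s)
    (hlink : ∀ B', B ≤ B' → ∀ c, IsLink B' (verts (k + 1) s ∪ {x | x ∈ K}) g q c →
      Forces (WinCC k n) t B') : Forces (WinCC k n) (t + 6) B := by
  refine .blueToEven_blueToOdd hk hs hK.ne hK.red (hS u hK.head_mem) (hS v hK.last_mem)
    fun B' hB h => ?_
  replace halt := halt.mono hB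
  replace hK := hK.mono hB
  replace hs := hs.red_mono hB
  rcases h with ⟨hu, hv⟩ | ⟨hv, hu⟩
  · obtain ⟨c, hc⟩ := halt.exists_isLink hk hko hs hK hS hu hv
    exact hlink B' hB c hc
  · obtain ⟨c, hc⟩ := halt.exists_isLink hk hko hs hK.reverse
      (fun x hx => hS x (List.mem_reverse.1 hx)) hv hu
    exact hlink B' hB c (hc.mono_set (by simp))

theorem Forces.link (hk : 3 ≤ k) (hko : Odd k) (hs : IsPathSeq (Red B) (k + 1) s)
    (hg : g ∉ verts (k + 1) s) (hq : q ∉ verts (k + 1) s) (hK : IsConnector B u v K)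
    (hS : ∀ x ∈ K, x ∉ verts (k + 1) s)
    (hlink : ∀ B', B ≤ B' → ∀ c, IsLink B' (verts (k + 1) s ∪ {x | x ∈ K}) g q c →
      Forces (WinCC k n) t B') : Forces (WinCC k n) (t + 19) B := by
  refine Forces.link_or_alternating (t := t + 6) hk hs hg hq
    (fun B₁ hB₁ c hc => (hlink B₁ hB₁ c (hc.mono_set Set.subset_union_left)).mono (by omega))
    fun B₁ hB₁ halt => ?_
  replace hs := hs.red_mono hB₁
  replace hK := hK.mono hB₁
  rcases halt with halt | halt
  · exact .link_of_alternating hk hko hs halt hK hS fun B₂ hB₂ => hlink B₂ (hB₁.trans hB₂)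
  · exact .link_of_alternating hk hko hs halt hK hS fun B₂ hB₂ c hc =>
      hlink B₂ (hB₁.trans hB₂) _ hc.symm

end Connector

section BluePathList

variable {k n : ℕ} {B : Board} {p : ℕ → ℕ} {l : List ℕ}

theorem isPathSeq_getD {r : ℕ → ℕ → Prop} (hnd : l.Nodup) (hc : l.IsChain r) :
    IsPathSeq r l.length fun i => l.getD i 0 where
  inj i hi j hj hij := by
    rw [List.getD_eq_getElem _ _ hi, List.getD_eq_getElem _ _ hj] at hij
    exact hnd.getElem_inj_iff.1 hij
  adj i hi := by
    rw [List.getD_eq_getElem _ _ (by omega), List.getD_eq_getElem _ _ hi]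
    exact List.isChain_iff_getElem.1 hc i hi

theorem IsBluePath.isPathSeq (h : IsBluePath B l) :
    IsPathSeq (Blue B) l.length fun i => l.getD i 0 :=
  isPathSeq_getD h.nodup h.chain

theorem getD_mem {i : ℕ} (hi : i < l.length) : l.getD i 0 ∈ l := by
  rw [List.getD_eq_getElem _ _ hi]; exact List.getElem_mem hi

theorem forces_of_long_blue_path (hk : 3 ≤ k) (hko : Odd k) (hn : 3 * k ≤ n)
    (hl : IsBluePath B l) (hlen : 2 * n - 3 ≤ l.length) (hp : IsPathSeq (Red B) (k - 1) p)
    (hd : ∀ x ∈ l, x ∉ verts (k - 1) p) : Forces (WinCC k n) (closingCost k n) B :=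
  forces_of_blue_walk hk hko hn (v := fun i => l.getD i 0)
    (fun i hi => hl.isPathSeq.shift i (by omega)) hp fun _ hi => hd _ (getD_mem (by omega))

theorem IsBluePath.isPathSeq_mod {g q : ℕ} (h : IsBluePath B l) {m : ℕ} (hm : m ≤ l.length)
    (hlen : 2 ≤ l.length) (hg : l.head? = some g) (hq : l.getLast? = some q) (hqg : Blue B q g)
    (i : ℕ) : IsPathSeq (Blue B) m fun j => l.getD ((i + j) % l.length) 0 where
  inj j hj j' hj' hjj := by
    have hpos : 0 < l.length := by omega
    have hmod := h.isPathSeq.inj _ (Nat.mod_lt _ hpos) _ (Nat.mod_lt _ hpos) hjj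
    have hcancel : j ≡ j' [MOD l.length] := Nat.ModEq.add_left_cancel' i hmod
    rwa [Nat.ModEq, Nat.mod_eq_of_lt (by omega), Nat.mod_eq_of_lt (by omega)] at hcancel
  adj j hj := by
    have hlast : l.getD (l.length - 1) 0 = q := by
      rw [List.getLast?_eq_getElem?] at hq; simp [hq]
    have hfirst : l.getD 0 0 = g := by
      rw [List.head?_eq_getElem?] at hg; simp [hg]
    have hlt := Nat.mod_lt (i + j) (show 0 < l.length by omega)
    rw [← Nat.add_assoc i j 1, Nat.add_mod_eq_ite (m := i + j) (n := 1),
      Nat.mod_eq_of_lt (show 1 < l.length by omega)]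
    split_ifs with hc
    · rwa [show (i + j) % l.length = l.length - 1 by omega, hlast,
        show l.length - 1 + 1 - l.length = 0 by omega, hfirst]
    · exact h.isPathSeq.adj _ (by omega)

theorem forces_of_long_blue_cycle (hk : 3 ≤ k) (hko : Odd k) (hn : 3 * k ≤ n)
    (hl : IsBluePath B l) (hlen : n ≤ l.length) {g q : ℕ} (hg : l.head? = some g)
    (hq : l.getLast? = some q) (hqg : Blue B q g) (hp : IsPathSeq (Red B) (k - 1) p)
    (hd : ∀ x ∈ l, x ∉ verts (k - 1) p) : Forces (WinCC k n) (closingCost k n) B :=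
  forces_of_blue_walk hk hko hn (v := fun i => l.getD (i % l.length) 0)
    (fun i _ => hl.isPathSeq_mod hlen (by omega) hg hq hqg i) hp
    fun _ _ => hd _ (getD_mem (Nat.mod_lt _ (by omega)))

theorem IsBluePath.append_link {S : Set ℕ} {l₁ l₂ c : List ℕ} {a b : ℕ} (h₁ : IsBluePath B l₁)
    (h₂ : IsBluePath B l₂) (ha : l₁.getLast? = some a) (hb : l₂.head? = some b)
    (hc : IsLink B S a b c) (hd : l₁.Disjoint l₂) (hS : ∀ x ∈ S, x ∉ l₁ ∧ x ∉ l₂) :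
    IsBluePath B (l₁ ++ (c ++ l₂)) where
  nodup := by
    rw [List.nodup_append', List.nodup_append']
    refine ⟨h₁.nodup, ⟨hc.nodup, h₂.nodup, fun x hx => (hS x (hc.mem x hx)).2⟩, ?_⟩
    exact List.disjoint_append_right.2 ⟨fun x hx hxc => (hS x (hc.mem x hxc)).1 hx, hd⟩
  chain := by
    have hcc := hc.chain
    rw [List.cons_append, List.isChain_cons, List.isChain_append] at hcc
    obtain ⟨hac, hchain, -, hcb⟩ := hcc
    rw [List.isChain_append, List.isChain_append]
    refine ⟨h₁.chain, ⟨hchain, h₂.chain, ?_⟩, ?_⟩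
    · simpa [hb] using hcb
    · obtain ⟨c₀, c', rfl⟩ := List.exists_cons_of_ne_nil hc.ne_nil
      simpa [ha] using hac

end BluePathList

/-! ### Merging blue paths -/

/-- The lists in `P` are nonempty blue paths, pairwise disjoint, whose ends lie outside `E`. -/
structure IsBlueForest (B : Board) (E : Set ℕ) (P : List (List ℕ)) : Prop where
  nodup : P.flatten.Nodup
  ne_nil : ∀ l ∈ P, l ≠ []
  chain : ∀ l ∈ P, l.IsChain (Blue B)
  head_notMem : ∀ l ∈ P, ∀ x ∈ l.head?, x ∉ E
  last_notMem : ∀ l ∈ P, ∀ x ∈ l.getLast?, x ∉ E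

section Forest

variable {B B' : Board} {E E' : Set ℕ} {P P' : List (List ℕ)} {c l l₁ l₂ : List ℕ} {x y z : ℕ}

theorem IsBluePath.cons (h : IsBluePath B l) (hx : x ∉ l) (hy : l.head? = some y)
    (hxy : Blue B x y) : IsBluePath B (x :: l) :=
  ⟨List.nodup_cons.2 ⟨hx, h.nodup⟩, List.isChain_cons.2 ⟨by simpa [hy], h.chain⟩⟩

theorem IsBluePath.append (h₁ : IsBluePath B l₁) (h₂ : IsBluePath B l₂) (hd : l₁.Disjoint l₂)
    (hx : l₁.getLast? = some x) (hy : l₂.head? = some y) (hxy : Blue B x y) :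
    IsBluePath B (l₁ ++ l₂) :=
  ⟨List.nodup_append'.2 ⟨h₁.nodup, h₂.nodup, hd⟩,
    List.isChain_append.2 ⟨h₁.chain, h₂.chain, by simpa [hx, hy]⟩⟩

namespace IsBlueForest

theorem mono (h : IsBlueForest B E P) (hB : B ≤ B') : IsBlueForest B' E P :=
  ⟨h.nodup, h.ne_nil, fun l hl => (h.chain l hl).imp fun _ _ h => Blue.mono h hB,
    h.head_notMem, h.last_notMem⟩

theorem mono_set (h : IsBlueForest B E P) (hE : E' ⊆ E) : IsBlueForest B E' P :=
  ⟨h.nodup, h.ne_nil, h.chain, fun l hl x hx hx' => h.head_notMem l hl x hx (hE hx'),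
    fun l hl x hx hx' => h.last_notMem l hl x hx (hE hx')⟩

theorem perm (h : IsBlueForest B E P) (hP : P.Perm P') : IsBlueForest B E P' :=
  ⟨hP.flatten.nodup_iff.1 h.nodup, fun l hl => h.ne_nil l (hP.mem_iff.2 hl),
    fun l hl => h.chain l (hP.mem_iff.2 hl), fun l hl => h.head_notMem l (hP.mem_iff.2 hl),
    fun l hl => h.last_notMem l (hP.mem_iff.2 hl)⟩

theorem isBluePath (h : IsBlueForest B E P) (hl : l ∈ P) : IsBluePath B l :=
  ⟨(List.nodup_flatten.1 h.nodup).1 l hl, h.chain l hl⟩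

theorem exists_head (h : IsBlueForest B E P) (hl : l ∈ P) :
    ∃ x ∈ l, l.head? = some x ∧ x ∉ E := by
  obtain ⟨x, l', rfl⟩ := List.exists_cons_of_ne_nil (h.ne_nil l hl)
  exact ⟨x, by simp, rfl, h.head_notMem _ hl x rfl⟩

theorem append (h : IsBlueForest B E P) (h' : IsBlueForest B E P')
    (hd : P.flatten.Disjoint P'.flatten) : IsBlueForest B E (P ++ P') where
  nodup := by rw [List.flatten_append]; exact h.nodup.append h'.nodup hd
  ne_nil l hl := (List.mem_append.1 hl).elim (h.ne_nil l) (h'.ne_nil l)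
  chain l hl := (List.mem_append.1 hl).elim (h.chain l) (h'.chain l)
  head_notMem l hl := (List.mem_append.1 hl).elim (h.head_notMem l) (h'.head_notMem l)
  last_notMem l hl := (List.mem_append.1 hl).elim (h.last_notMem l) (h'.last_notMem l)

theorem nil : IsBlueForest B E [] := ⟨by simp, by simp, by simp, by simp, by simp⟩

theorem singleton (hl : IsBluePath B l) (hne : l ≠ []) (hhead : ∀ x ∈ l.head?, x ∉ E)
    (hlast : ∀ x ∈ l.getLast?, x ∉ E) : IsBlueForest B E [l] where
  nodup := by simpa using hl.nodup
  ne_nil := by simpa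
  chain := by simpa using hl.chain
  head_notMem := by simpa using hhead
  last_notMem := by simpa using hlast

theorem cons (h : IsBlueForest B E P) (hl : IsBluePath B l) (hne : l ≠ [])
    (hhead : ∀ x ∈ l.head?, x ∉ E) (hlast : ∀ x ∈ l.getLast?, x ∉ E)
    (hd : l.Disjoint P.flatten) : IsBlueForest B E (l :: P) :=
  (singleton hl hne hhead hlast).append h (by simpa using hd)

theorem tail (h : IsBlueForest B E (l :: P)) : IsBlueForest B E P where
  nodup := (List.nodup_append'.1 h.nodup).2.1
  ne_nil l hl := h.ne_nil l (by simp [hl])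
  chain l hl := h.chain l (by simp [hl])
  head_notMem l hl := h.head_notMem l (by simp [hl])
  last_notMem l hl := h.last_notMem l (by simp [hl])

theorem disjoint (h : IsBlueForest B E (l :: P)) : l.Disjoint P.flatten :=
  (List.nodup_append'.1 h.nodup).2.2

theorem cons_singleton (h : IsBlueForest B E P) (hx : x ∉ P.flatten) (hE : x ∉ E) :
    IsBlueForest B E ([x] :: P) :=
  h.cons ⟨by simp, by simp⟩ (by simp) (by simpa) (by simpa) (by simpa using hx)

theorem cons_vertex (h : IsBlueForest B E (l :: P)) (hy : l.head? = some y) (hxy : Blue B x y)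
    (hx : x ∉ (l :: P).flatten) (hE : x ∉ E) : IsBlueForest B E ((x :: l) :: P) := by
  rw [List.flatten_cons, List.mem_append, not_or] at hx
  refine h.tail.cons ((h.isBluePath (by simp)).cons hx.1 hy hxy) (by simp) (by simpa) ?_
    (List.disjoint_cons_left.2 ⟨hx.2, h.disjoint⟩)
  have hlast := h.last_notMem l (by simp)
  rwa [← List.singleton_append, List.getLast?_append_of_ne_nil _ (h.ne_nil l (by simp))]

theorem join (h : IsBlueForest B E (l₁ :: l₂ :: P)) (hl : IsBluePath B (l₁.reverse ++ (c ++ l₂)))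
    (hc : c.Disjoint P.flatten) : IsBlueForest B E ((l₁.reverse ++ (c ++ l₂)) :: P) := by
  have hne₁ : l₁.reverse ≠ [] := by simpa using h.ne_nil l₁ (by simp)
  have hne₂ := h.ne_nil l₂ (by simp)
  refine h.tail.tail.cons hl (by simp [hne₂]) ?_ ?_ ?_
  · rw [List.head?_append_of_ne_nil _ hne₁, List.head?_reverse]
    exact h.last_notMem l₁ (by simp)
  · rw [List.getLast?_append_of_ne_nil _ (by simp [hne₂]), List.getLast?_append_of_ne_nil _ hne₂]
    exact h.last_notMem l₂ (by simp)
  · have h₁ := h.disjoint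
    rw [List.flatten_cons, List.disjoint_append_right] at h₁
    simp only [List.disjoint_append_left]
    exact ⟨fun x hx => h₁.2 (by simpa using hx), hc, h.tail.disjoint⟩

theorem join_adj (h : IsBlueForest B E (l₁ :: l₂ :: P)) (hx : l₁.head? = some x)
    (hy : l₂.head? = some y) (hxy : Blue B x y) : IsBlueForest B E ((l₁.reverse ++ l₂) :: P) := by
  have hd := h.disjoint
  rw [List.flatten_cons, List.disjoint_append_right] at hd
  exact h.join (c := []) ((h.isBluePath (by simp)).reverse.append (h.isBluePath (by simp))
    (fun x hx => hd.1 (by simpa using hx)) (by simpa using hx) hy hxy) (by simp)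

theorem join_vertex (h : IsBlueForest B E (l₁ :: l₂ :: P)) (hx : l₁.head? = some x)
    (hy : l₂.head? = some y) (hzx : Blue B z x) (hzy : Blue B z y)
    (hz : z ∉ (l₁ :: l₂ :: P).flatten) : IsBlueForest B E ((l₁.reverse ++ z :: l₂) :: P) := by
  have hd := h.disjoint
  simp only [List.flatten_cons, List.mem_append, not_or, List.disjoint_append_right] at hz hd
  refine h.join (c := [z]) ?_ (by simpa using hz.2.2)
  refine (h.isBluePath (by simp)).reverse.append ((h.isBluePath (by simp)).cons hz.2.1 hy hzy) ?_
    (by simpa using hx) rfl hzx.symm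
  exact List.disjoint_cons_right.2 ⟨by simpa using hz.1, fun x hx => hd.1 (by simpa using hx)⟩

end IsBlueForest

theorem flatten_reverse_append_perm (c : List ℕ) :
    ((l₁.reverse ++ (c ++ l₂)) :: P).flatten.Perm (c ++ (l₁ :: l₂ :: P).flatten) := by
  simp only [List.flatten_cons, List.append_assoc]
  exact (List.perm_append_comm_assoc ..).trans
    (((List.reverse_perm _).append_right _).append_left _)

theorem exists_isBlueForest (hc : ∀ l ∈ P, l.IsChain (Blue B)) (hnd : P.flatten.Nodup)
    (hE : ∀ x ∈ P.flatten, x ∉ E) :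
    ∃ P', IsBlueForest B E P' ∧ P'.length ≤ P.length ∧ P'.flatten = P.flatten := by
  have hf : (P.filter fun l => !l.isEmpty).flatten = P.flatten := List.flatten_filter_not_isEmpty
  refine ⟨P.filter fun l => !l.isEmpty, ⟨by rwa [hf], ?_, ?_, ?_, ?_⟩,
    List.length_filter_le _ _, hf⟩
  · exact fun l hl => by simpa using (List.mem_filter.1 hl).2
  · exact fun l hl => hc l (List.mem_filter.1 hl).1
  · exact fun l hl x hx =>
      hE x (List.mem_flatten.2 ⟨l, (List.mem_filter.1 hl).1, List.mem_of_mem_head? hx⟩)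
  · exact fun l hl x hx =>
      hE x (List.mem_flatten.2 ⟨l, (List.mem_filter.1 hl).1, List.mem_of_mem_getLast? hx⟩)

end Forest

/-- The functions `p 0, …, p (C - 1)` are red paths on `k - 1` vertices inside `V`, no two of which
share an end. Each of them can be used once to join two blue paths. -/
structure IsSupply (k : ℕ) (B : Board) (C : ℕ) (V : Set ℕ) (p : ℕ → ℕ → ℕ) : Prop where
  path : ∀ j < C, IsPathSeq (Red B) (k - 1) (p j)
  subset : ∀ j < C, verts (k - 1) (p j) ⊆ V
  ends_ne : ∀ i < C, ∀ j < C, i ≠ j → ∀ a b, (a = 0 ∨ a = k - 2) → (b = 0 ∨ b = k - 2) →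
    p i a ≠ p j b

/-- The starting position of the `j`-th red path on `d + 1` vertices inside a long red path: the
long path is cut into blocks of length `2d`, and each block contains `d` of the short paths. -/
def slot (d j : ℕ) : ℕ := 2 * (d * (j / d)) + j % d

section Merge

variable {k n t b C : ℕ} {B B' : Board} {E V : Set ℕ} {P : List (List ℕ)} {l₁ l₂ : List ℕ}
  {s : ℕ → ℕ} {p : ℕ → ℕ → ℕ} {x y : ℕ}

theorem slot_add_lt {d j i : ℕ} (hd : 0 < d) (hj : j < d * b) (hi : i ≤ d) :
    slot d j + i < 2 * (d * b) := by
  have hdiv : d * (j / d + 1) ≤ d * b := Nat.mul_le_mul_left _ (Nat.div_lt_of_lt_mul hj)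
  have hmod := Nat.mod_lt j hd
  rw [slot]
  lia

theorem slot_add_div_mod {d a : ℕ} (hd : 0 < d) (j : ℕ) (ha : a = 0 ∨ a = d) :
    (slot d j + a) / d / 2 = j / d ∧ (slot d j + a) % d = j % d := by
  have hmod := Nat.mod_lt j hd
  obtain ⟨c, hc, h⟩ : ∃ c, c ≤ 1 ∧ slot d j + a = j % d + d * (2 * (j / d) + c) := by
    rcases ha with rfl | rfl
    · exact ⟨0, by simp, by rw [slot]; ring⟩
    · exact ⟨1, by simp, by rw [slot]; ring⟩
  rw [h, Nat.add_mul_div_left _ _ hd, Nat.div_eq_of_lt hmod, Nat.add_mul_mod_self_left, Nat.mod_mod]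
  exact ⟨by omega, rfl⟩

theorem slot_add_inj {d i j a c : ℕ} (hd : 0 < d) (ha : a = 0 ∨ a = d) (hc : c = 0 ∨ c = d)
    (h : slot d i + a = slot d j + c) : i = j := by
  have hi := slot_add_div_mod hd i ha
  have hj := slot_add_div_mod hd j hc
  rw [h] at hi
  rw [← Nat.div_add_mod i d, ← Nat.div_add_mod j d, ← hi.1, ← hi.2, hj.1, hj.2]

theorem IsPathSeq.isSupply (hk : 3 ≤ k) (hs : IsPathSeq (Red B) (2 * ((k - 2) * b)) s) :
    IsSupply k B ((k - 2) * b) (verts (2 * ((k - 2) * b)) s) fun j i => s (slot (k - 2) j + i) where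
  path j hj := by
    have := slot_add_lt (b := b) (i := k - 2) (by omega) hj le_rfl
    exact hs.shift _ (by omega)
  subset j hj := by
    rintro _ ⟨i, hi, rfl⟩
    exact mem_verts (slot_add_lt (by omega) hj (by omega))
  ends_ne i hi j hj hij a c ha hc h := by
    refine hij (slot_add_inj (by omega) ha hc (hs.inj _ ?_ _ ?_ h)) <;>
      exact slot_add_lt (by omega) (by assumption) (by omega)

theorem IsSupply.mono (h : IsSupply k B C V p) (hB : B ≤ B') : IsSupply k B' C V p :=
  ⟨fun j hj => (h.path j hj).red_mono hB, h.subset, h.ends_ne⟩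

theorem IsSupply.pred (h : IsSupply k B (C + 1) V p) : IsSupply k B C V p :=
  ⟨fun j hj => h.path j (by omega), fun j hj => h.subset j (by omega),
    fun i hi j hj => h.ends_ne i (by omega) j (by omega)⟩

theorem Forces.merge_of_hasColor (hk : 3 ≤ k) (hP : IsBlueForest B E (l₁ :: l₂ :: P))
    (hs : IsPathSeq (Red B) (k - 1) s) (hE : verts (k - 1) s ⊆ E)
    (hd : ∀ j, j = 0 ∨ j = k - 2 → s j ∉ (l₁ :: l₂ :: P).flatten) (hx : l₁.head? = some x)
    (hy : l₂.head? = some y) {c : Bool} (hcx : HasColor B c x (s 0)) (hcy : HasColor B c y (s 0))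
    (h : ∀ B', B ≤ B' → ∀ P' j, j = 0 ∨ j = k - 2 → IsBlueForest B' E P' →
      P'.length = P.length + 1 → P'.flatten.Perm (s j :: (l₁ :: l₂ :: P).flatten) →
      Forces (WinCC k n) t B') : Forces (WinCC k n) (t + 2) B :=
  .common_blue_neighbor hk hs (fun hmem => hP.head_notMem l₁ (by simp) x hx (hE hmem))
    (fun hmem => hP.head_notMem l₂ (by simp) y hy (hE hmem)) hcx hcy fun B' hB j hj hjx hjy =>
      h B' hB _ j hj ((hP.mono hB).join_vertex hx hy hjx hjy (hd j hj)) rfl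
        (flatten_reverse_append_perm [s j])

/- Two of the three heads have the same colour towards `s 0`. -/
theorem Forces.merge (hk : 3 ≤ k) (hP : IsBlueForest B E P) (hlen : 3 ≤ P.length)
    (hs : IsPathSeq (Red B) (k - 1) s) (hE : verts (k - 1) s ⊆ E)
    (hd : ∀ j, j = 0 ∨ j = k - 2 → s j ∉ P.flatten)
    (h : ∀ B', B ≤ B' → ∀ P' j, j = 0 ∨ j = k - 2 → IsBlueForest B' E P' →
      P'.length + 1 = P.length → P'.flatten.Perm (s j :: P.flatten) →
      Forces (WinCC k n) t B') : Forces (WinCC k n) (t + 5) B := by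
  match P, hlen with
  | l₁ :: l₂ :: l₃ :: P, _ =>
  obtain ⟨x₁, -, hx₁, hE₁⟩ := hP.exists_head (l := l₁) (by simp)
  obtain ⟨x₂, -, hx₂, hE₂⟩ := hP.exists_head (l := l₂) (by simp)
  obtain ⟨x₃, -, hx₃, hE₃⟩ := hP.exists_head (l := l₃) (by simp)
  have hs₀ : s 0 ∈ E := hE (mem_verts (by omega))
  refine .ask_color x₁ (s 0) (ne_of_mem_of_not_mem hs₀ hE₁).symm fun c₁ B₁ hB₁ hc₁ => ?_
  refine .ask_color x₂ (s 0) (ne_of_mem_of_not_mem hs₀ hE₂).symm fun c₂ B₂ hB₂ hc₂ => ?_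
  refine .ask_color x₃ (s 0) (ne_of_mem_of_not_mem hs₀ hE₃).symm fun c₃ B₃ hB₃ hc₃ => ?_
  have hB := hB₁.trans (hB₂.trans hB₃)
  replace hc₁ := hc₁.mono (hB₂.trans hB₃)
  replace hc₂ := hc₂.mono hB₃
  have join : ∀ {c m₁ m₂ m₃ y₁ y₂}, (m₁ :: m₂ :: m₃ :: P).Perm (l₁ :: l₂ :: l₃ :: P) →
      m₁.head? = some y₁ → m₂.head? = some y₂ → HasColor B₃ c y₁ (s 0) → HasColor B₃ c y₂ (s 0) →
      Forces (WinCC k n) (t + 2) B₃ := fun hperm hy₁ hy₂ hc hc' =>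
    .merge_of_hasColor hk ((hP.mono hB).perm hperm.symm) (hs.red_mono hB) hE
      (fun j hj hmem => hd j hj (hperm.flatten.mem_iff.1 hmem)) hy₁ hy₂ hc hc'
      fun B' hB' P' j hj hP' hl hp =>
        h B' (hB.trans hB') P' j hj hP' (by simpa using hl) (hp.trans (hperm.flatten.cons _))
  by_cases h₁₂ : c₂ = c₁
  · subst h₁₂
    exact join (.refl _) hx₁ hx₂ hc₁ hc₂
  by_cases h₁₃ : c₃ = c₁
  · subst h₁₃
    exact join (.cons _ (.swap _ _ _)) hx₁ hx₃ hc₁ hc₃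
  obtain rfl : c₃ = c₂ := by rw [Bool.eq_not_iff.2 h₁₂, Bool.eq_not_iff.2 h₁₃]
  exact join ((List.Perm.cons _ (.swap _ _ _)).trans (.swap _ _ _)) hx₂ hx₃ hc₂ hc₃

theorem Forces.merge_all (hk : 3 ≤ k) (hP : IsBlueForest B E P) (hp : IsSupply k B C V p)
    (hlen : P.length ≤ C + 2) (hV : V ⊆ E)
    (hd : ∀ i < C, ∀ j, j = 0 ∨ j = k - 2 → p i j ∉ P.flatten)
    (h : ∀ B', B ≤ B' → ∀ P', IsBlueForest B' E P' → P'.length ≤ 2 →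
      P.flatten.length ≤ P'.flatten.length → (∀ x ∈ P'.flatten, x ∈ P.flatten ∨ x ∈ V) →
      Forces (WinCC k n) t B') : Forces (WinCC k n) (t + 5 * C) B := by
  induction C generalizing B P with
  | zero => exact h B le_rfl P hP hlen le_rfl fun x hx => Or.inl hx
  | succ C ih =>
    by_cases hlt : P.length ≤ C + 2
    · exact (ih hP hp.pred hlt (fun i hi => hd i (by omega)) h).mono (by omega)
    refine .merge (t := t + 5 * C) hk hP (by omega) (hp.path C (by omega))
      ((hp.subset C (by omega)).trans hV) (hd C (by omega)) fun B₁ hB₁ P₁ j hj hP₁ hl hperm => ?_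
    refine ih hP₁ (hp.mono hB₁).pred (by omega) (fun i hi a ha hmem => ?_)
      fun B' hB P' hP' hl' hle hsub => h B' (hB₁.trans hB) P' hP' hl' ?_ fun x hx => ?_
    · rw [hperm.mem_iff, List.mem_cons] at hmem
      exact hmem.elim (hp.ends_ne i (by omega) C (by omega) (by omega) a j ha hj)
        (hd i (by omega) a ha)
    · have := hperm.length_eq
      rw [List.length_cons] at this
      omega
    · refine (hsub x hx).elim (fun hx => ?_) Or.inr
      rw [hperm.mem_iff, List.mem_cons] at hx
      refine hx.symm.imp_right ?_
      rintro rfl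
      exact hp.subset C (by omega) (mem_verts (by omega))

end Merge

/-! ### Stacks -/

/-- The list of the first vertices of the lists in `S`. -/
def heads (S : List (List ℕ)) : List ℕ := S.map fun l => l.headD 0

/-- A stack: at most `k - 1` disjoint blue paths outside `E`, whose first vertices form a red path.
Builder grows it at a cost of two rounds per vertex. -/
structure IsStack (k : ℕ) (B : Board) (E : Set ℕ) (S : List (List ℕ)) : Prop where
  forest : IsBlueForest B E S
  chain : (heads S).IsChain (Red B)
  notMem : ∀ x ∈ S.flatten, x ∉ E
  length_le : S.length ≤ k - 1

section Stack

variable {k n t x : ℕ} {B B' : Board} {E : Set ℕ} {S S₀ : List (List ℕ)} {l z : List ℕ}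

theorem headD_of_head? (h : l.head? = some x) : l.headD 0 = x := by
  cases l <;> simp_all

theorem IsBlueForest.heads_subset (h : IsBlueForest B E S) : heads S ⊆ S.flatten := by
  intro x hx
  obtain ⟨l, hl, rfl⟩ := List.mem_map.1 hx
  obtain ⟨y, hy, hhead, -⟩ := h.exists_head hl
  rw [headD_of_head? hhead]
  exact List.mem_flatten_of_mem hl hy

theorem IsBlueForest.heads_nodup (h : IsBlueForest B E S) : (heads S).Nodup := by
  induction S with
  | nil => simp [heads]
  | cons l S ih =>
    obtain ⟨y, hy, hhead, -⟩ := h.exists_head (l := l) (by simp)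
    refine List.nodup_cons.2 ⟨fun hmem => ?_, ih h.tail⟩
    have hhd : l.headD 0 ∈ heads S := hmem
    rw [headD_of_head? hhead] at hhd
    exact h.disjoint hy (h.tail.heads_subset hhd)

theorem Forces.absorb (hS : IsBlueForest B E (l :: S)) (hchain : (heads S).IsChain (Red B))
    (hE : ∀ x ∈ (l :: S).flatten, x ∉ E) (hlen : S.length < k - 1)
    (h : ∀ B', B ≤ B' → ∀ S', IsStack k B' E S' → S'.flatten.Perm (l :: S).flatten →
      Forces (WinCC k n) (t + S'.length) B') : Forces (WinCC k n) (t + S.length + 2) B := by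
  induction S generalizing B l with
  | nil =>
    exact (h B le_rfl [l] ⟨hS, by simp [heads], hE, hlen⟩ (.refl _)).mono (by simp)
  | cons l' S ih =>
    obtain ⟨x, hxl, hx, -⟩ := hS.exists_head (l := l) (by simp)
    obtain ⟨y, hyl, hy, -⟩ := hS.exists_head (l := l') (by simp)
    rw [List.length_cons] at hlen
    have hxy : x ≠ y := fun hxy => hS.disjoint hxl (by simp [hxy, hyl])
    refine .ask x y hxy (fun B₁ hB₁ hr => ?_) fun B₁ hB₁ hb => ?_
    · have hchain' : (heads (l :: l' :: S)).IsChain (Red B₁) := by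
        refine List.isChain_cons_cons.2 ⟨?_, hchain.imp fun _ _ h => h.mono hB₁⟩
        change Red B₁ (l.headD 0) (l'.headD 0)
        rwa [headD_of_head? hx, headD_of_head? hy]
      exact (h B₁ hB₁ _ ⟨hS.mono hB₁, hchain', hE, hlen⟩ (.refl _)).mono (by simp; omega)
    · have hperm := flatten_reverse_append_perm (P := S) (l₁ := l) (l₂ := l') []
      refine ih ((hS.mono hB₁).join_adj hx hy hb) (hchain.tail.imp fun _ _ h => h.mono hB₁)
        (fun x hx => hE x (hperm.mem_iff.1 hx)) (by omega) fun B₂ hB₂ S' hS' hp => ?_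
      exact h B₂ (hB₁.trans hB₂) S' hS' (hp.trans hperm)

/- The heads of a full stack form a red path on `k - 1` vertices, so a vertex that is red to the
first head can be forced to be blue to the last one. -/
theorem Forces.push_of_full (hk : 3 ≤ k) (hS : IsStack k B E (l :: (S ++ [z])))
    (hlen : S.length + 2 = k - 1) (hx : x ∉ (l :: (S ++ [z])).flatten) (hxE : x ∉ E)
    (hr : Red B x (l.headD 0))
    (h : ∀ B', B ≤ B' → ∀ S', IsStack k B' E S' → S'.flatten.Perm (x :: (l :: (S ++ [z])).flatten) →
      Forces (WinCC k n) (t + S'.length) B') : Forces (WinCC k n) (t + k) B := by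
  have hheads : (heads (l :: (S ++ [z]))).length = k - 1 := by simp [heads, hlen]
  have hpath := isPathSeq_getD hS.forest.heads_nodup hS.chain
  rw [hheads] at hpath
  have hnotMem : x ∉ verts (k - 1) fun i => (heads (l :: (S ++ [z]))).getD i 0 := by
    rintro ⟨i, hi, rfl⟩
    exact hx (hS.forest.heads_subset (getD_mem (by omega)))
  refine Forces.mono (t := t + (k - 1) + 1) ?_ (by omega)
  refine .blue_to_far_end hk hpath hnotMem (by simpa [heads] using hr) fun B₁ hB₁ hb => ?_
  have hlast : (heads (l :: (S ++ [z]))).getD (k - 2) 0 = z.headD 0 := by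
    simp [heads, show k - 2 = S.length + 1 by omega]
  rw [hlast] at hb
  obtain ⟨w, -, hw, -⟩ := hS.forest.exists_head (l := z) (by simp)
  rw [headD_of_head? hw] at hb
  have hperm : (l :: (S ++ [z])).Perm (z :: l :: S) := List.perm_append_singleton z (l :: S)
  have hperm' : ((x :: z) :: l :: S).flatten.Perm (x :: (l :: (S ++ [z])).flatten) :=
    .cons _ hperm.flatten.symm
  have hforest : IsBlueForest B₁ E ((x :: z) :: l :: S) :=
    ((hS.forest.mono hB₁).perm hperm).cons_vertex hw hb.symm (hperm.flatten.mem_iff.not.1 hx) hxE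
  have hchain : (heads ((x :: z) :: l :: S)).IsChain (Red B₁) := by
    have hchain₀ : (heads (l :: S)).IsChain (Red B) :=
      List.IsChain.left_of_append (l₂ := heads [z]) (by simpa [heads] using hS.chain)
    exact List.isChain_cons_cons.2 ⟨hr.mono hB₁, hchain₀.imp fun _ _ h => h.mono hB₁⟩
  refine (h B₁ hB₁ _ ⟨hforest, hchain, fun y hy => ?_, by simp; omega⟩ hperm').mono (by simp; omega)
  rcases List.mem_cons.1 (hperm'.mem_iff.1 hy) with rfl | hy
  · exact hxE
  · exact hS.notMem y hy

theorem Forces.push (hk : 3 ≤ k) (hS : IsStack k B E S) (hx : x ∉ S.flatten) (hxE : x ∉ E)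
    (h : ∀ B', B ≤ B' → ∀ S', IsStack k B' E S' → S'.flatten.Perm (x :: S.flatten) →
      Forces (WinCC k n) (t + S'.length) B') : Forces (WinCC k n) (t + 2 + S.length) B := by
  have hE : ∀ y ∈ x :: S.flatten, y ∉ E := by
    rintro y (_ | ⟨_, hy⟩)
    exacts [hxE, hS.notMem y hy]
  match S with
  | [] =>
    refine (h B le_rfl [[x]] ⟨hS.forest.cons_singleton hx hxE, by simp [heads], hE, ?_⟩
      (.refl _)).mono (by simp)
    simp; omega
  | l :: S =>
    obtain ⟨y, hyl, hy, -⟩ := hS.forest.exists_head (l := l) (by simp)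
    have hlen := hS.length_le
    rw [List.length_cons] at hlen
    have hxy : x ≠ y := by
      rintro rfl
      exact hx (by simp [hyl])
    refine Forces.mono (t := t + S.length + 2 + 1) ?_ (by simp; omega)
    refine .ask x y hxy (fun B₁ hB₁ hr => ?_) fun B₁ hB₁ hb => ?_
    · replace hr : Red B₁ x (l.headD 0) := by rwa [headD_of_head? hy]
      have hS₁ : IsStack k B₁ E (l :: S) :=
        ⟨hS.forest.mono hB₁, hS.chain.imp fun _ _ h => h.mono hB₁, hS.notMem, hS.length_le⟩
      by_cases hlt : S.length + 1 < k - 1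
      · exact (h B₁ hB₁ ([x] :: l :: S) ⟨hS₁.forest.cons_singleton hx hxE,
          List.isChain_cons_cons.2 ⟨hr, hS₁.chain⟩, hE, hlt⟩ (.refl _)).mono (by simp; omega)
      · obtain ⟨S, z, rfl⟩ : ∃ S₀ z, S = S₀ ++ [z] :=
          ⟨S.dropLast, S.getLast (by rintro rfl; simp at hlt; omega),
            (List.dropLast_append_getLast _).symm⟩
        rw [List.length_append, List.length_singleton] at hlen hlt ⊢
        exact (Forces.push_of_full hk hS₁ (by omega) hx hxE hr fun B₂ hB₂ =>
          h B₂ (hB₁.trans hB₂)).mono (by omega)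
    · exact .absorb (l := x :: l) ((hS.forest.mono hB₁).cons_vertex hy hb hx hxE)
        (hS.chain.tail.imp fun _ _ h => h.mono hB₁) hE hlen fun B₂ hB₂ => h B₂ (hB₁.trans hB₂)

theorem Forces.stack (hk : 3 ≤ k) (hE : E.Finite) (r : ℕ) (hS : IsStack k B E S)
    (h : ∀ B', B ≤ B' → ∀ S', IsStack k B' E S' → S'.flatten.length = S.flatten.length + r →
      Forces (WinCC k n) t B') : Forces (WinCC k n) (t + 2 * r + S.length) B := by
  induction r generalizing B S with
  | zero => exact (h B le_rfl S hS rfl).mono (by omega)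
  | succ r ih =>
    obtain ⟨x, hx⟩ := (hE.union (List.finite_toSet S.flatten)).exists_notMem
    rw [Set.mem_union, not_or] at hx
    refine .push (t := t + 2 * r) hk hS hx.2 hx.1 fun B₁ hB₁ S₁ hS₁ hperm => ?_
    refine ih hS₁ fun B₂ hB₂ S₂ hS₂ hlen => h B₂ (hB₁.trans hB₂) S₂ hS₂ ?_
    rw [hlen, hperm.length_eq, List.length_cons]
    omega

theorem IsStack.nil : IsStack k B E [] := ⟨.nil, by simp [heads], by simp, by simp⟩

end Stack

/-- The number of hub vertices that the endgame uses: `3 * k + 1` vertices to close a cycle, and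
`(k - 2) * b` red paths for merging. -/
def hubSize (k b : ℕ) : ℕ := 3 * k + 1 + 2 * ((k - 2) * b)

section Closing

variable {k n t b : ℕ} {B : Board} {h p : ℕ → ℕ} {P : List (List ℕ)} {l l₁ l₂ c K K₁ K₂ : List ℕ}
  {u v u₁ v₁ u₂ v₂ : ℕ}

theorem IsPathSeq.notMem_verts_shift {r : ℕ → ℕ → Prop} {H a m a' m' x : ℕ} (hh : IsPathSeq r H h)
    (ha : a + m ≤ H) (ha' : a' + m' ≤ H) (hd : a + m ≤ a' ∨ a' + m' ≤ a)
    (hx : x ∈ verts m fun i => h (a + i)) : x ∉ verts m' fun i => h (a' + i) := by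
  rintro ⟨j, hj, hxj⟩
  obtain ⟨i, hi, rfl⟩ := hx
  have := hh.inj _ (by omega) _ (by omega) hxj
  omega

theorem forces_of_link (hk : 3 ≤ k) (hko : Odd k) (hn : 3 * k ≤ n) {S : Set ℕ} {a d : ℕ}
    (hl : IsBluePath B l) (ha : l.head? = some a) (hd : l.getLast? = some d)
    (hc : IsLink B S d a c) (hS : ∀ x ∈ S, x ∉ l) (hlen : n ≤ l.length + 1)
    (hp : IsPathSeq (Red B) (k - 1) p) (hlp : ∀ x ∈ l, x ∉ verts (k - 1) p)
    (hSp : ∀ x ∈ S, x ∉ verts (k - 1) p) : Forces (WinCC k n) (closingCost k n) B := by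
  have hchain := hc.chain
  rw [List.cons_append, List.isChain_cons, List.isChain_append] at hchain
  obtain ⟨hfirst, hchain, -, hlast⟩ := hchain
  have he := List.getLast?_eq_getLast_of_ne_nil hc.ne_nil
  have hf := List.head?_eq_some_head hc.ne_nil
  have hpos := List.length_pos_of_ne_nil hc.ne_nil
  have hlc : IsBluePath B (l ++ c) := hl.append ⟨hc.nodup, hchain⟩
    (fun x hx hxc => hS x (hc.mem x hxc) hx) hd hf (by simpa [hf] using hfirst)
  refine forces_of_long_blue_cycle hk hko hn hlc (by simp; omega) (g := a)
    (q := c.getLast hc.ne_nil) (by simp [ha]) (by simp [he]) (by simpa [he] using hlast) hp ?_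
  intro x hx
  exact (List.mem_append.1 hx).elim (hlp x) fun hxc => hSp x (hc.mem x hxc)

theorem forces_of_path_and_connector (hk : 3 ≤ k) (hko : Odd k) (hn : 3 * k ≤ n)
    (hh : IsPathSeq (Red B) (2 * k) h) (hl : IsBluePath B l) (hlen : n ≤ l.length + 1)
    (hK : IsConnector B u v K) (hd : ∀ x ∈ l, x ∉ verts (2 * k) h) (hlK : l.Disjoint K)
    (hKh : ∀ x ∈ K, x ∉ verts (2 * k) h) : Forces (WinCC k n) (closingCost k n + 19) B := by
  have hne : l ≠ [] := List.ne_nil_of_length_pos (by omega)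
  have hfirst : verts (k - 1) h ⊆ verts (2 * k) h := verts_mono h (by omega)
  have hsecond := verts_shift_subset (m := 2 * k) (m' := k + 1) (o := k - 1) h (by omega)
  refine .link hk hko (hh.shift (m' := k + 1) (k - 1) (by omega))
    (fun hx => hd _ (List.getLast_mem hne) (hsecond hx))
    (fun hx => hd _ (List.head_mem hne) (hsecond hx)) hK (fun x hx hx' => hKh x hx (hsecond hx'))
    fun B' hB c hc => ?_
  refine forces_of_link hk hko hn (hl.mono hB) (List.head?_eq_some_head hne)
    (List.getLast?_eq_getLast_of_ne_nil hne) hc ?_ hlen ((hh.take (by omega)).red_mono hB)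
    (fun x hx hx' => hd x hx (hfirst hx')) ?_
  · rintro x (hx | hx) hxl
    exacts [hd x hxl (hsecond hx), hlK hxl hx]
  · rintro x (hx | hx)
    · simpa using hh.notMem_verts_shift (a' := 0) (by omega) (by omega) (by omega) hx
    · exact fun hx' => hKh x hx (hfirst hx')

theorem forces_of_two_paths_and_connectors (hk : 3 ≤ k) (hko : Odd k) (hn : 3 * k ≤ n)
    (hh : IsPathSeq (Red B) (3 * k + 1) h) (hl₁ : IsBluePath B l₁) (hl₂ : IsBluePath B l₂)
    (hl : l₁.Disjoint l₂) (hne₁ : l₁ ≠ []) (hne₂ : l₂ ≠ []) (hlen : n ≤ l₁.length + l₂.length + 1)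
    (hK₁ : IsConnector B u₁ v₁ K₁) (hK₂ : IsConnector B u₂ v₂ K₂) (hK : K₁.Disjoint K₂)
    (hd : ∀ x ∈ l₁ ++ l₂, x ∉ verts (3 * k + 1) h) (hlK₁ : (l₁ ++ l₂).Disjoint K₁)
    (hlK₂ : (l₁ ++ l₂).Disjoint K₂) (hKh₁ : ∀ x ∈ K₁, x ∉ verts (3 * k + 1) h)
    (hKh₂ : ∀ x ∈ K₂, x ∉ verts (3 * k + 1) h) :
    Forces (WinCC k n) (closingCost k n + 38) B := by
  have hfirst : verts (2 * k) h ⊆ verts (3 * k + 1) h := verts_mono h (by omega)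
  have hlast := verts_shift_subset (m := 3 * k + 1) (m' := k + 1) (o := 2 * k) h (by omega)
  have hd₁ : ∀ x ∈ l₁, x ∉ verts (3 * k + 1) h := fun x hx => hd x (by simp [hx])
  have hd₂ : ∀ x ∈ l₂, x ∉ verts (3 * k + 1) h := fun x hx => hd x (by simp [hx])
  rw [List.disjoint_append_left] at hlK₁ hlK₂
  refine .link (t := closingCost k n + 19) hk hko (hh.shift (m' := k + 1) (2 * k) (by omega))
    (fun hx => hd₁ _ (List.getLast_mem hne₁) (hlast hx))
    (fun hx => hd₂ _ (List.head_mem hne₂) (hlast hx)) hK₁ (fun x hx hx' => hKh₁ x hx (hlast hx'))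
    fun B' hB c hc => ?_
  have hlink : IsBluePath B' (l₁ ++ (c ++ l₂)) := by
    refine (hl₁.mono hB).append_link (hl₂.mono hB) (List.getLast?_eq_getLast_of_ne_nil hne₁)
      (List.head?_eq_some_head hne₂) hc hl ?_
    rintro x (hx | hx)
    · exact ⟨fun hx' => hd₁ x hx' (hlast hx), fun hx' => hd₂ x hx' (hlast hx)⟩
    · exact ⟨fun hx' => hlK₁.1 hx' hx, fun hx' => hlK₁.2 hx' hx⟩
  refine forces_of_path_and_connector hk hko hn ((hh.take (by omega)).red_mono hB) hlink
    (by simp only [List.length_append]; omega) (hK₂.mono hB) ?_ ?_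
    fun x hx hx' => hKh₂ x hx (hfirst hx')
  · simp only [List.mem_append]
    rintro x (hx | hx | hx) hx'
    · exact hd₁ x hx (hfirst hx')
    · rcases hc.mem x hx with hx | hx
      · exact hh.notMem_verts_shift (m' := 2 * k) (a' := 0) (by omega) (by omega) (by omega) hx
          (by simpa using hx')
      · exact hKh₁ x hx (hfirst hx')
    · exact hd₂ x hx (hfirst hx')
  · refine List.disjoint_append_left.2 ⟨hlK₂.1,
      List.disjoint_append_left.2 ⟨fun x hx => ?_, hlK₂.2⟩⟩
    rcases hc.mem x hx with hx | hx
    exacts [fun hx' => hKh₂ x hx' (hlast hx), fun hx' => hK hx hx']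

theorem forces_of_forest_and_connectors (hk : 3 ≤ k) (hko : Odd k) (hn : 3 * k ≤ n) {E : Set ℕ}
    (hh : IsPathSeq (Red B) (3 * k + 1) h) (hP : IsBlueForest B E P) (hP₂ : P.length ≤ 2)
    (hlen : n ≤ P.flatten.length + 1) (hK₁ : IsConnector B u₁ v₁ K₁)
    (hK₂ : IsConnector B u₂ v₂ K₂) (hK : K₁.Disjoint K₂)
    (hd : ∀ x ∈ P.flatten, x ∉ verts (3 * k + 1) h) (hPK₁ : P.flatten.Disjoint K₁)
    (hPK₂ : P.flatten.Disjoint K₂) (hKh₁ : ∀ x ∈ K₁, x ∉ verts (3 * k + 1) h)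
    (hKh₂ : ∀ x ∈ K₂, x ∉ verts (3 * k + 1) h) :
    Forces (WinCC k n) (closingCost k n + 38) B := by
  match P with
  | [] =>
    rw [List.flatten_nil, List.length_nil] at hlen
    omega
  | [l] =>
    have hsub : verts (2 * k) h ⊆ verts (3 * k + 1) h := verts_mono h (by omega)
    rw [List.flatten_singleton] at *
    exact (forces_of_path_and_connector hk hko hn (hh.take (by omega)) (hP.isBluePath (by simp))
      hlen hK₁ (fun x hx hx' => hd x hx (hsub hx')) hPK₁
      fun x hx hx' => hKh₁ x hx (hsub hx')).mono (by omega)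
  | [l₁, l₂] =>
    simp only [List.flatten_cons, List.flatten_nil, List.append_nil] at *
    exact forces_of_two_paths_and_connectors hk hko hn hh (hP.isBluePath (by simp))
      (hP.isBluePath (by simp)) (by simpa using hP.disjoint) (hP.ne_nil _ (by simp))
      (hP.ne_nil _ (by simp)) (by simpa using hlen) hK₁ hK₂ hK hd hPK₁ hPK₂ hKh₁ hKh₂
  | _ :: _ :: _ :: _ => simp at hP₂

theorem Forces.merge_hub (hk : 3 ≤ k) (hh : IsPathSeq (Red B) (hubSize k b) h)
    (hP : IsBlueForest B (verts (hubSize k b) h) P)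
    (hd : ∀ x ∈ P.flatten, x ∉ verts (hubSize k b) h) (hlen : P.length ≤ (k - 2) * b + 2)
    (hmerge : ∀ B', B ≤ B' → ∀ P', IsBlueForest B' (verts (hubSize k b) h) P' → P'.length ≤ 2 →
      P.flatten.length ≤ P'.flatten.length →
      (∀ x ∈ P'.flatten, x ∈ P.flatten ∨ x ∈ verts (hubSize k b) h) →
      (∀ x ∈ P'.flatten, x ∉ verts (3 * k + 1) h) → Forces (WinCC k n) t B') :
    Forces (WinCC k n) (t + 5 * ((k - 2) * b)) B := by
  have hs := hh.shift (m' := 2 * ((k - 2) * b)) (3 * k + 1) le_rfl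
  have hsub := verts_shift_subset (m' := 2 * ((k - 2) * b)) (o := 3 * k + 1) h
    (le_refl (hubSize k b))
  have hsupply := hs.isSupply hk
  refine .merge_all hk hP hsupply hlen hsub (fun i hi j hj hmem => ?_)
    fun B' hB P' hP' hlen' hle hmem => hmerge B' hB P' hP' hlen' hle
      (fun x hx => (hmem x hx).imp_right (hsub ·)) fun x hx hxh => ?_
  · exact hd _ hmem (hsub (hsupply.subset i hi (mem_verts (by omega))))
  · rcases hmem x hx with hx | hx
    · exact hd x hx (verts_mono h (Nat.le_add_right ..) hxh)
    · exact hh.notMem_verts_shift (m' := 3 * k + 1) (a' := 0) le_rfl (by rw [hubSize]; omega)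
        (by omega) hx (by simpa using hxh)

theorem forces_of_hub_of_forest (hk : 3 ≤ k) (hko : Odd k) (hn : 3 * k ≤ n)
    (hh : IsPathSeq (Red B) (hubSize k b) h) (hP : IsBlueForest B (verts (hubSize k b) h) P)
    (hd : ∀ x ∈ P.flatten ++ (K₁ ++ K₂), x ∉ verts (hubSize k b) h)
    (hK₁ : IsConnector B u₁ v₁ K₁) (hK₂ : IsConnector B u₂ v₂ K₂) (hK : K₁.Disjoint K₂)
    (hPK : P.flatten.Disjoint (K₁ ++ K₂)) (hC : P.length ≤ (k - 2) * b + 2)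
    (hlen : n ≤ P.flatten.length + 1) :
    Forces (WinCC k n) (closingCost k n + 38 + 5 * ((k - 2) * b)) B := by
  simp only [List.mem_append] at hd
  rw [List.disjoint_append_right] at hPK
  have hsub : verts (3 * k + 1) h ⊆ verts (hubSize k b) h := verts_mono h (Nat.le_add_right ..)
  refine .merge_hub hk hh hP (fun x hx => hd x (by simp [hx])) hC
    fun B' hB P' hP' hP₂ hle hmem hd' => ?_
  refine forces_of_forest_and_connectors hk hko hn ((hh.take (Nat.le_add_right ..)).red_mono hB)
    hP' hP₂ (by omega) (hK₁.mono hB) (hK₂.mono hB) hK hd' (fun x hx hxK => ?_) (fun x hx hxK => ?_)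
    (fun x hx hx' => hd x (by simp [hx]) (hsub hx')) fun x hx hx' => hd x (by simp [hx]) (hsub hx')
  · exact (hmem x hx).elim (hPK.1 · hxK) (hd x (by simp [hxK]))
  · exact (hmem x hx).elim (hPK.2 · hxK) (hd x (by simp [hxK]))

theorem forces_of_hub_of_connectors (hk : 3 ≤ k) (hko : Odd k) (hn : 3 * k ≤ n)
    (hh : IsPathSeq (Red B) (hubSize k b) h) (hP : ∀ l ∈ P, l.IsChain (Blue B))
    (hK₁ : IsConnector B u₁ v₁ K₁) (hK₂ : IsConnector B u₂ v₂ K₂)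
    (hnd : (P.flatten ++ (K₁ ++ K₂)).Nodup)
    (hd : ∀ x ∈ P.flatten ++ (K₁ ++ K₂), x ∉ verts (hubSize k b) h)
    (hC : P.length + (k - 1) ≤ (k - 2) * b + 2) (r : ℕ) (hr : n ≤ P.flatten.length + r + 1) :
    Forces (WinCC k n) (closingCost k n + 38 + 5 * ((k - 2) * b) + 2 * r) B := by
  obtain ⟨hndP, hndK, hPK⟩ := List.nodup_append'.1 hnd
  obtain ⟨P₀, hP₀, hP₀l, hP₀f⟩ := exists_isBlueForest hP hndP fun x hx => hd x (by simp [hx])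
  rw [← hP₀f] at hr hd hPK
  have hfin : (verts (hubSize k b) h ∪ {x | x ∈ P₀.flatten ++ (K₁ ++ K₂)}).Finite :=
    (verts_finite _ h).union (List.finite_toSet _)
  refine .stack hk hfin r .nil fun B' hB S hS hlen => ?_
  have hSd : ∀ x ∈ S.flatten, x ∉ verts (hubSize k b) h ∧ x ∉ P₀.flatten ++ (K₁ ++ K₂) :=
    fun x hx => not_or.1 (hS.notMem x hx)
  have hSl := hS.length_le
  simp only [List.mem_append, not_or] at hSd hd
  refine forces_of_hub_of_forest (P := P₀ ++ S) hk hko hn (hh.red_mono hB) ((hP₀.mono hB).append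
    (hS.forest.mono_set Set.subset_union_left) fun x hx hxS => (hSd x hxS).2.1 hx) ?_
    (hK₁.mono hB) (hK₂.mono hB) (List.nodup_append'.1 hndK).2.2 ?_ ?_ ?_
  · simp only [List.flatten_append, List.mem_append]
    rintro x ((hx | hx) | hx)
    exacts [hd x (Or.inl hx), (hSd x hx).1, hd x (Or.inr hx)]
  · rw [List.flatten_append, List.disjoint_append_left]
    exact ⟨hPK, fun x hx => by simpa using (hSd x hx).2.2⟩
  · rw [List.length_append]; omega
  · rw [List.flatten_append, List.length_append, hlen, List.flatten_nil, List.length_nil]; omega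

end Closing

/-! ### Closing two blue paths -/

section HubClosing

variable {k n t m b : ℕ} {B : Board} {h s : ℕ → ℕ} {P : List (List ℕ)} {l l₁ l₂ c₁ c₂ : List ℕ}
  {a₁ a₂ e₁ e₂ g g' q q' : ℕ}

theorem IsPathSeq.verts_shift_subset_diff {r : ℕ → ℕ → Prop} {o m' : ℕ} (hh : IsPathSeq r m h)
    (ho : o + m' ≤ m) (ha : a₁ ≤ o) :
    verts m' (fun i => h (o + i)) ⊆ verts m h \ verts a₁ h := by
  intro x hx
  have hx' := hh.notMem_verts_shift (a' := 0) (m' := a₁) ho (by omega) (by omega) hx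
  exact ⟨verts_shift_subset h ho hx, by simpa using hx'⟩

theorem forces_of_two_links (hk : 3 ≤ k) (hko : Odd k) (hn : 3 * k ≤ n) {S₁ S₂ : Set ℕ}
    (hh : IsPathSeq (Red B) m h) (hm : k - 1 ≤ m) (hl₁ : IsBluePath B l₁) (hl₂ : IsBluePath B l₂)
    (ha₁ : l₁.head? = some a₁) (he₁ : l₁.getLast? = some e₁) (ha₂ : l₂.head? = some a₂)
    (he₂ : l₂.getLast? = some e₂) (hl : l₁.Disjoint l₂) (hd : ∀ x ∈ l₁ ++ l₂, x ∉ verts m h)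
    (hc₁ : IsLink B S₁ e₁ a₂ c₁) (hc₂ : IsLink B S₂ e₂ a₁ c₂)
    (hS₁ : S₁ ⊆ verts m h \ verts (k - 1) h) (hS₂ : S₂ ⊆ verts m h \ verts (k - 1) h)
    (hS : Disjoint S₁ S₂) (hlen : n ≤ l₁.length + l₂.length + 2) :
    Forces (WinCC k n) (closingCost k n) B := by
  have hsub : verts (k - 1) h ⊆ verts m h := verts_mono h hm
  have hc₁pos := List.length_pos_of_ne_nil hc₁.ne_nil
  rw [List.forall_mem_append] at hd
  have hpath : IsBluePath B (l₁ ++ (c₁ ++ l₂)) := hl₁.append_link hl₂ he₁ ha₂ hc₁ hl fun x hx =>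
    ⟨fun hx' => hd.1 x hx' (hS₁ hx).1, fun hx' => hd.2 x hx' (hS₁ hx).1⟩
  refine forces_of_link hk hko hn hpath (by simp [ha₁]) (by simp [he₂]) hc₂ (fun x hx => ?_)
    (by simp only [List.length_append]; omega) (hh.take hm) ?_ fun x hx => (hS₂ hx).2
  · simp only [List.mem_append, not_or]
    exact ⟨fun hx' => hd.1 x hx' (hS₂ hx).1, fun hx' => hS.notMem_of_mem_left (hc₁.mem x hx') hx,
      fun hx' => hd.2 x hx' (hS₂ hx).1⟩
  · simp only [List.forall_mem_append]
    exact ⟨fun x hx hx' => hd.1 x hx (hsub hx'), fun x hx => (hS₁ (hc₁.mem x hx)).2,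
      fun x hx hx' => hd.2 x hx (hsub hx')⟩

theorem forces_of_two_common_neighbors (hk : 3 ≤ k) (hko : Odd k) (hn : 3 * k ≤ n) {i j : ℕ}
    (hh : IsPathSeq (Red B) m h) (hl₁ : IsBluePath B l₁) (hl₂ : IsBluePath B l₂)
    (ha₁ : l₁.head? = some a₁) (he₁ : l₁.getLast? = some e₁) (ha₂ : l₂.head? = some a₂)
    (he₂ : l₂.getLast? = some e₂) (hl : l₁.Disjoint l₂) (hd : ∀ x ∈ l₁ ++ l₂, x ∉ verts m h)
    (hi : k - 1 ≤ i) (hj : k - 1 ≤ j) (him : i < m) (hjm : j < m) (hij : i ≠ j)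
    (h₁ : Blue B e₁ (h i)) (h₂ : Blue B a₂ (h i)) (h₃ : Blue B e₂ (h j)) (h₄ : Blue B a₁ (h j))
    (hlen : n ≤ l₁.length + l₂.length + 2) : Forces (WinCC k n) (closingCost k n) B := by
  have hub : ∀ i', k - 1 ≤ i' → i' < m → {h i'} ⊆ verts m h \ verts (k - 1) h := by
    rintro i' hi' him' _ rfl
    refine ⟨mem_verts him', fun ⟨o, ho, hio⟩ => ?_⟩
    have := hh.inj _ him' _ (by omega) hio
    omega
  exact forces_of_two_links hk hko hn hh (by omega) hl₁ hl₂ ha₁ he₁ ha₂ he₂ hl hd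
    (.one (Set.mem_singleton _) h₁ h₂) (.one (Set.mem_singleton _) h₃ h₄) (hub i hi him)
    (hub j hj hjm) (by simpa using fun hne => hij (hh.inj _ him _ hjm hne)) hlen

theorem Forces.cross_of_alternating (hk : 3 ≤ k) (hs : IsPathSeq (Red B) (k + 1) s)
    (hN : Alternating k B s g q) (hgg : g ≠ g') (hqq : q ≠ q') (hg : Red B g g')
    (hq : Red B q q') (hgs : g ∉ verts (k + 1) s) (hqs : q ∉ verts (k + 1) s)
    (hgs' : g' ∉ verts (k + 1) s) (hqs' : q' ∉ verts (k + 1) s)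
    (h : ∀ B', B ≤ B' → Blue B' q (s 1) → Blue B' g' (s 1) → Blue B' q' (s 2) →
      Blue B' g (s 2) → Forces (WinCC k n) t B') : Forces (WinCC k n) (t + 2) B := by
  refine .blue_of_red_red (t := t + 1) hk hs hgg hgs hgs' hg (i := 0 + (k - 2)) (j := 1)
    (by omega) (by omega) (by omega) hN.zero.red_right fun B₁ hB₁ hb₁ => ?_
  refine .blue_of_red_red hk (hs.red_mono hB₁) hqq hqs hqs' (hq.mono hB₁) (i := 1 + (k - 2))
    (j := 2) (by omega) (by omega) (by omega) (hN.one.red_right.mono hB₁) fun B₂ hB₂ hb₂ => ?_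
  have hB := hB₁.trans hB₂
  exact h B₂ hB (hN.one.blue_left.mono hB) (hb₁.mono hB₂) hb₂ (hN.two.blue_left.mono hB)

theorem forces_of_parallel_paths_of_alternating (hk : 3 ≤ k) (hko : Odd k) (hn : 3 * k ≤ n)
    (hh : IsPathSeq (Red B) (2 * k) h) (hl₁ : IsBluePath B l₁) (hl₂ : IsBluePath B l₂)
    (ha₁ : l₁.head? = some a₁) (he₁ : l₁.getLast? = some e₁) (ha₂ : l₂.head? = some a₂)
    (he₂ : l₂.getLast? = some e₂) (hl : l₁.Disjoint l₂)
    (hd : ∀ x ∈ l₁ ++ l₂, x ∉ verts (2 * k) h) (ha : Red B a₁ a₂) (he : Red B e₁ e₂)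
    (hN : Alternating k B (fun i => h (k - 1 + i)) a₁ e₁) (hlen : n ≤ l₁.length + 1) :
    Forces (WinCC k n) (closingCost k n + 2) B := by
  have ha₁l := List.mem_of_mem_head? ha₁
  have he₁l := List.mem_of_getLast? he₁
  have ha₂l := List.mem_of_mem_head? ha₂
  have he₂l := List.mem_of_getLast? he₂
  have hsub := verts_shift_subset (m := 2 * k) (m' := k + 1) (o := k - 1) h (by omega)
  have hseg : ∀ x ∈ l₁ ++ l₂, x ∉ verts (k + 1) fun i => h (k - 1 + i) :=
    fun x hx hx' => hd x hx (hsub hx')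
  rw [List.forall_mem_append] at hseg
  refine .cross_of_alternating hk (hh.shift (k - 1) (by omega)) hN (fun h' => hl ha₁l (h' ▸ ha₂l))
    (fun h' => hl he₁l (h' ▸ he₂l)) ha he (hseg.1 _ ha₁l) (hseg.1 _ he₁l) (hseg.2 _ ha₂l)
    (hseg.2 _ he₂l) fun B' hB h₁ h₂ h₃ h₄ => ?_
  exact forces_of_two_common_neighbors hk hko hn (hh.red_mono hB) (hl₁.mono hB) (hl₂.mono hB) ha₁
    he₁ ha₂ he₂ hl hd (by omega) (by omega) (by omega) (by omega) (by omega) h₁ h₂ h₃ h₄ (by omega)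

theorem forces_of_parallel_paths (hk : 3 ≤ k) (hko : Odd k) (hn : 3 * k ≤ n)
    (hh : IsPathSeq (Red B) (2 * k) h) (hl₁ : IsBluePath B l₁) (hl₂ : IsBluePath B l₂)
    (ha₁ : l₁.head? = some a₁) (he₁ : l₁.getLast? = some e₁) (ha₂ : l₂.head? = some a₂)
    (he₂ : l₂.getLast? = some e₂) (hl : l₁.Disjoint l₂)
    (hd : ∀ x ∈ l₁ ++ l₂, x ∉ verts (2 * k) h) (ha : Red B a₁ a₂) (he : Red B e₁ e₂)
    (hlen : n ≤ l₁.length + 1) : Forces (WinCC k n) (closingCost k n + 15) B := by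
  have hsub := hh.verts_shift_subset_diff (o := k - 1) (m' := k + 1) (by omega) le_rfl
  have hd₁ : ∀ x ∈ l₁, x ∉ verts (2 * k) h := (List.forall_mem_append.1 hd).1
  refine .link_or_alternating (t := closingCost k n + 2) (g := e₁) (q := a₁) hk
    (hh.shift (k - 1) (by omega)) (fun hx => hd₁ _ (List.mem_of_getLast? he₁) (hsub hx).1)
    (fun hx => hd₁ _ (List.mem_of_mem_head? ha₁) (hsub hx).1) (fun B' hB c hc => ?_) ?_
  · exact (forces_of_link hk hko hn (hl₁.mono hB) ha₁ he₁ hc (fun x hx hx' => hd₁ x hx' (hsub hx).1)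
      hlen ((hh.take (by omega)).red_mono hB)
      (fun x hx hx' => hd₁ x hx (verts_mono h (by omega) hx')) fun x hx => (hsub hx).2).mono
      (by omega)
  · rintro B' hB (hN | hN)
    · exact forces_of_parallel_paths_of_alternating hk hko hn (hh.red_mono hB) (hl₁.mono hB).reverse
        (hl₂.mono hB).reverse (by simpa) (by simpa) (by simpa) (by simpa) (by simpa)
        (by simpa using hd) (he.mono hB) (ha.mono hB) hN (by simpa)
    · exact forces_of_parallel_paths_of_alternating hk hko hn (hh.red_mono hB) (hl₁.mono hB)
        (hl₂.mono hB) ha₁ he₁ ha₂ he₂ hl hd (ha.mono hB) (he.mono hB) hN hlen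

variable {u₁ v₁ u₂ v₂ : ℕ} {K₁ K₂ : List ℕ}

theorem forces_of_two_connectors_of_alternating (hk : 3 ≤ k) (hko : Odd k) (hn : 3 * k ≤ n)
    (hh : IsPathSeq (Red B) m h) (hK₁ : IsConnector B u₁ v₁ K₁) (hK₂ : IsConnector B u₂ v₂ K₂)
    (hK : K₁.Disjoint K₂) (hd : ∀ x ∈ K₁ ++ K₂, x ∉ verts m h) {o : ℕ} (ho : k - 1 ≤ o)
    (hom : o + (k + 1) ≤ m) (hN : Alternating k B (fun i => h (o + i)) u₁ u₂)
    (hlen : n ≤ K₁.length + K₂.length + 2) : Forces (WinCC k n) (closingCost k n + 2) B := by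
  have hseg : ∀ x ∈ K₁ ++ K₂, x ∉ verts (k + 1) fun i => h (o + i) :=
    fun x hx hx' => hd x hx (verts_shift_subset h hom hx')
  rw [List.forall_mem_append] at hseg
  refine .cross_of_alternating hk (hh.shift o hom) hN hK₁.ne hK₂.ne hK₁.red hK₂.red
    (hseg.1 _ hK₁.head_mem) (hseg.2 _ hK₂.head_mem) (hseg.1 _ hK₁.last_mem)
    (hseg.2 _ hK₂.last_mem) fun B' hB h₁ h₂ h₃ h₄ => ?_
  exact forces_of_two_common_neighbors hk hko hn (hh.red_mono hB) (hK₁.mono hB).toIsBluePath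
    (hK₂.mono hB).toIsBluePath hK₁.head hK₁.last hK₂.head hK₂.last hK hd (by omega) (by omega)
    (by omega) (by omega) (by omega) h₂ h₁ h₃ h₄ hlen

theorem forces_of_two_connectors_of_link (hk : 3 ≤ k) (hko : Odd k) (hn : 3 * k ≤ n)
    (hh : IsPathSeq (Red B) (3 * k + 1) h) (hK₁ : IsConnector B u₁ v₁ K₁)
    (hK₂ : IsConnector B u₂ v₂ K₂) (hK : K₁.Disjoint K₂)
    (hd : ∀ x ∈ K₁ ++ K₂, x ∉ verts (3 * k + 1) h)
    (hc₁ : IsLink B (verts (k + 1) fun i => h (k - 1 + i)) u₁ u₂ c₁)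
    (hlen : n ≤ K₁.length + K₂.length + 2) : Forces (WinCC k n) (closingCost k n + 15) B := by
  have hd' := List.forall_mem_append.1 hd
  have hfirst := hh.verts_shift_subset_diff (o := k - 1) (m' := k + 1) (by omega) le_rfl
  have hlast := hh.verts_shift_subset_diff (o := 2 * k) (m' := k + 1) (a₁ := k - 1) (by omega)
    (by omega)
  refine .link_or_alternating (t := closingCost k n + 2) hk (hh.shift (2 * k) (by omega))
    (fun hx => hd'.2 _ hK₂.last_mem (hlast hx).1) (fun hx => hd'.1 _ hK₁.last_mem (hlast hx).1)
    (fun B' hB c hc => ?_) ?_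
  · exact (forces_of_two_links hk hko hn (hh.red_mono hB) (by omega)
      (hK₁.mono hB).reverse.toIsBluePath (hK₂.mono hB).toIsBluePath hK₁.reverse.head
      hK₁.reverse.last hK₂.head hK₂.last (by simpa) (by simpa using hd) (hc₁.mono hB) hc
      hfirst hlast (Set.disjoint_left.2 fun x hx => hh.notMem_verts_shift (by omega) (by omega)
        (by omega) hx) (by simpa)).mono (by omega)
  · rintro B' hB (hN | hN)
    · refine forces_of_two_connectors_of_alternating hk hko hn (hh.red_mono hB)
        (hK₂.mono hB).reverse (hK₁.mono hB).reverse (by simpa using hK.symm) (fun x hx => hd x ?_)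
        (by omega) (by omega) hN (by simp; omega)
      simpa [or_comm] using hx
    · exact forces_of_two_connectors_of_alternating hk hko hn (hh.red_mono hB)
        (hK₁.mono hB).reverse (hK₂.mono hB).reverse (by simpa) (by simpa using hd) (by omega)
        (by omega) hN (by simpa)

theorem forces_of_two_connectors (hk : 3 ≤ k) (hko : Odd k) (hn : 3 * k ≤ n)
    (hh : IsPathSeq (Red B) (3 * k + 1) h) (hK₁ : IsConnector B u₁ v₁ K₁)
    (hK₂ : IsConnector B u₂ v₂ K₂) (hK : K₁.Disjoint K₂)
    (hd : ∀ x ∈ K₁ ++ K₂, x ∉ verts (3 * k + 1) h) (hlen : n ≤ K₁.length + K₂.length + 2) :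
    Forces (WinCC k n) (closingCost k n + 28) B := by
  have hd' := List.forall_mem_append.1 hd
  have hsub := verts_shift_subset (m := 3 * k + 1) (m' := k + 1) (o := k - 1) h (by omega)
  refine .link_or_alternating (t := closingCost k n + 15) hk (hh.shift (k - 1) (by omega))
    (fun hx => hd'.1 _ hK₁.head_mem (hsub hx)) (fun hx => hd'.2 _ hK₂.head_mem (hsub hx))
    (fun B' hB c hc => forces_of_two_connectors_of_link hk hko hn (hh.red_mono hB) (hK₁.mono hB)
      (hK₂.mono hB) hK hd hc hlen) ?_
  rintro B' hB (hN | hN)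
  · exact (forces_of_two_connectors_of_alternating hk hko hn (hh.red_mono hB) (hK₁.mono hB)
      (hK₂.mono hB) hK hd le_rfl (by omega) hN hlen).mono (by omega)
  · refine (forces_of_two_connectors_of_alternating hk hko hn (hh.red_mono hB) (hK₂.mono hB)
      (hK₁.mono hB) hK.symm (fun x hx => hd x ?_) le_rfl (by omega) hN (by omega)).mono (by omega)
    simpa [or_comm] using hx

theorem forces_of_long_paths_of_common_neighbor (hk : 3 ≤ k) (hko : Odd k) (hn : 3 * k ≤ n) {i : ℕ}
    (hh : IsPathSeq (Red B) m h) (hl₁ : IsBluePath B l₁) (hl₂ : IsBluePath B l₂)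
    (he₁ : l₁.getLast? = some e₁) (ha₂ : l₂.head? = some a₂) (hl : l₁.Disjoint l₂)
    (hd : ∀ x ∈ l₁ ++ l₂, x ∉ verts m h) (hi : k - 1 ≤ i) (him : i < m) (h₁ : Blue B e₁ (h i))
    (h₂ : Blue B a₂ (h i)) (hlen : 2 * n - 3 ≤ l₁.length + l₂.length) :
    Forces (WinCC k n) (closingCost k n) B := by
  rw [List.forall_mem_append] at hd
  have hsub : verts (k - 1) h ⊆ verts m h := verts_mono h (by omega)
  refine forces_of_long_blue_path hk hko hn (hl₁.append_link hl₂ he₁ ha₂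
    (.one (Set.mem_singleton _) h₁ h₂) hl ?_) (by simp only [List.length_append]; omega)
    (hh.take (by omega)) ?_
  · rintro x rfl
    exact ⟨fun hx => hd.1 _ hx (mem_verts him), fun hx => hd.2 _ hx (mem_verts him)⟩
  · simp only [List.forall_mem_append, List.forall_mem_singleton]
    refine ⟨fun x hx hx' => hd.1 x hx (hsub hx'), fun ⟨j, hj, hij⟩ => ?_,
      fun x hx hx' => hd.2 x hx (hsub hx')⟩
    have := hh.inj _ him _ (by omega) hij
    omega

/- If the ends of the first path alternate along the hub, then either colour of the edge from the
second path to the hub gives a common blue neighbour with one of these ends. -/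
theorem forces_of_long_paths_of_alternating (hk : 3 ≤ k) (hko : Odd k) (hn : 3 * k ≤ n)
    (hh : IsPathSeq (Red B) (2 * k) h) (hl₁ : IsBluePath B l₁) (hl₂ : IsBluePath B l₂)
    (ha₁ : l₁.head? = some a₁) (he₁ : l₁.getLast? = some e₁) (hne : l₂ ≠ [])
    (hl : l₁.Disjoint l₂) (hd : ∀ x ∈ l₁ ++ l₂, x ∉ verts (2 * k) h)
    (hN : Alternating k B (fun i => h (k - 1 + i)) e₁ a₁)
    (hlen : 2 * n - 3 ≤ l₁.length + l₂.length) :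
    Forces (WinCC k n) (closingCost k n + 2) B := by
  have ha₂ := List.head?_eq_some_head hne
  have hx : l₂.head hne ∉ verts (2 * k) h := hd _ (by simp)
  refine .ask (t := closingCost k n + 1) (l₂.head hne) (h (k - 1 + 2))
    (ne_of_notMem_verts hx (by omega)) (fun B₁ hB₁ hr => ?_) fun B₁ hB₁ hb => ?_
  · refine .blue_of_red hk (hh.red_mono hB₁) hx (j := k - 1 + (2 + (k - 2))) (by omega) (by omega)
      (by omega) hr fun B₂ hB₂ hb => ?_
    have hB := hB₁.trans hB₂
    exact forces_of_long_paths_of_common_neighbor hk hko hn (hh.red_mono hB) (hl₁.mono hB).reverse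
      (hl₂.mono hB) (by simpa) ha₂ (by simpa) (by simpa using hd) (by omega) (by omega)
      (hN.two.blue_right.mono hB) hb (by rwa [List.length_reverse])
  · exact (forces_of_long_paths_of_common_neighbor hk hko hn (hh.red_mono hB₁) (hl₁.mono hB₁)
      (hl₂.mono hB₁) he₁ ha₂ hl hd (by omega) (by omega) (hN.two.blue_left.mono hB₁) hb hlen).succ

theorem forces_of_two_long_paths (hk : 3 ≤ k) (hko : Odd k) (hn : 3 * k ≤ n)
    (hh : IsPathSeq (Red B) (2 * k) h) (hl₁ : IsBluePath B l₁) (hl₂ : IsBluePath B l₂)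
    (hne : l₂ ≠ []) (hl : l₁.Disjoint l₂) (hd : ∀ x ∈ l₁ ++ l₂, x ∉ verts (2 * k) h)
    (hlen₁ : n ≤ l₁.length) (hlen : 2 * n - 3 ≤ l₁.length + l₂.length) :
    Forces (WinCC k n) (closingCost k n + 15) B := by
  have hd₁ : ∀ x ∈ l₁, x ∉ verts (2 * k) h := (List.forall_mem_append.1 hd).1
  have hne₁ : l₁ ≠ [] := List.ne_nil_of_length_pos (by omega)
  have ha := List.head?_eq_some_head hne₁
  have he := List.getLast?_eq_getLast_of_ne_nil hne₁
  have hsub := hh.verts_shift_subset_diff (o := k - 1) (m' := k + 1) (by omega) le_rfl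
  refine .link_or_alternating (t := closingCost k n + 2) hk (hh.shift (k - 1) (by omega))
    (fun hx => hd₁ _ (List.getLast_mem hne₁) (hsub hx).1)
    (fun hx => hd₁ _ (List.head_mem hne₁) (hsub hx).1) (fun B' hB c hc => ?_) ?_
  · exact (forces_of_link hk hko hn (hl₁.mono hB) ha he hc (fun x hx hx' => hd₁ x hx' (hsub hx).1)
      (by omega) ((hh.take (by omega)).red_mono hB)
      (fun x hx hx' => hd₁ x hx (verts_mono h (by omega) hx')) fun x hx => (hsub hx).2).mono
      (by omega)
  · rintro B' hB (hN | hN)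
    · exact forces_of_long_paths_of_alternating hk hko hn (hh.red_mono hB) (hl₁.mono hB)
        (hl₂.mono hB) ha he hne hl hd hN hlen
    · exact forces_of_long_paths_of_alternating hk hko hn (hh.red_mono hB) (hl₁.mono hB).reverse
        (hl₂.mono hB) (by simpa) (by simpa) hne (by simpa) (by simpa using hd) hN
        (by rwa [List.length_reverse])

theorem forces_of_long_forest (hk : 3 ≤ k) (hko : Odd k) (hn : 3 * k ≤ n) {E : Set ℕ}
    (hh : IsPathSeq (Red B) (2 * k) h) (hP : IsBlueForest B E P) (hP₂ : P.length ≤ 2)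
    (hd : ∀ x ∈ P.flatten, x ∉ verts (2 * k) h) (hlen : 2 * n - 1 ≤ P.flatten.length) :
    Forces (WinCC k n) (closingCost k n + 15) B := by
  match P with
  | [] =>
    rw [List.flatten_nil, List.length_nil] at hlen
    omega
  | [l] =>
    rw [List.flatten_singleton] at *
    exact (forces_of_long_blue_path hk hko hn (hP.isBluePath (by simp)) (by omega)
      (hh.take (by omega)) fun x hx hx' => hd x hx (verts_mono h (by omega) hx')).mono (by omega)
  | [l₁, l₂] =>
    have hl : l₁.Disjoint l₂ := by simpa using hP.disjoint
    simp only [List.flatten_cons, List.flatten_nil, List.append_nil, List.length_append] at *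
    rcases Nat.lt_or_ge l₁.length n with hlt | hge
    · refine forces_of_two_long_paths hk hko hn hh (hP.isBluePath (l := l₂) (by simp))
        (hP.isBluePath (l := l₁) (by simp)) (hP.ne_nil _ (by simp)) hl.symm (fun x hx => hd x ?_)
        (by omega) (by omega)
      simpa [or_comm] using hx
    · exact forces_of_two_long_paths hk hko hn hh (hP.isBluePath (by simp))
        (hP.isBluePath (by simp)) (hP.ne_nil _ (by simp)) hl hd hge (by omega)
  | _ :: _ :: _ :: _ => simp at hP₂

theorem forces_of_hub_of_long_paths (hk : 3 ≤ k) (hko : Odd k) (hn : 3 * k ≤ n)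
    (hh : IsPathSeq (Red B) (hubSize k b) h) (hP : ∀ l ∈ P, l.IsChain (Blue B))
    (hnd : P.flatten.Nodup) (hd : ∀ x ∈ P.flatten, x ∉ verts (hubSize k b) h)
    (hC : P.length ≤ (k - 2) * b + 2) (hlen : 2 * n - 1 ≤ P.flatten.length) :
    Forces (WinCC k n) (closingCost k n + 15 + 5 * ((k - 2) * b)) B := by
  obtain ⟨P₀, hP₀, hP₀l, hP₀f⟩ := exists_isBlueForest hP hnd hd
  rw [← hP₀f] at hd hlen
  refine .merge_hub hk hh hP₀ hd (by omega) fun B' hB P' hP' hP₂ hle _ hd' => ?_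
  exact forces_of_long_forest hk hko hn ((hh.take (by rw [hubSize]; omega)).red_mono hB) hP' hP₂
    (fun x hx hx' => hd' x hx (verts_mono h (by omega) hx')) (by omega)

end HubClosing

/-! ### Connectors -/

/-- A duplicate-free list of vertices avoiding `V`: the vertices in use, `V` being the hub. -/
structure NodupOutside (V : Set ℕ) (l : List ℕ) : Prop where
  nodup : l.Nodup
  notMem : ∀ x ∈ l, x ∉ V

namespace NodupOutside

variable {V V' : Set ℕ} {l l' : List ℕ} {m R y : ℕ} {h : ℕ → ℕ}

/- The default proof of `hle` covers the case that `l'` arises by permuting and deleting. -/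
theorem of_count (hl : NodupOutside V l) (hle : ∀ a, l'.count a ≤ l.count a := by
    intro a; simp only [List.count_append, List.count_cons, List.count_nil, List.count_reverse]
    omega) : NodupOutside V l' where
  nodup := List.nodup_iff_count_le_one.2 fun a =>
    (hle a).trans (List.nodup_iff_count_le_one.1 hl.nodup a)
  notMem _ hx := hl.notMem _ ((List.subperm_iff_count.2 hle).subset hx)

theorem mono (hl : NodupOutside V l) (hV : V' ⊆ V) : NodupOutside V' l :=
  ⟨hl.nodup, fun x hx h' => hl.notMem x hx (hV h')⟩

theorem exists_cons (hl : NodupOutside (verts m h) l) : ∃ x, NodupOutside (verts m h) (x :: l) := by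
  obtain ⟨x, hx⟩ := (l.finite_toSet.union (verts_finite m h)).exists_notMem
  rw [Set.mem_union, not_or] at hx
  exact ⟨x, List.nodup_cons.2 ⟨hx.1, hl.nodup⟩, List.forall_mem_cons.2 ⟨hx.2, hl.notMem⟩⟩

theorem cons_of_mem_verts_shift {r : ℕ → ℕ → Prop} (hh : IsPathSeq r (R + m) h)
    (hl : NodupOutside (verts (R + m) h) l) (hy : y ∈ verts m fun i => h (R + i)) :
    NodupOutside (verts R h) (y :: l) where
  nodup := List.nodup_cons.2 ⟨fun h' => hl.notMem y h' (verts_shift_subset h le_rfl hy), hl.nodup⟩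
  notMem := List.forall_mem_cons.2 ⟨(hh.verts_shift_subset_diff le_rfl le_rfl hy).2,
    (hl.mono (verts_mono h (by omega))).notMem⟩

end NodupOutside

section Events

variable {k n t T b R u v p q x y g g' u₁ v₁ u₂ v₂ : ℕ} {B : Board} {h s : ℕ → ℕ}
  {l l' F A D E K G P₁ P₂ P₃ K₁ K₂ : List ℕ}

theorem isChain_blue_mono {B' : Board} (hl : l.IsChain (Blue B)) (hB : B ≤ B') :
    l.IsChain (Blue B') := hl.imp fun _ _ h => h.mono hB

theorem isChain_blue_reverse (hl : l.IsChain (Blue B)) : l.reverse.IsChain (Blue B) :=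
  List.isChain_reverse.2 (hl.imp fun _ _ h => h.symm)

theorem isChain_cons_of_head? (hl : l.IsChain (Blue B)) (hp : l.head? = some p) (hx : Blue B x p) :
    (x :: l).IsChain (Blue B) :=
  List.isChain_cons.2 ⟨fun y hy => by rw [hp] at hy; cases hy; exact hx, hl⟩

/- A vertex `x` red to both `p` and `q` is blue to the hub or shifts its red hub neighbour onto
blue edges from both `p` and `q`; in the first case `q` decides in the same way. -/
theorem Forces.common_neighbor_of_red_red (hk : 3 ≤ k) (hs : IsPathSeq (Red B) (k - 1) s)
    (hxp : x ≠ p) (hxq : x ≠ q) (hx : x ∉ verts (k - 1) s) (hp : p ∉ verts (k - 1) s)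
    (hq : q ∉ verts (k - 1) s) (hrp : Red B x p) (hrq : Red B x q)
    (hxy : ∀ B', B ≤ B' → ∀ y ∈ verts (k - 1) s, Blue B' x y → Blue B' q y →
      Forces (WinCC k n) t B')
    (hpy : ∀ B', B ≤ B' → ∀ y ∈ verts (k - 1) s, Blue B' p y → Blue B' q y →
      Forces (WinCC k n) t B') :
    Forces (WinCC k n) (t + 5) B := by
  have tips_of_red {B' : Board} (hB : B ≤ B') {i j : ℕ} (hi : i < k - 1) (hj : j < k - 1)
      (hij : j = i + (k - 3) ∨ i = j + (k - 3)) (hr : Red B' x (s i)) :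
      Forces (WinCC k n) (t + 2) B' := by
    refine .blue_of_red_red hk (hs.red_mono hB) hxp hx hp (hrp.mono hB) hi hj hij hr
      fun B₁ hB₁ hb => ?_
    have hB' := hB.trans hB₁
    refine .blue_of_red_red hk (hs.red_mono hB') hxq hx hq (hrq.mono hB') hi hj hij (hr.mono hB₁)
      fun B₂ hB₂ hb₂ => ?_
    exact hpy B₂ (hB'.trans hB₂) _ (mem_verts hj) (hb.mono hB₂) hb₂
  refine .ask x (s 0) (ne_of_notMem_verts hx (by omega)) (fun B₁ hB₁ hr => ?_) fun B₁ hB₁ hb => ?_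
  · exact (tips_of_red hB₁ (i := 0) (j := k - 3) (by omega) (by omega) (by omega) hr).mono
      (by omega)
  refine .ask q (s 0) (ne_of_notMem_verts hq (by omega)) (fun B₂ hB₂ hr₂ => ?_)
    fun B₂ hB₂ hb₂ => ?_
  · have hB := hB₁.trans hB₂
    refine .ask x (s (k - 2)) (ne_of_notMem_verts hx (by omega)) (fun B₃ hB₃ hr₃ => ?_)
      fun B₃ hB₃ hb₃ => ?_
    · exact tips_of_red (hB.trans hB₃) (j := 1) (by omega) (by omega) (by omega) hr₃
    · refine .succ (.blue_of_red hk (hs.red_mono (hB.trans hB₃)) hq (j := k - 2) (by omega)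
        (by omega) (by omega) (hr₂.mono hB₃) fun B₄ hB₄ hb₄ => ?_)
      exact hxy B₄ ((hB.trans hB₃).trans hB₄) _ (mem_verts (by omega)) (hb₃.mono hB₄) hb₄
  · exact (hxy B₂ (hB₁.trans hB₂) _ (mem_verts (by omega)) (hb.mono hB₂) hb₂).mono (by omega)

theorem Forces.common_neighbor_from_hub (hk : 3 ≤ k) (hh : IsPathSeq (Red B) (R + (k - 1)) h)
    (hc : NodupOutside (verts (R + (k - 1)) h) (x :: l)) (hp : p ∈ l) (hq : q ∈ l)
    (hrp : Red B x p) (hrq : Red B x q)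
    (hxy : ∀ B', B ≤ B' → ∀ y, NodupOutside (verts R h) (y :: x :: l) → Blue B' x y → Blue B' q y →
      Forces (WinCC k n) t B')
    (hpy : ∀ B', B ≤ B' → ∀ y, NodupOutside (verts R h) (y :: x :: l) → Blue B' p y → Blue B' q y →
      Forces (WinCC k n) t B') :
    Forces (WinCC k n) (t + 5) B := by
  have hx := (List.nodup_cons.1 hc.nodup).1
  have hd {z : ℕ} (hz : z ∈ x :: l) : z ∉ verts (k - 1) fun i => h (R + i) :=
    fun h' => hc.notMem z hz (verts_shift_subset h le_rfl h')
  exact .common_neighbor_of_red_red hk (hh.shift R le_rfl) (ne_of_mem_of_not_mem hp hx).symm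
    (ne_of_mem_of_not_mem hq hx).symm (hd (by simp)) (hd (by simp [hp])) (hd (by simp [hq])) hrp hrq
    (fun B' hB y hy => hxy B' hB y (hc.cons_of_mem_verts_shift hh hy))
    fun B' hB y hy => hpy B' hB y (hc.cons_of_mem_verts_shift hh hy)

theorem isConnector_three (hnd : [x, y, g].Nodup) (hx : Blue B x y) (hg : Blue B g y)
    (hr : Red B x g) : IsConnector B x g [x, y, g] where
  nodup := hnd
  chain := by simp [hx, hg.symm]
  head := rfl
  last := rfl
  red := hr
  ne := by rintro rfl; simp at hnd

theorem isConnector_turn (hF : (A ++ g' :: D).IsChain (Blue B)) (hp : (A ++ g' :: D).head? = some p)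
    (hpy : Blue B p y) (hgy : Blue B g y) (hr : Red B g g')
    (hc : (g' :: (A.reverse ++ [y, g])).Nodup) :
    IsConnector B g' g (g' :: (A.reverse ++ [y, g])) := by
  have hrev : (g' :: A.reverse).IsChain (Blue B) := by
    rw [← List.singleton_append, ← List.append_assoc, List.isChain_append] at hF
    rw [← List.reverse_concat, List.isChain_reverse]
    exact hF.1.imp fun _ _ h => h.symm
  have hlast : (g' :: A.reverse).getLast? = some p := by
    rw [← List.reverse_concat, List.getLast?_reverse, ← hp]
    cases A <;> rfl
  refine ⟨⟨hc, ?_⟩, rfl, ?_, hr.symm, ?_⟩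
  · rw [← List.cons_append, List.isChain_append, hlast]
    exact ⟨hrev, by simp [hgy.symm], by simpa⟩
  · rw [← List.cons_append, List.getLast?_append]
    rfl
  · rintro rfl
    simp at hc

/-- The number of rounds, beyond two for each missing vertex, that Builder needs to finish from two
connectors and three blue paths. -/
def connectorsCost (k n b : ℕ) : ℕ := closingCost k n + 38 + 5 * ((k - 2) * b)

theorem forces_of_two_connectors_and_paths (hk : 3 ≤ k) (hko : Odd k) (hn : 3 * k ≤ n)
    (hb : k ≤ (k - 2) * b) (hh : IsPathSeq (Red B) (hubSize k b) h) (hP₁ : P₁.IsChain (Blue B))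
    (hP₂ : P₂.IsChain (Blue B)) (hP₃ : P₃.IsChain (Blue B)) (hK₁ : IsConnector B u₁ v₁ K₁)
    (hK₂ : IsConnector B u₂ v₂ K₂)
    (hc : NodupOutside (verts (hubSize k b) h) (P₁ ++ (P₂ ++ (P₃ ++ (K₁ ++ K₂)))))
    (ht : connectorsCost k n b ≤ t)
    (hlen : K₁.length + K₂.length + 3 ≤ n →
      2 * (n - 1 - (P₁.length + P₂.length + P₃.length)) + connectorsCost k n b ≤ t) :
    Forces (WinCC k n) t B := by
  rw [connectorsCost] at ht hlen
  rcases Nat.lt_or_ge n (K₁.length + K₂.length + 3) with hlt | hge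
  · have hR : 3 * k + 1 ≤ hubSize k b := by rw [hubSize]; omega
    have hcK : NodupOutside _ (K₁ ++ K₂) := (hc.mono (verts_mono h hR)).of_count
    exact (forces_of_two_connectors hk hko hn (hh.take hR) hK₁ hK₂
      (List.nodup_append'.1 hcK.nodup).2.2 hcK.notMem (by omega)).mono (by omega)
  · refine (forces_of_hub_of_connectors hk hko hn hh (P := [P₁, P₂, P₃]) ?_ hK₁ hK₂
      (by simpa using hc.nodup) (by simpa using hc.notMem)
      (by simp only [List.length_cons, List.length_nil]; omega)
      (n - 1 - (P₁.length + P₂.length + P₃.length)) ?_).mono ?_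
    · simp [hP₁, hP₂, hP₃]
    · simp only [List.flatten_cons, List.flatten_nil, List.append_nil, List.length_append]
      omega
    · have := hlen hge
      omega

/- Once a connector `K` is stored and the tips of a ladder `F`, `g :: E` have a common red
neighbour `x`, the two outcomes below complete a second connector. -/
theorem forces_of_apex_neighbor_and_connector (hk : 3 ≤ k) (hko : Odd k) (hn : 3 * k ≤ n)
    (hb : k ≤ (k - 2) * b) (hh : IsPathSeq (Red B) (hubSize k b) h) (hF : F.IsChain (Blue B))
    (hE : (g :: E).IsChain (Blue B)) (hK : IsConnector B u v K) (hG : G.IsChain (Blue B))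
    (hc : NodupOutside (verts (hubSize k b) h) (y :: x :: (F ++ (g :: E ++ (K ++ G)))))
    (hxy : Blue B x y) (hgy : Blue B g y) (hr : Red B x g) (ht : connectorsCost k n b ≤ t)
    (hlen : 3 * n + connectorsCost k n b ≤
      t + 5 + F.length + 2 * (g :: E).length + K.length + 2 * G.length) :
    Forces (WinCC k n) t B := by
  rw [List.length_cons] at hlen
  refine forces_of_two_connectors_and_paths hk hko hn hb hh hF (List.isChain_cons.1 hE).2 hG hK
    (isConnector_three hc.of_count.nodup hxy hgy hr) hc.of_count ht fun hw => ?_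
  simp only [List.length_cons, List.length_nil] at hw
  omega

theorem forces_of_tips_neighbor_and_connector (hk : 3 ≤ k) (hko : Odd k) (hn : 3 * k ≤ n)
    (hb : k ≤ (k - 2) * b) (hh : IsPathSeq (Red B) (hubSize k b) h)
    (hF : (A ++ g' :: D).IsChain (Blue B)) (hp : (A ++ g' :: D).head? = some p)
    (hE : (g :: E).IsChain (Blue B)) (hK : IsConnector B u v K) (hG : G.IsChain (Blue B))
    (hc : NodupOutside (verts (hubSize k b) h) (y :: (A ++ g' :: D ++ (g :: E ++ (K ++ G)))))
    (hpy : Blue B p y) (hgy : Blue B g y) (hr : Red B g g') (ht : connectorsCost k n b ≤ t)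
    (hlen : 3 * n + connectorsCost k n b ≤
      t + 5 + (A ++ g' :: D).length + 2 * (g :: E).length + K.length + 2 * G.length) :
    Forces (WinCC k n) t B := by
  refine forces_of_two_connectors_and_paths hk hko hn hb hh
    (List.isChain_cons.1 (List.isChain_append.1 hF).2.1).2 (List.isChain_cons.1 hE).2 hG hK
    (isConnector_turn hF hp hpy hgy hr hc.of_count.nodup) hc.of_count ht fun hw => ?_
  simp only [List.length_cons, List.length_nil, List.length_append, List.length_reverse] at hw hlen
  omega

theorem forces_of_apex_and_connector (hk : 3 ≤ k) (hko : Odd k) (hn : 3 * k ≤ n)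
    (hb : k ≤ (k - 2) * b) (hh : IsPathSeq (Red B) (hubSize k b + (k - 1)) h)
    (hF : (A ++ g' :: D).IsChain (Blue B)) (hp : (A ++ g' :: D).head? = some p)
    (hE : (g :: E).IsChain (Blue B)) (hK : IsConnector B u v K) (hG : G.IsChain (Blue B))
    (hc : NodupOutside (verts (hubSize k b + (k - 1)) h)
      (x :: (A ++ g' :: D ++ (g :: E ++ (K ++ G)))))
    (hxp : Red B x p) (hxg : Red B x g) (hr : Red B g g') (ht : connectorsCost k n b + 5 ≤ t)
    (hlen : 3 * n + connectorsCost k n b ≤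
      t + (A ++ g' :: D).length + 2 * (g :: E).length + K.length + 2 * G.length) :
    Forces (WinCC k n) t B := by
  obtain ⟨t, rfl⟩ := Nat.exists_eq_add_of_le' ((Nat.le_add_left 5 _).trans ht)
  refine .common_neighbor_from_hub hk hh hc
    (List.mem_append_left _ (List.mem_of_head? hp)) (by simp) hxp hxg
    (fun B₁ hB₁ y hy hb₁ hb₂ => ?_) fun B₁ hB₁ y hy hb₁ hb₂ => ?_
  all_goals have hh₁ := (hh.take (m' := hubSize k b) (by omega)).red_mono hB₁
  · exact forces_of_apex_neighbor_and_connector hk hko hn hb hh₁ (isChain_blue_mono hF hB₁)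
      (isChain_blue_mono hE hB₁) (hK.mono hB₁) (isChain_blue_mono hG hB₁) hy hb₁ hb₂
      (hxg.mono hB₁) (by omega) (by omega)
  · exact forces_of_tips_neighbor_and_connector hk hko hn hb hh₁ (isChain_blue_mono hF hB₁) hp
      (isChain_blue_mono hE hB₁) (hK.mono hB₁) (isChain_blue_mono hG hB₁) hy.of_count hb₁ hb₂
      (hr.mono hB₁) (by omega) (by omega)

end Events

/-! ### Ladders -/

/-- A ladder: the first and the last vertex of the blue path `S` are joined in red to the first and
the last vertex of a subpath `X` of the blue path `F = A ++ (X ++ C)`. That `F` and `S` are blue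
paths is a separate hypothesis. -/
structure IsLadder (B : Board) (F S A X C : List ℕ) (g' q' g q : ℕ) : Prop where
  eq : F = A ++ (X ++ C)
  head_left : X.head? = some g'
  last_left : X.getLast? = some q'
  head_right : S.head? = some g
  last_right : S.getLast? = some q
  red_head : Red B g g'
  red_last : Red B q q'
  left_eq_singleton : S = [q] → X = [q']

namespace IsLadder

variable {B B' : Board} {F S A X C : List ℕ} {g' q' g q x p : ℕ}

theorem mono (h : IsLadder B F S A X C g' q' g q) (hB : B ≤ B') :
    IsLadder B' F S A X C g' q' g q :=
  { h with red_head := h.red_head.mono hB, red_last := h.red_last.mono hB }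

theorem singleton (h : Red B x p) : IsLadder B (p :: F) [x] [] [p] F p p x x :=
  ⟨rfl, rfl, rfl, rfl, rfl, h, h, fun _ => rfl⟩

theorem cons_left (h : IsLadder B F S A X C g' q' g q) (x : ℕ) :
    IsLadder B (x :: F) S (x :: A) X C g' q' g q :=
  { h with eq := by rw [h.eq, List.cons_append] }

theorem cons_right (h : IsLadder B F S A X C g' q' g q) (hp : F.head? = some p) (hx : Red B x p) :
    IsLadder B F (x :: S) [] (A ++ X) C p q' x q where
  eq := by rw [h.eq, List.nil_append, List.append_assoc]
  head_left := by
    have hX := h.head_left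
    rw [h.eq] at hp
    cases X with
    | nil => simp at hX
    | cons a X => cases A <;> simpa using hp
  last_left := by rw [List.getLast?_append, h.last_left]; rfl
  head_right := rfl
  last_right := by rw [List.getLast?_cons, h.last_right]; rfl
  red_head := hx
  red_last := h.red_last
  left_eq_singleton hs := by
    have := h.head_right
    simp [(List.cons.inj hs).2] at this

theorem reverse (h : IsLadder B F S A X C g' q' g q) :
    IsLadder B F.reverse S.reverse C.reverse X.reverse A.reverse q' g' q g where
  eq := by rw [h.eq]; simp
  head_left := by rw [List.head?_reverse, h.last_left]
  last_left := by rw [List.getLast?_reverse, h.head_left]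
  head_right := by rw [List.head?_reverse, h.last_right]
  last_right := by rw [List.getLast?_reverse, h.head_right]
  red_head := h.red_last
  red_last := h.red_head
  left_eq_singleton hs := by
    obtain rfl : S = [g] := by simpa using congrArg List.reverse hs
    obtain rfl : g = q := by simpa using h.last_right
    obtain rfl := h.left_eq_singleton rfl
    obtain rfl : q' = g' := by simpa using h.head_left
    rfl

theorem exists_head (h : IsLadder B F S A X C g' q' g q) : ∃ p, F.head? = some p := by
  have hX := h.head_left
  rw [h.eq]
  cases X with
  | nil => simp at hX
  | cons a X => cases A <;> simp

theorem exists_eq_cons_left (h : IsLadder B F S A X C g' q' g q) : ∃ D, F = A ++ g' :: D := by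
  obtain ⟨X', rfl⟩ := List.head?_eq_some_iff.1 h.head_left
  exact ⟨X' ++ C, h.eq⟩

end IsLadder

/-- A property of ladders, given by a board and the two sides, which survives the growth of the
ladder at its tips. -/
structure LadderInvariant (I : Board → List ℕ → List ℕ → Prop) : Prop where
  mono {B B' F S} : I B F S → B ≤ B' → I B' F S
  cons_left {B F S} (x : ℕ) : I B F S → I B (x :: F) S
  cons_right {B F S x p} : I B F S → F.head? = some p → Red B x p → I B F (x :: S)
  isLadder {B F S} : I B F S → ∃ A X C g' q' g q, IsLadder B F S A X C g' q' g q

namespace LadderInvariant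

variable {I : Board → List ℕ → List ℕ → Prop}

theorem fixed_base (C : List ℕ) (q' q : ℕ) :
    LadderInvariant fun B F S => ∃ A X g' g, IsLadder B F S A X C g' q' g q where
  mono := by rintro B B' F S ⟨A, X, g', g, h⟩ hB; exact ⟨A, X, g', g, h.mono hB⟩
  cons_left := by rintro B F S x ⟨A, X, g', g, h⟩; exact ⟨_, _, _, _, h.cons_left x⟩
  cons_right := by
    rintro B F S x p ⟨A, X, g', g, h⟩ hp hx; exact ⟨_, _, _, _, h.cons_right hp hx⟩
  isLadder := by rintro B F S ⟨A, X, g', g, h⟩; exact ⟨_, _, _, _, _, _, _, h⟩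

theorem and_suffix (hI : LadderInvariant I) (Z : List ℕ) :
    LadderInvariant fun B F S => I B F S ∧ ∃ E, E ≠ [] ∧ S = E ++ Z where
  mono h hB := ⟨hI.mono h.1 hB, h.2⟩
  cons_left x h := ⟨hI.cons_left x h.1, h.2⟩
  cons_right := by
    rintro B F S x p ⟨h, E, -, rfl⟩ hp hx
    exact ⟨hI.cons_right h hp hx, x :: E, by simp, rfl⟩
  isLadder h := hI.isLadder h.1

theorem and_tail (hI : LadderInvariant I) :
    LadderInvariant fun B F S => I B F S ∧ (S.tail = [] ∨ I B F S.tail) where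
  mono h hB := ⟨hI.mono h.1 hB, h.2.imp_right fun h' => hI.mono h' hB⟩
  cons_left x h := ⟨hI.cons_left x h.1, h.2.imp_right fun h' => hI.cons_left x h'⟩
  cons_right h hp hx := ⟨hI.cons_right h.1 hp hx, Or.inr h.1⟩
  isLadder h := hI.isLadder h.1

end LadderInvariant

/-- The number of rounds Builder needs to finish once a ladder is long. -/
def ladderCost (k n b : ℕ) : ℕ := closingCost k n + 15 + 5 * ((k - 2) * b)

theorem ladderCost_le_connectorsCost (k n b : ℕ) : ladderCost k n b ≤ connectorsCost k n b := by
  rw [ladderCost, connectorsCost]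
  omega

section Ladder

variable {k n t b m : ℕ} {B : Board} {h : ℕ → ℕ} {F S Y A X C : List ℕ} {g' q' g q : ℕ}

theorem forces_of_ladder_of_long_right (hk : 3 ≤ k) (hko : Odd k) (hn : 3 * k ≤ n)
    (hm : hubSize k b ≤ m) (hh : IsPathSeq (Red B) m h) (hl : IsLadder B F S A X C g' q' g q)
    (hF : F.IsChain (Blue B)) (hS : S.IsChain (Blue B)) (hc : NodupOutside (verts m h) (F ++ S))
    (ht : ladderCost k n b ≤ t) (hlen : n ≤ S.length + 1) : Forces (WinCC k n) t B := by
  have hm₂ : 2 * k ≤ m := le_trans (by rw [hubSize]; omega) hm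
  have hX : X.IsChain (Blue B) := by
    rw [hl.eq, List.isChain_append, List.isChain_append] at hF
    exact hF.2.1.1
  have hSX : NodupOutside (verts (2 * k) h) (S ++ X) :=
    (hc.mono (verts_mono h hm₂)).of_count fun a => by
      simp only [hl.eq, List.count_append]; omega
  have hd := List.nodup_append'.1 hSX.nodup
  rw [ladderCost] at ht
  exact (forces_of_parallel_paths hk hko hn (hh.take hm₂) ⟨hd.1, hS⟩ ⟨hd.2.1, hX⟩ hl.head_right
    hl.last_right hl.head_left hl.last_left hd.2.2 hSX.notMem hl.red_head hl.red_last hlen).mono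
    (by omega)

theorem forces_of_long_chains (hk : 3 ≤ k) (hko : Odd k) (hn : 3 * k ≤ n) (hb : k ≤ (k - 2) * b)
    (hm : hubSize k b ≤ m) (hh : IsPathSeq (Red B) m h) (hF : F.IsChain (Blue B))
    (hS : S.IsChain (Blue B)) (hY : Y.IsChain (Blue B))
    (hc : NodupOutside (verts m h) (F ++ (S ++ Y))) (ht : ladderCost k n b ≤ t)
    (hlen : 2 * n ≤ F.length + S.length + Y.length + 1) : Forces (WinCC k n) t B := by
  refine (forces_of_hub_of_long_paths hk hko hn (hh.take hm) (P := [F, S, Y])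
    (by simp [hF, hS, hY]) (by simpa using hc.nodup)
    (by simpa using (hc.mono (verts_mono h hm)).notMem) ?_ ?_).mono ht
  · simp only [List.length_cons, List.length_nil]
    omega
  · simp only [List.flatten_cons, List.flatten_nil, List.length_append, List.append_nil]
    omega

/- A fresh vertex is compared with the tip of `F`, and with the tip of `S` only if that edge is
red. It therefore costs one round to lengthen `F` and two to lengthen `S`, so that
`t + F.length + 2 * S.length` is constant. -/
theorem Forces.extend_ladder (hk : 3 ≤ k) (hko : Odd k) (hn : 3 * k ≤ n) (hb : k ≤ (k - 2) * b)
    (hm : hubSize k b ≤ m) {I : Board → List ℕ → List ℕ → Prop} (hI : LadderInvariant I)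
    (hh : IsPathSeq (Red B) m h) (hIB : I B F S) (hF : F.IsChain (Blue B))
    (hS : S.IsChain (Blue B)) (hY : Y.IsChain (Blue B))
    (hc : NodupOutside (verts m h) (F ++ (S ++ Y))) (ht : ladderCost k n b ≤ t)
    (hlen : 3 * n + ladderCost k n b ≤ t + F.length + 2 * S.length + Y.length)
    (event : ∀ B' F' S' x p g t', B ≤ B' → I B' F' S' → F'.IsChain (Blue B') →
      S'.IsChain (Blue B') → NodupOutside (verts m h) (x :: (F' ++ (S' ++ Y))) →
      F'.head? = some p → S'.head? = some g → Red B' x p → Red B' x g →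
      F'.length + S'.length + Y.length + 2 ≤ 2 * n → S'.length + 2 ≤ n →
      t' + 2 + F'.length + 2 * S'.length = t + F.length + 2 * S.length →
      Forces (WinCC k n) t' B') :
    Forces (WinCC k n) t B := by
  induction hd : 2 * n - (F.length + S.length) using Nat.strong_induction_on
    generalizing B F S t with | _ d ih
  rcases Nat.lt_or_ge (F.length + S.length + Y.length + 1) (2 * n) with hFSY | hge
  swap
  · exact forces_of_long_chains hk hko hn hb hm hh hF hS hY hc ht hge
  obtain ⟨A, X, C, g', q', g, q, hl⟩ := hI.isLadder hIB
  rcases Nat.lt_or_ge (S.length + 1) n with hSn | hge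
  swap
  · exact forces_of_ladder_of_long_right hk hko hn hm hh hl hF hS hc.of_count ht hge
  obtain ⟨p, hp⟩ := hl.exists_head
  obtain ⟨x, hx⟩ := hc.exists_cons
  have hxl := (List.nodup_cons.1 hx.nodup).1
  have hxp : x ≠ p := fun h' =>
    hxl (h' ▸ List.mem_append_left _ (List.mem_of_head? hp))
  have hxg : x ≠ g := fun h' => hxl (h' ▸ List.mem_append_right _
    (List.mem_append_left _ (List.mem_of_head? hl.head_right)))
  obtain ⟨t, rfl⟩ : ∃ t', t = t' + 2 := ⟨t - 2, by omega⟩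
  refine .ask (t := t + 1) x p hxp (fun B₁ hB₁ hr => ?_) fun B₁ hB₁ hb₁ => ?_
  · refine .ask x g hxg (fun B₂ hB₂ hr₂ => ?_) fun B₂ hB₂ hb₂ => ?_
    all_goals
      have hB := hB₁.trans hB₂
      have hF₂ := isChain_blue_mono hF hB
      have hS₂ := isChain_blue_mono hS hB
      have hI₂ := hI.mono hIB hB
    · exact event B₂ F S x p g t hB hI₂ hF₂ hS₂ hx hp hl.head_right (hr.mono hB₂) hr₂ (by omega)
        (by omega) (by omega)
    · refine ih _ (by rw [List.length_cons]; omega) (hh.red_mono hB)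
        (hI.cons_right hI₂ hp (hr.mono hB₂)) hF₂ (isChain_cons_of_head? hS₂ hl.head_right hb₂)
        (isChain_blue_mono hY hB) hx.of_count (by omega) (by rw [List.length_cons]; omega)
        (fun B' F' S' x p g t' hB' hI' hF' hS' hc' hp hg hxp hxg h₁ h₂ h₃ =>
          event B' F' S' x p g t' (hB.trans hB') hI' hF' hS' hc' hp hg hxp hxg h₁ h₂
            (by rw [List.length_cons] at h₃; omega)) rfl
  · refine ih _ (by rw [List.length_cons]; omega) (hh.red_mono hB₁)
      (hI.cons_left x (hI.mono hIB hB₁)) (isChain_cons_of_head? (isChain_blue_mono hF hB₁) hp hb₁)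
      (isChain_blue_mono hS hB₁) (isChain_blue_mono hY hB₁) hx.of_count (by omega)
      (by rw [List.length_cons]; omega)
      (fun B' F' S' x p g t' hB' hI' hF' hS' hc' hp hg hxp hxg h₁ h₂ h₃ =>
        event B' F' S' x p g t' (hB₁.trans hB') hI' hF' hS' hc' hp hg hxp hxg h₁ h₂
          (by rw [List.length_cons] at h₃; omega)) rfl

theorem Forces.start_ladder (hk : 3 ≤ k) (hko : Odd k) (hn : 3 * k ≤ n) (hb : k ≤ (k - 2) * b)
    (hm : hubSize k b ≤ m) (hh : IsPathSeq (Red B) m h) (hF : F.IsChain (Blue B))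
    (hY : Y.IsChain (Blue B)) (hc : NodupOutside (verts m h) (F ++ Y)) (ht : ladderCost k n b ≤ t)
    (hlen : 3 * n + ladderCost k n b ≤ t + F.length + Y.length)
    (ladder : ∀ B' p F' x t', B ≤ B' → (p :: F').IsChain (Blue B') → Red B' x p →
      NodupOutside (verts m h) (p :: F' ++ ([x] ++ Y)) → ladderCost k n b ≤ t' →
      t' + (p :: F').length + 2 = t + F.length → Forces (WinCC k n) t' B') :
    Forces (WinCC k n) t B := by
  induction hd : 2 * n - F.length using Nat.strong_induction_on generalizing B F t with | _ d ih
  rcases Nat.lt_or_ge (F.length + Y.length + 1) (2 * n) with hFY | hge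
  swap
  · exact forces_of_long_chains hk hko hn hb hm hh hF (S := []) (by simp) hY (by simpa) ht
      (by simpa)
  obtain ⟨x, hx⟩ := hc.exists_cons
  obtain ⟨t, rfl⟩ : ∃ t', t = t' + 2 := ⟨t - 2, by omega⟩
  match F with
  | [] =>
    simp only [List.length_nil] at *
    exact (ih _ (by simp only [List.length_singleton]; omega) (t := t + 1) (F := [x]) hh (by simp)
      hY hx (by omega) (by simp only [List.length_singleton]; omega) ladder rfl).succ
  | p :: F =>
    have hxp : x ≠ p := fun h' => (List.nodup_cons.1 hx.nodup).1 (by simp [h'])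
    refine .ask (t := t + 1) x p hxp (fun B₁ hB₁ hr => ?_) fun B₁ hB₁ hb₁ => ?_
    · refine (ladder B₁ p F x t hB₁ (isChain_blue_mono hF hB₁) hr hx.of_count ?_ ?_).mono
        (by omega)
      all_goals simp only [List.length_cons] at *; omega
    · refine ih _ ?_ (F := x :: p :: F) (hh.red_mono hB₁)
        (isChain_cons_of_head? (isChain_blue_mono hF hB₁) rfl hb₁) (isChain_blue_mono hY hB₁) hx ?_
        ?_ (fun B' p F' x t' hB' hF' hr hc' ht' h₁ =>
          ladder B' p F' x t' (hB₁.trans hB') hF' hr hc' ht' ?_) rfl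
      all_goals simp only [List.length_cons] at *; omega

end Ladder

section LadderEnd

variable {k n t b u v e g q g' q' p x y : ℕ} {B : Board} {h : ℕ → ℕ}
  {F S E Z Y K G A X C : List ℕ}

theorem forces_of_ladder_and_connector (hk : 3 ≤ k) (hko : Odd k) (hn : 3 * k ≤ n)
    (hb : k ≤ (k - 2) * b) (hh : IsPathSeq (Red B) (hubSize k b + (k - 1)) h)
    (hl : IsLadder B F (E ++ Z) A X C g' q' g q) (hE : E ≠ []) (hF : F.IsChain (Blue B))
    (hS : (E ++ Z).IsChain (Blue B)) (hY : Y.IsChain (Blue B)) (hK : IsConnector B u v K)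
    (hG : G.IsChain (Blue B))
    (hc : NodupOutside (verts (hubSize k b + (k - 1)) h) (F ++ (E ++ Z ++ Y)))
    (hZ : ∀ a, K.count a + G.count a ≤ Z.count a + Y.count a) (ht : ladderCost k n b ≤ t)
    (hlen₁ : 3 * n + connectorsCost k n b + 3 ≤
      t + F.length + 2 * (E.length + Z.length) + Y.length)
    (hlen₂ : 3 * n + connectorsCost k n b + 2 ≤
      t + F.length + 2 * E.length + K.length + 2 * G.length) :
    Forces (WinCC k n) t B := by
  have hcost := ladderCost_le_connectorsCost k n b
  refine .extend_ladder hk hko hn hb (by omega) ((LadderInvariant.fixed_base C q' q).and_suffix Z)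
    hh ⟨⟨A, X, g', g, hl⟩, E, hE, rfl⟩ hF hS hY hc ht (by rw [List.length_append]; omega) ?_
  rintro B' F' S' x p g₁ t' hB ⟨⟨A', X', g₁', g₂, hl'⟩, E', hE', rfl⟩ hF' hS' hc' hp hg hxp hxg
    h₁ h₂ h₃
  obtain ⟨D, rfl⟩ := hl'.exists_eq_cons_left
  obtain ⟨e, E', rfl⟩ := List.exists_cons_of_ne_nil hE'
  obtain rfl : e = g₁ := by simpa using hg
  obtain rfl : e = g₂ := by simpa using hl'.head_right
  simp only [List.length_append] at h₁ h₂ h₃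
  refine forces_of_apex_and_connector hk hko hn hb (hh.red_mono hB) hF' hp
    (List.isChain_append.1 hS').1 (hK.mono hB) (isChain_blue_mono hG hB) (hc'.of_count fun a => ?_)
    hxp hxg hl'.red_head (by omega) (by simp only [List.length_append]; omega)
  have := hZ a
  simp only [List.count_append, List.count_cons]
  omega

theorem forces_of_chain_and_connector (hk : 3 ≤ k) (hko : Odd k) (hn : 3 * k ≤ n)
    (hb : k ≤ (k - 2) * b) (hh : IsPathSeq (Red B) (hubSize k b + (k - 1)) h)
    (hF : F.IsChain (Blue B)) (hK : IsConnector B u v K)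
    (hc : NodupOutside (verts (hubSize k b + (k - 1)) h) (F ++ K)) (ht : ladderCost k n b ≤ t)
    (hlen : 3 * n + connectorsCost k n b + 3 ≤ t + F.length + K.length) :
    Forces (WinCC k n) t B := by
  have hcost := ladderCost_le_connectorsCost k n b
  refine .start_ladder hk hko hn hb (by omega) hh hF hK.chain hc ht (by omega) ?_
  intro B' p F' x t' hB hF' hx hc' ht' hlen'
  exact forces_of_ladder_and_connector hk hko hn hb (hh.red_mono hB) (E := [x]) (Z := []) (G := [])
    (.singleton hx) (by simp) hF' (by simp) (isChain_blue_mono hK.chain hB) (hK.mono hB) (by simp)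
    hc' (by simp) ht' (by simp only [List.length_nil, List.length_singleton]; omega)
    (by simp only [List.length_nil, List.length_singleton]; omega)

/- The left side of the ladder has a single rung vertex `q'`, so `S`, the connector and `A` form one
blue path. Its two ends are red to `x`, which makes it a ladder over the one-vertex path `x`. -/
theorem forces_of_linked_ladder_of_single_rung (hk : 3 ≤ k) (hko : Odd k) (hn : 3 * k ≤ n)
    (hb : k ≤ (k - 2) * b) (hh : IsPathSeq (Red B) (hubSize k b + (k - 1)) h)
    (hF : (A ++ q' :: C).IsChain (Blue B)) (hS : (e :: E ++ [q]).IsChain (Blue B))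
    (hK : IsConnector B q' q (q' :: (C ++ [y, q])))
    (hc : NodupOutside (verts (hubSize k b + (k - 1)) h)
      (x :: (A ++ q' :: C ++ (e :: E ++ [q] ++ [y]))))
    (hp : (A ++ q' :: C).head? = some p) (hxp : Red B x p) (hxe : Red B x e)
    (ht : ladderCost k n b ≤ t)
    (hlen : 3 * n + connectorsCost k n b + 8 ≤
      t + (A ++ q' :: C).length + 2 * (e :: E ++ [q]).length) :
    Forces (WinCC k n) t B := by
  have hKrev : ([q] ++ (y :: (C.reverse ++ [q']))).IsChain (Blue B) := by
    simpa using hK.reverse.chain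
  have hArev : ([q'] ++ A.reverse).IsChain (Blue B) := by
    have := isChain_blue_reverse hF
    rw [List.reverse_append, List.reverse_cons, List.append_assoc] at this
    exact (List.isChain_append.1 this).2.1
  have hSK : (e :: E ++ [q] ++ y :: C.reverse ++ [q']).IsChain (Blue B) := by
    simpa using hS.append_overlap hKrev (by simp)
  have hS' : (e :: E ++ ((q' :: (C ++ [y, q])).reverse ++ A.reverse)).IsChain (Blue B) := by
    simpa using hSK.append_overlap hArev (by simp)
  have hlast : (e :: E ++ ((q' :: (C ++ [y, q])).reverse ++ A.reverse)).getLast? = some p := by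
    rw [List.getLast?_append, ← List.reverse_append, List.getLast?_reverse, ← hp]
    cases A <;> simp
  simp only [List.length_append, List.length_cons, List.length_nil] at hlen
  refine forces_of_ladder_and_connector hk hko hn hb hh (F := [x]) (A := []) (X := [x]) (C := [])
    (Y := []) ⟨rfl, rfl, rfl, rfl, hlast, hxe.symm, hxp.symm, fun _ => rfl⟩ (by simp) (by simp) hS'
    (by simp) hK (List.isChain_append.1 (List.isChain_append.1 hS').2.1).2.1 hc.of_count
    (fun a => ?_) ht ?_ ?_
  · simp only [List.count_append, List.count_cons, List.count_nil, List.count_reverse]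
    omega
  all_goals
    simp only [List.length_append, List.length_cons, List.length_nil, List.length_reverse]
    omega

theorem forces_of_linked_ladder_of_apex (hk : 3 ≤ k) (hko : Odd k) (hn : 3 * k ≤ n)
    (hb : k ≤ (k - 2) * b) (hh : IsPathSeq (Red B) (hubSize k b + (k - 1)) h)
    (hl : IsLadder B F S A X C g' q' g q) (hF : F.IsChain (Blue B)) (hS : S.IsChain (Blue B))
    (hK : IsConnector B q' q (q' :: (C ++ [y, q])))
    (hc : NodupOutside (verts (hubSize k b + (k - 1)) h) (x :: (F ++ (S ++ [y]))))
    (hp : F.head? = some p) (hxp : Red B x p) (hxg : Red B x g) (ht : connectorsCost k n b + 5 ≤ t)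
    (hlen : 3 * n + connectorsCost k n b + 8 ≤ t + F.length + 2 * S.length) :
    Forces (WinCC k n) t B := by
  have hcost := ladderCost_le_connectorsCost k n b
  obtain ⟨S, rfl⟩ := List.getLast?_eq_some_iff.1 hl.last_right
  obtain ⟨X, rfl⟩ := List.getLast?_eq_some_iff.1 hl.last_left
  obtain rfl : F = A ++ X ++ q' :: C := by rw [hl.eq]; simp
  match S, X with
  | [], X =>
    obtain rfl : X = [] := by simpa using hl.left_eq_singleton rfl
    simp only [List.append_nil, List.nil_append] at *
    simp only [List.length_append, List.length_cons, List.length_nil] at hlen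
    exact forces_of_chain_and_connector hk hko hn hb hh (List.isChain_append.1 hF).1 hK hc.of_count
      (by omega) (by simp only [List.length_append, List.length_cons, List.length_nil]; omega)
  | e :: E, [] =>
    obtain rfl : e = g := by simpa using hl.head_right
    simp only [List.append_nil] at *
    exact forces_of_linked_ladder_of_single_rung hk hko hn hb hh hF hS hK hc hp hxp hxg (by omega)
      hlen
  | e :: E, a :: X =>
    obtain rfl : e = g := by simpa using hl.head_right
    obtain rfl : a = g' := by simpa using hl.head_left
    simp only [List.length_append, List.length_cons, List.length_nil] at hlen
    refine forces_of_apex_and_connector hk hko hn hb hh (A := A) (D := X) (E := E) (G := [])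
      (List.isChain_append.1 hF).1 (p := p) ?_ (List.isChain_append.1 hS).1 hK (by simp)
      hc.of_count hxp hxg hl.red_head ht ?_
    · rw [← hp]
      cases A <;> simp
    · simp only [List.length_append, List.length_cons, List.length_nil]
      omega

theorem forces_of_linked_ladder (hk : 3 ≤ k) (hko : Odd k) (hn : 3 * k ≤ n)
    (hb : k ≤ (k - 2) * b) (hh : IsPathSeq (Red B) (hubSize k b + (k - 1)) h)
    (hl : IsLadder B F S A X C g' q' g q) (hF : F.IsChain (Blue B)) (hS : S.IsChain (Blue B))
    (hK : IsConnector B q' q (q' :: (C ++ [y, q])))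
    (hc : NodupOutside (verts (hubSize k b + (k - 1)) h) (F ++ (S ++ [y])))
    (ht : ladderCost k n b ≤ t)
    (hlen : 3 * n + connectorsCost k n b + 10 ≤ t + F.length + 2 * S.length) :
    Forces (WinCC k n) t B := by
  have hcost := ladderCost_le_connectorsCost k n b
  refine .extend_ladder hk hko hn hb (by omega) (LadderInvariant.fixed_base C q' q) hh
    ⟨A, X, g', g, hl⟩ hF hS (by simp) hc ht (by omega) ?_
  rintro B' F' S' x p g₁ t' hB ⟨A', X', g₁', g₂, hl'⟩ hF' hS' hc' hp hg hxp hxg h₁ h₂ h₃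
  obtain rfl : g₁ = g₂ := Option.some_injective _ (hg.symm.trans hl'.head_right)
  exact forces_of_linked_ladder_of_apex hk hko hn hb (hh.red_mono hB) hl' hF' hS' (hK.mono hB) hc'
    hp hxp hxg (by omega) (by omega)

theorem forces_of_ladder_of_apex_neighbor (hk : 3 ≤ k) (hko : Odd k) (hn : 3 * k ≤ n)
    (hb : k ≤ (k - 2) * b) (hh : IsPathSeq (Red B) (hubSize k b + (k - 1)) h)
    (hl : S = [] ∨ ∃ A X g' g, IsLadder B F S A X C g' q' g q) (hF : F.IsChain (Blue B))
    (hS : S.IsChain (Blue B))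
    (hc : NodupOutside (verts (hubSize k b + (k - 1)) h) (y :: x :: (F ++ (e :: S))))
    (hxy : Blue B x y) (hey : Blue B e y) (hxe : Red B x e) (ht : ladderCost k n b ≤ t)
    (hlen : 3 * n + connectorsCost k n b + 10 ≤ t + F.length + 2 * (e :: S).length) :
    Forces (WinCC k n) t B := by
  have hK := isConnector_three hc.of_count.nodup hxy hey hxe
  simp only [List.length_cons] at hlen
  rcases hl with rfl | ⟨A, X, g', g, hl⟩
  · refine forces_of_chain_and_connector hk hko hn hb hh hF hK hc.of_count ht ?_
    simp only [List.length_cons, List.length_nil] at *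
    omega
  · refine forces_of_ladder_and_connector hk hko hn hb hh (E := S) (Z := []) (Y := [x, y, e])
      (G := []) (by simpa using hl) ?_ hF (by simpa using hS) hK.chain hK (by simp) hc.of_count
      (by simp) ht ?_ ?_
    · rintro rfl
      simpa using hl.head_right
    all_goals
      simp only [List.length_cons, List.length_nil]
      omega

theorem forces_of_ladder_of_tips_neighbor (hk : 3 ≤ k) (hko : Odd k) (hn : 3 * k ≤ n)
    (hb : k ≤ (k - 2) * b) (hh : IsPathSeq (Red B) (hubSize k b + (k - 1)) h)
    (hl : IsLadder B F S A X C g' q' g q) (hF : F.IsChain (Blue B)) (hS : S.IsChain (Blue B))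
    (hc : NodupOutside (verts (hubSize k b + (k - 1)) h) (y :: (F ++ S)))
    (hp : F.head? = some p) (hpy : Blue B p y) (hgy : Blue B g y) (ht : ladderCost k n b ≤ t)
    (hlen : 3 * n + connectorsCost k n b + 10 ≤ t + F.length + 2 * S.length) :
    Forces (WinCC k n) t B := by
  refine forces_of_linked_ladder hk hko hn hb hh hl.reverse (isChain_blue_reverse hF)
    (isChain_blue_reverse hS) ?_ (y := y) hc.of_count ht (by simpa only [List.length_reverse])
  obtain ⟨D, rfl⟩ := hl.exists_eq_cons_left
  obtain ⟨E, rfl⟩ := List.head?_eq_some_iff.1 hl.head_right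
  exact isConnector_turn hF hp hpy hgy hl.red_head hc.of_count.nodup

theorem forces_of_chain (hk : 3 ≤ k) (hko : Odd k) (hn : 3 * k ≤ n) (hb : k ≤ (k - 2) * b)
    (hh : IsPathSeq (Red B) (hubSize k b + (k - 1) + (k - 1)) h) (hF : F.IsChain (Blue B))
    (hc : NodupOutside (verts (hubSize k b + (k - 1) + (k - 1)) h) F) (ht : ladderCost k n b ≤ t)
    (hlen : 3 * n + connectorsCost k n b + 17 ≤ t + F.length) :
    Forces (WinCC k n) t B := by
  have hcost := ladderCost_le_connectorsCost k n b
  refine .start_ladder hk hko hn hb (by omega) hh hF (Y := []) (by simp) (by simpa using hc) ht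
    (by rw [List.length_nil]; omega) fun B₀ p₀ F₀ x₀ t₀ hB₀ hF₀ hx₀ hc₀ ht₀ h₀ => ?_
  refine .extend_ladder hk hko hn hb (by omega) (LadderInvariant.fixed_base F₀ p₀ x₀).and_tail
    (hh.red_mono hB₀) ⟨⟨_, _, _, _, .singleton hx₀⟩, Or.inl rfl⟩ hF₀ (by simp) (by simp) hc₀ ht₀
    (by simp only [List.length_nil, List.length_singleton]; omega) ?_
  rintro B' F' S x p g t' hB ⟨⟨A, X, g', g₁, hl⟩, htail⟩ hF' hS' hc' hp hg hxp hxg h₁ h₂ h₃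
  obtain rfl : g = g₁ := Option.some_injective _ (hg.symm.trans hl.head_right)
  obtain ⟨S, rfl⟩ := List.head?_eq_some_iff.1 hg
  simp only [List.length_nil, List.length_singleton] at h₁ h₃
  obtain ⟨t', rfl⟩ : ∃ t'', t' = t'' + 5 := ⟨t' - 5, by omega⟩
  have hh' := hh.red_mono (hB₀.trans hB)
  refine .common_neighbor_from_hub hk hh' hc'
    (List.mem_append_left _ (List.mem_of_head? hp)) (by simp) hxp hxg
    (fun B₁ hB₁ y hy hb₁ hb₂ => ?_) fun B₁ hB₁ y hy hb₁ hb₂ => ?_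
  all_goals
    have hh₁ := (hh'.take (m' := hubSize k b + (k - 1)) (by omega)).red_mono hB₁
    have hF₁ := isChain_blue_mono hF' hB₁
    have hS₁ := isChain_blue_mono hS' hB₁
  · exact forces_of_ladder_of_apex_neighbor (S := S) hk hko hn hb hh₁
      (htail.imp_right fun ⟨A, X, g', g, hl⟩ => ⟨A, X, g', g, hl.mono hB₁⟩) hF₁
      (List.isChain_cons.1 hS₁).2 hy.of_count hb₁ hb₂ (hxg.mono hB₁) (by omega) (by omega)
  · exact forces_of_ladder_of_tips_neighbor hk hko hn hb hh₁ (hl.mono hB₁) hF₁ hS₁ hy.of_count hp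
      hb₁ hb₂ (by omega) (by omega)

end LadderEnd

/-! ### Growing the red and the blue path -/

section Growth

variable {k n t j b H N u₁ v₁ u₂ v₂ : ℕ} {V : Set ℕ} {B : Board}
  {l l' Z M L A C P P₁ P₂ K K₁ K₂ : List ℕ}

theorem nodup_of_count_le (hl : l.Nodup) (hle : ∀ a, l'.count a ≤ l.count a := by
    intro a; simp only [List.count_append, List.count_cons, List.count_nil]; omega) : l'.Nodup :=
  (NodupOutside.of_count (V := ∅) ⟨hl, by simp⟩ hle).nodup

theorem NodupOutside.of_append (hl : (l ++ l').Nodup) (hV : ∀ x ∈ V, x ∈ l) :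
    NodupOutside V l' where
  nodup := (List.nodup_append'.1 hl).2.1
  notMem x hx hxV := (List.nodup_append'.1 hl).2.2 (hV x hxV) hx

/-- Builder's position while growing two paths from their heads: a red path `Z` and a blue path `M`
which are disjoint from each other and from the list `L` of all stored vertices. -/
structure IsRedBluePair (B : Board) (Z M L : List ℕ) : Prop where
  red : Z.IsChain (Red B)
  blue : M.IsChain (Blue B)
  nodup : (Z ++ (M ++ L)).Nodup

namespace IsRedBluePair

theorem isBluePath (hs : IsRedBluePair B Z M L) : IsBluePath B M :=
  ⟨(List.nodup_append'.1 (List.nodup_append'.1 hs.nodup).2.1).1, hs.blue⟩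

theorem isPathSeq (hs : IsRedBluePair B Z M L) {m : ℕ} (hm : m ≤ Z.length) :
    IsPathSeq (Red B) m fun i => Z.getD i 0 :=
  (isPathSeq_getD (List.nodup_append'.1 hs.nodup).1 hs.red).take hm

theorem nodupOutside (hs : IsRedBluePair B Z M L) {m : ℕ} (hm : m ≤ Z.length) :
    NodupOutside (verts m fun i => Z.getD i 0) (M ++ L) :=
  .of_append hs.nodup <| by rintro x ⟨i, hi, rfl⟩; exact getD_mem (by omega)

theorem store (hs : IsRedBluePair B Z (K ++ M) L) : IsRedBluePair B Z M (K ++ L) :=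
  ⟨hs.red, (List.isChain_append.1 hs.blue).2.1, nodup_of_count_le hs.nodup⟩

end IsRedBluePair

/- The head of `M` is joined to a fresh vertex `x`. If Painter plays red then the head of `Z` is
joined to `x` and to the head of `M`, which are red neighbours of each other. -/
theorem Forces.grow (hs : IsRedBluePair B Z M L)
    (hblue : ∀ B' M', B ≤ B' → IsRedBluePair B' Z M' L → M'.length = M.length + 1 →
      Forces (WinCC k n) (t + 2) B')
    (hred : ∀ B' Z' M', B ≤ B' → IsRedBluePair B' Z' M' L → Z'.length = Z.length + 2 →
      M'.length + 1 = M.length → Forces (WinCC k n) t B')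
    (hthree : ∀ B' Z' M' K u v, B ≤ B' → IsRedBluePair B' Z' (K ++ M') L →
      IsConnector B' u v K → K.length = 3 → Z'.length + 1 = Z.length → M'.length + 1 = M.length →
      Forces (WinCC k n) t B') : Forces (WinCC k n) (t + 3) B := by
  obtain ⟨hZ, hM, hnd⟩ := hs
  obtain ⟨x, hx⟩ := (Z ++ (M ++ L)).finite_toSet.exists_notMem
  replace hnd : (x :: (Z ++ (M ++ L))).Nodup := List.nodup_cons.2 ⟨hx, hnd⟩
  rcases M with - | ⟨m, M⟩
  · exact (hblue B [x] le_rfl ⟨hZ, by simp, nodup_of_count_le hnd⟩ rfl).mono (by omega)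
  have hxm : x ≠ m := by rintro rfl; simp at hx
  refine .ask x m hxm (fun B₁ hB₁ hr => ?_) fun B₁ hB₁ hb =>
    hblue B₁ (x :: m :: M) hB₁ ⟨hZ.imp fun _ _ h => h.mono hB₁,
      isChain_cons_of_head? (isChain_blue_mono hM hB₁) rfl hb, nodup_of_count_le hnd⟩ rfl
  rcases Z with - | ⟨z, Z⟩
  · exact (hred B₁ [x, m] M hB₁ ⟨by simpa using hr, (isChain_blue_mono hM hB₁).tail,
      nodup_of_count_le hnd⟩ rfl rfl).mono (by omega)
  have hzx : z ≠ x := by rintro rfl; simp at hx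
  have hzm : z ≠ m := by rintro rfl; simp at hnd
  refine .ask z x hzx (fun B₂ hB₂ hrx => ?_) fun B₂ hB₂ hbx =>
    .ask z m hzm (fun B₃ hB₃ hrm => ?_) fun B₃ hB₃ hbm => ?_
  · have hB := hB₁.trans hB₂
    refine (hred B₂ (m :: x :: z :: Z) M hB ⟨?_, (isChain_blue_mono hM hB).tail,
      nodup_of_count_le hnd⟩ rfl rfl).mono (by omega)
    exact .cons_cons (hr.mono hB₂).symm (.cons_cons hrx.symm (hZ.imp fun _ _ h => h.mono hB))
  · have hB := hB₁.trans (hB₂.trans hB₃)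
    refine hred B₃ (x :: m :: z :: Z) M hB ⟨?_, (isChain_blue_mono hM hB).tail,
      nodup_of_count_le hnd⟩ rfl rfl
    exact .cons_cons (hr.mono (hB₂.trans hB₃))
      (.cons_cons hrm.symm (hZ.imp fun _ _ h => h.mono hB))
  · have hB := hB₁.trans (hB₂.trans hB₃)
    refine hthree B₃ Z M [x, z, m] x m hB ⟨(hZ.imp fun _ _ h => h.mono hB).tail, ?_,
      nodup_of_count_le hnd⟩ (isConnector_three (nodup_of_count_le hnd) (hbx.mono hB₃).symm
        hbm.symm (hr.mono (hB₂.trans hB₃))) rfl rfl rfl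
    exact .cons_cons (hbx.mono hB₃).symm (.cons_cons hbm (isChain_blue_mono hM hB))

theorem zigzag_getD_mem (hA : A.length = j) (hP : P.length + (j + 1) = n) (hC : C.length = j + 1)
    {i : ℕ} (hi : i < 2 * j + 1) :
    zigzag n (fun i => (A ++ (P ++ (C ++ L))).getD i 0) i ∈ A ++ C := by
  unfold zigzag
  dsimp only
  split_ifs with h
  · rw [List.getD_append_right _ _ _ _ (by omega), List.getD_append_right _ _ _ _ (by omega),
      List.getD_append _ _ _ _ (by omega)]
    exact List.mem_append_right _ (getD_mem (by omega))
  · rw [List.getD_append _ _ _ _ (by omega)]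
    exact List.mem_append_left _ (getD_mem (by omega))

theorem Forces.red_path_of_blue_path (hk : 3 ≤ k) (hko : Odd k) (hn : 3 * k ≤ n)
    (hA : A.length = j) (hP : P.length + (j + 1) = n) (hC : C.length = j + 1) (hPne : P ≠ [])
    (hM : IsBluePath B (A ++ (P ++ (C ++ L)))) (ht : 2 * k + 3 ≤ t)
    (h : ∀ B' s, B ≤ B' → IsPathSeq (Red B') (2 * j + 1) s →
      (∀ x ∈ verts (2 * j + 1) s, x ∈ A ++ C) → Forces (WinCC k n) t B') :
    Forces (WinCC k n) (2 * j + t) B := by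
  have hpos := List.length_pos_iff.2 hPne
  refine forces_of_red_zigzag hk hko hn (by omega) ht (hM.isPathSeq.take (m' := n + j) ?_)
    fun B' hB hs => h B' _ hB hs ?_
  · simp only [List.length_append]; omega
  · rintro x ⟨i, hi, rfl⟩
    exact zigzag_getD_mem hA hP hC hi

theorem exists_eq_append_of_length_eq {a p c : ℕ} (hl : a + p + c ≤ l.length) :
    ∃ A P C L : List ℕ, l = A ++ (P ++ (C ++ L)) ∧ A.length = a ∧ P.length = p ∧ C.length = c := by
  refine ⟨l.take a, (l.drop a).take p, ((l.drop a).drop p).take c, ((l.drop a).drop p).drop c, ?_⟩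
  simp only [List.take_append_drop, List.length_take, List.length_drop, true_and]
  omega

/- The red path is a zigzag between two segments of the blue path. -/
theorem Forces.hub_of_long_blue_path (hk : 3 ≤ k) (hko : Odd k) (hn : 3 * k ≤ n)
    (hM : IsBluePath B M) (hl : n + (3 * k + 1) ≤ M.length) (ht : 2 * k + 3 ≤ t)
    (h : ∀ B' s, ∀ P₁ P₂ D : List ℕ, B ≤ B' → IsPathSeq (Red B') (3 * k + 1) s →
      P₁.IsChain (Blue B') → P₂.IsChain (Blue B') → (D ++ (P₁ ++ P₂)).Perm M →
      (∀ x ∈ verts (3 * k + 1) s, x ∈ D) → D.length = 3 * k + 2 → Forces (WinCC k n) t B') :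
    Forces (WinCC k n) (3 * k + 1 + t) B := by
  obtain ⟨j, hj⟩ : ∃ j, 3 * k + 1 = 2 * j := by
    obtain ⟨i, rfl⟩ := hko
    exact ⟨3 * i + 2, by ring⟩
  obtain ⟨A, P₁, C, P₂, rfl, hA, hP₁, hC⟩ :=
    exists_eq_append_of_length_eq (a := j) (p := n - (j + 1)) (c := j + 1) (l := M) (by omega)
  rw [hj]
  refine .red_path_of_blue_path hk hko hn hA (by omega) hC
    (List.ne_nil_of_length_pos (by omega)) hM ht fun B' s hB hs hAC => ?_
  have hchain := isChain_blue_mono hM.chain hB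
  simp only [List.isChain_append] at hchain
  refine h B' s P₁ P₂ (A ++ C) hB (hs.take (by omega)) hchain.2.1.1 hchain.2.1.2.1.2.1 ?_
    (fun x hx => hAC x (verts_mono s (by omega) hx)) (by rw [List.length_append]; omega)
  rw [List.append_assoc]
  exact .append_left A (by simpa only [List.append_assoc] using
    (List.perm_append_comm (l₁ := C) (l₂ := P₁)).append_right P₂)

theorem forces_of_isBluePath_of_le_length (hk : 3 ≤ k) (hko : Odd k) (hn : 3 * k ≤ n)
    (hM : IsBluePath B M) (hl : 2 * n + (3 * k + 1) ≤ M.length) :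
    Forces (WinCC k n) (5 * k + 19 + closingCost k n) B := by
  refine Forces.mono (t := 3 * k + 1 + (closingCost k n + 15)) ?_ (by omega)
  refine .hub_of_long_blue_path hk hko hn hM (by omega) (by rw [closingCost]; omega)
    fun B' s P₁ P₂ D _ hs hP₁ hP₂ hperm hD hlen => ?_
  have hc : NodupOutside (verts (3 * k + 1) s) (P₁ ++ P₂) :=
    .of_append (hperm.nodup_iff.2 hM.nodup) hD
  have hl' := hperm.length_eq
  simp only [List.length_append] at hl'
  refine forces_of_hub_of_long_paths hk hko hn (b := 0) (P := [P₁, P₂]) hs (by simp [hP₁, hP₂])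
    (by simpa using hc.nodup) (by simpa [hubSize] using hc.notMem) (by simp) ?_
  simp only [List.flatten_cons, List.flatten_nil, List.append_nil, List.length_append]
  omega

theorem forces_of_long_blue_path_and_connectors (hk : 3 ≤ k) (hko : Odd k) (hn : 3 * k ≤ n)
    (hK₁ : IsConnector B u₁ v₁ K₁) (hK₂ : IsConnector B u₂ v₂ K₂) (hM : M.IsChain (Blue B))
    (hnd : (M ++ (K₁ ++ K₂)).Nodup) (hl : n + (3 * k + 1) ≤ M.length) :
    Forces (WinCC k n) (5 * k + 42 + closingCost k n) B := by
  refine Forces.mono (t := 3 * k + 1 + (closingCost k n + 38)) ?_ (by omega)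
  refine .hub_of_long_blue_path hk hko hn ⟨(List.nodup_append'.1 hnd).1, hM⟩ hl
    (by rw [closingCost]; omega) fun B' s P₁ P₂ D hB hs hP₁ hP₂ hperm hD hlen => ?_
  have hc : NodupOutside (verts (3 * k + 1) s) (P₁ ++ P₂ ++ (K₁ ++ K₂)) :=
    .of_append (by simpa only [List.append_assoc] using
      ((hperm.append_right (K₁ ++ K₂)).nodup_iff.2 hnd)) hD
  have hl' := hperm.length_eq
  simp only [List.length_append] at hl'
  have hcP : NodupOutside (verts (3 * k + 1) s) (P₁ ++ P₂) := hc.of_count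
  obtain ⟨P, hP, hPl, hPf⟩ := exists_isBlueForest (B := B') (E := verts (3 * k + 1) s)
    (P := [P₁, P₂]) (by simp [hP₁, hP₂]) (by simpa using hcP.nodup) (by simpa using hcP.notMem)
  replace hPf : P.flatten = P₁ ++ P₂ := by simpa using hPf
  obtain ⟨-, hndK, hPK⟩ := List.nodup_append'.1 hc.nodup
  refine forces_of_forest_and_connectors hk hko hn hs hP (by simpa using hPl) ?_ (hK₁.mono hB)
    (hK₂.mono hB) (List.nodup_append'.1 hndK).2.2 ?_ ?_ ?_ ?_ ?_
  · rw [hPf, List.length_append]; omega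
  · exact hPf ▸ hcP.notMem
  · exact hPf ▸ (List.disjoint_append_right.1 hPK).1
  · exact hPf ▸ (List.disjoint_append_right.1 hPK).2
  · exact fun x hx => hc.notMem x (by simp [hx])
  · exact fun x hx => hc.notMem x (by simp [hx])

theorem forces_of_long_pair_and_connectors (hk : 3 ≤ k) (hko : Odd k) (hn : 3 * k ≤ n)
    (hK₁ : IsConnector B u₁ v₁ K₁) (hK₂ : IsConnector B u₂ v₂ K₂)
    (hs : IsRedBluePair B Z M (K₁ ++ K₂))
    (hl : 5 * k - 3 ≤ Z.length ∨ n + (3 * k + 1) ≤ M.length)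
    (ht : 2 * (n - 1 - M.length) + (5 * k + 42 + closingCost k n) ≤ t) :
    Forces (WinCC k n) t B := by
  rcases hl with hl | hl
  · have hZ : hubSize k 1 ≤ Z.length := by rw [hubSize]; omega
    have hc := hs.nodupOutside hZ
    refine (forces_of_hub_of_connectors hk hko hn (b := 1) (P := [M]) (hs.isPathSeq hZ)
      (by simpa using hs.blue) hK₁ hK₂ (by simpa using hc.nodup) (by simpa using hc.notMem) ?_
      (n - 1 - M.length) ?_).mono (by omega)
    · simp only [List.length_cons, List.length_nil]; omega
    · simp only [List.flatten_cons, List.flatten_nil, List.append_nil]; omega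
  · exact (forces_of_long_blue_path_and_connectors hk hko hn hK₁ hK₂ hs.blue
      (List.nodup_append'.1 hs.nodup).2.1 hl).mono (by omega)

/- With two connectors in store, a third one is absorbed into `M`, so that three rounds always
lengthen `Z` and `M` by at least one vertex in total. -/
theorem forces_of_pair_and_connectors (hk : 3 ≤ k) (hko : Odd k) (hn : 3 * k ≤ n)
    (hK₁ : IsConnector B u₁ v₁ K₁) (hK₂ : IsConnector B u₂ v₂ K₂)
    (hs : IsRedBluePair B Z M (K₁ ++ K₂)) (hl : M.length + Z.length + 3 ≤ n + 8 * k)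
    (hlZ : Z.length + 2 ≤ 5 * k)
    (ht : 3 * n + 48 * k + closingCost k n ≤ t + 3 * (M.length + Z.length) + 21) :
    Forces (WinCC k n) t B := by
  induction hd : n + 8 * k - (M.length + Z.length) using Nat.strong_induction_on
    generalizing B Z M t with
  | _ d ih =>
    by_cases h : 5 * k - 3 ≤ Z.length ∨ n + (3 * k + 1) ≤ M.length
    · exact forces_of_long_pair_and_connectors hk hko hn hK₁ hK₂ hs h (by omega)
    obtain ⟨t, rfl⟩ : ∃ t', t = t' + 3 := ⟨t - 3, by omega⟩
    refine .grow hs (fun B' M' hB hs' hM' => ?_) (fun B' Z' M' hB hs' hZ' hM' => ?_)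
      fun B' Z' M' K u v hB hs' _ hK₃ hZ' hM' => ?_
    · exact ih _ (by omega) (hK₁.mono hB) (hK₂.mono hB) hs' (by omega) hlZ (by omega) rfl
    · exact ih _ (by omega) (hK₁.mono hB) (hK₂.mono hB) hs' (by omega) (by omega) (by omega) rfl
    · have hlen : (K ++ M').length = M'.length + 3 := by rw [List.length_append]; omega
      exact ih _ (by omega) (hK₁.mono hB) (hK₂.mono hB) hs' (by omega) (by omega) (by omega) rfl

/- Until a connector appears, each round raises `M.length + 2 * Z.length` by one on average. -/
theorem Forces.grow_until (hk : 3 ≤ k) (hko : Odd k) (hn : 3 * k ≤ n)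
    (hs : IsRedBluePair B Z M L) (hlM : M.length ≤ 2 * n + (3 * k + 1)) (hlZ : Z.length ≤ H + 1)
    (ht : N ≤ t + M.length + 2 * Z.length)
    (hN : 2 * n + 8 * k + 2 * H + 25 + closingCost k n ≤ N)
    (hfar : ∀ B' Z' M' t', B ≤ B' → IsRedBluePair B' Z' M' L → M'.length ≤ 2 * n + (3 * k + 1) →
      H ≤ Z'.length → Z'.length ≤ H + 1 → N ≤ t' + M'.length + 2 * Z'.length →
      Forces (WinCC k n) t' B')
    (hthree : ∀ B' Z' M' K u v t', B ≤ B' → IsRedBluePair B' Z' M' (K ++ L) →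
      IsConnector B' u v K → K.length = 3 → M'.length ≤ 2 * n + (3 * k + 1) →
      Z'.length ≤ H + 1 → N ≤ t' + M'.length + 2 * Z'.length + 6 → Forces (WinCC k n) t' B') :
    Forces (WinCC k n) t B := by
  induction hd : 2 * n + (3 * k + 1) + 2 * H - (M.length + 2 * Z.length)
    using Nat.strong_induction_on generalizing B Z M t with
  | _ d ih =>
    rcases Nat.lt_or_ge Z.length H with hH | hH
    swap
    · exact hfar B Z M t le_rfl hs hlM hH hlZ ht
    rcases Nat.lt_or_ge M.length (2 * n + (3 * k + 1)) with hM | hM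
    swap
    · exact (forces_of_isBluePath_of_le_length hk hko hn hs.isBluePath hM).mono (by omega)
    have ih' {B' : Board} {Z' M' : List ℕ} {t' : ℕ} (hB : B ≤ B') :=
      fun hd hs hlM hlZ ht => ih (B := B') (Z := Z') (M := M') (t := t') _ hd hs hlM hlZ ht
        (fun B₁ Z₁ M₁ t₁ hB₁ => hfar B₁ Z₁ M₁ t₁ (hB.trans hB₁))
        (fun B₁ Z₁ M₁ K u v t₁ hB₁ => hthree B₁ Z₁ M₁ K u v t₁ (hB.trans hB₁)) rfl
    obtain ⟨t, rfl⟩ : ∃ t', t = t' + 3 := ⟨t - 3, by omega⟩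
    refine .grow hs (fun B' M' hB hs' hM' => ?_) (fun B' Z' M' hB hs' hZ' hM' => ?_)
      fun B' Z' M' K u v hB hs' hK hK₃ hZ' hM' => ?_
    · exact ih' hB (by omega) hs' (by omega) hlZ (by omega)
    · exact ih' hB (by omega) hs' (by omega) (by omega) (by omega)
    · exact hthree B' Z' M' K u v t hB hs'.store hK hK₃ (by omega) (by omega) (by omega)

/- The hub is assembled with `b = 3` in `hubSize k b`, since `k ≤ 3 * (k - 2)`. -/
theorem forces_winCC (hk : 3 ≤ k) (hko : Odd k) (hn : 3 * k ≤ n)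
    (ht : 3 * n + 48 * k + closingCost k n ≤ t + 9) : Forces (WinCC k n) t B := by
  have hb : k ≤ (k - 2) * 3 := by omega
  have hcost : connectorsCost k n 3 = closingCost k n + 38 + 5 * ((k - 2) * 3) := rfl
  have hcost' := ladderCost_le_connectorsCost k n 3
  obtain ⟨H, hH⟩ : ∃ H, H = hubSize k 3 + (k - 1) + (k - 1) := ⟨_, rfl⟩
  have hHk : 5 * ((k - 2) * 3) + 2 * H + 66 ≤ 48 * k := by rw [hH, hubSize]; omega
  refine .grow_until hk hko hn (H := H) (N := 3 * n + 48 * k + closingCost k n - 9) (Z := [])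
    (M := []) (L := []) ⟨by simp, by simp, by simp⟩ (by simp) (by simp) (by simp; omega) (by omega)
    (fun B₁ Z M t _ hs hM hZ _ ht => ?_) fun B₁ Z M K u v t _ hs hK _ hM hZ ht => ?_
  · exact forces_of_chain hk hko hn hb (hs.isPathSeq (hH ▸ hZ)) hs.blue
      (by simpa using hs.nodupOutside (hH ▸ hZ)) (by omega) (by omega)
  rw [List.append_nil] at hs
  refine .grow_until hk hko hn (H := H) (N := 3 * n + 48 * k + closingCost k n - 15) hs hM hZ
    (by omega) (by omega) (fun B₂ Z M t hB hs hM hZ _ ht => ?_)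
    fun B₂ Z M K₂ u₂ v₂ t hB hs hK₂ _ hM hZ ht => ?_
  · have hlen : hubSize k 3 + (k - 1) ≤ Z.length := by omega
    exact forces_of_chain_and_connector hk hko hn hb (hs.isPathSeq hlen) hs.blue (hK.mono hB)
      (hs.nodupOutside hlen) (by omega) (by omega)
  · by_cases h : 5 * k - 3 ≤ Z.length ∨ n + (3 * k + 1) ≤ M.length
    · exact forces_of_long_pair_and_connectors hk hko hn hK₂ (hK.mono hB) hs h (by omega)
    · exact forces_of_pair_and_connectors hk hko hn hK₂ (hK.mono hB) hs (by omega) (by omega)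
        (by omega)

end Growth

theorem online_ramsey_odd_cycle_general (k n : ℕ) (hk : 3 ≤ k) (hko : Odd k) (hn : 3 * k ≤ n) :
    ∃ t : ℕ, (t : ℝ) ≤ 3 * n + Real.logb 2 n + 50 * k ∧
      BuilderWinsIn emptyBoard (WinCC k n) t := by
  refine ⟨3 * n + Nat.log 2 n + 50 * k, ?_, builderWinsIn_of_forces ?_ ?_⟩
  · have := Real.natLog_le_logb n 2
    push_cast at this ⊢
    linarith
  · simp [Board.colored, emptyBoard]
  · exact forces_winCC hk hko hn (by rw [closingCost]; omega)

/-- For every odd `k ≥ 3` and `n ≥ 8k`, `r̃(C_k, C_n) ≤ 3n + log₂ n + 50k`. -/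
theorem online_ramsey_odd_cycle (k n : ℕ) (hk : 3 ≤ k) (hko : Odd k)
    (hn : 8 * k ≤ n) :
    ∃ t : ℕ, (t : ℝ) ≤ 3 * n + Real.logb 2 n + 50 * k ∧
      BuilderWinsIn emptyBoard (WinCC k n) t := by
  exact online_ramsey_odd_cycle_general k n hk hko (by omega)
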